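/- arXiv:1111.4152 — 2 statements merged into one kernel-verified Lean document; each statement's English description precedes it below -/
import Mathlib

section
/- Let K be an algebraically closed field of characteristic 0 or at least 11, and let f ∈ K[X,Z] be a squarefree binary octic with Shioda invariants J₂,…,J₁₀. Then the conditions 30·J₃(f)² = J₂(f)³ and J₄(f) = J₅(f) = J₆(f) = J₇(f) = J₈(f) = J₉(f) = J₁₀(f) = 0 hold if and only if f is GL₂(K)-equivalent to X⁸ + 14·X⁴Z⁴ + Z⁸; equivalently, the genus-3 hyperelliptic curve y² = f(x,1) has automorphism group C₂ × S₄ if and only if these relations hold, and such a curve is K-isomorphic to y² = x⁸ + 14x⁴ + 1. -/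
open MvPolynomial

/-- Iterated partial derivative in the variable `x` (the variable `0`). -/
noncomputable def dX {k : Type*} [CommSemiring k] (n : ℕ) (p : MvPolynomial (Fin 2) k) :
    MvPolynomial (Fin 2) k :=
  (fun q => pderiv (0 : Fin 2) q)^[n] p

/-- Iterated partial derivative in the variable `z` (the variable `1`). -/
noncomputable def dZ {k : Type*} [CommSemiring k] (n : ℕ) (p : MvPolynomial (Fin 2) k) :
    MvPolynomial (Fin 2) k :=
  (fun q => pderiv (1 : Fin 2) q)^[n] p

/-- The `h`-th transvectant of two binary forms of degrees `r₁` and `r₂`. -/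
noncomputable def transvectant {k : Type*} [Field k] (r₁ r₂ h : ℕ)
    (f g : MvPolynomial (Fin 2) k) : MvPolynomial (Fin 2) k :=
  C ((((r₁ - h).factorial * (r₂ - h).factorial : ℕ) : k) /
      (((r₁.factorial * r₂.factorial : ℕ)) : k)) *
    ∑ j ∈ Finset.range (h + 1),
      C ((-1 : k) ^ j * (h.choose j : k)) * (dX (h - j) (dZ j f) * dX j (dZ (h - j) g))

section Shioda

variable {k : Type*} [Field k]

/-- The covariant `𝔤 = (f,f)₄` of a binary octic. -/
noncomputable def covG (f : MvPolynomial (Fin 2) k) := transvectant 8 8 4 f f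

/-- The covariant `𝔨 = (f,f)₆` of a binary octic. -/
noncomputable def covK (f : MvPolynomial (Fin 2) k) := transvectant 8 8 6 f f

/-- The covariant `𝔥 = (𝔨,𝔨)₂` of a binary octic. -/
noncomputable def covH (f : MvPolynomial (Fin 2) k) := transvectant 4 4 2 (covK f) (covK f)

/-- The covariant `𝔪 = (f,𝔨)₄` of a binary octic. -/
noncomputable def covM (f : MvPolynomial (Fin 2) k) := transvectant 8 4 4 f (covK f)

/-- The covariant `𝔫 = (f,𝔥)₄` of a binary octic. -/
noncomputable def covN (f : MvPolynomial (Fin 2) k) := transvectant 8 4 4 f (covH f)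

/-- The covariant `𝔭 = (𝔤,𝔨)₄` of a binary octic. -/
noncomputable def covP (f : MvPolynomial (Fin 2) k) := transvectant 8 4 4 (covG f) (covK f)

/-- The covariant `𝔮 = (𝔤,𝔥)₄` of a binary octic. -/
noncomputable def covQ (f : MvPolynomial (Fin 2) k) := transvectant 8 4 4 (covG f) (covH f)

/-- The Shioda invariant `J₂ = (f,f)₈`. -/
noncomputable def shJ2 (f : MvPolynomial (Fin 2) k) : k :=
  constantCoeff (transvectant 8 8 8 f f)

/-- The Shioda invariant `J₃ = (f,𝔤)₈`. -/
noncomputable def shJ3 (f : MvPolynomial (Fin 2) k) : k :=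
  constantCoeff (transvectant 8 8 8 f (covG f))

/-- The Shioda invariant `J₄ = (𝔨,𝔨)₄`. -/
noncomputable def shJ4 (f : MvPolynomial (Fin 2) k) : k :=
  constantCoeff (transvectant 4 4 4 (covK f) (covK f))

/-- The Shioda invariant `J₅ = (𝔪,𝔨)₄`. -/
noncomputable def shJ5 (f : MvPolynomial (Fin 2) k) : k :=
  constantCoeff (transvectant 4 4 4 (covM f) (covK f))

/-- The Shioda invariant `J₆ = (𝔨,𝔥)₄`. -/
noncomputable def shJ6 (f : MvPolynomial (Fin 2) k) : k :=
  constantCoeff (transvectant 4 4 4 (covK f) (covH f))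

/-- The Shioda invariant `J₇ = (𝔪,𝔥)₄`. -/
noncomputable def shJ7 (f : MvPolynomial (Fin 2) k) : k :=
  constantCoeff (transvectant 4 4 4 (covM f) (covH f))

/-- The Shioda invariant `J₈ = (𝔭,𝔥)₄`. -/
noncomputable def shJ8 (f : MvPolynomial (Fin 2) k) : k :=
  constantCoeff (transvectant 4 4 4 (covP f) (covH f))

/-- The Shioda invariant `J₉ = (𝔫,𝔥)₄`. -/
noncomputable def shJ9 (f : MvPolynomial (Fin 2) k) : k :=
  constantCoeff (transvectant 4 4 4 (covN f) (covH f))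

/-- The Shioda invariant `J₁₀ = (𝔮,𝔥)₄`. -/
noncomputable def shJ10 (f : MvPolynomial (Fin 2) k) : k :=
  constantCoeff (transvectant 4 4 4 (covQ f) (covH f))

end Shioda

section Helpers

variable {K : Type*} [Field K]

/-- Linear substitution by a matrix. -/
noncomputable def act (M : Matrix (Fin 2) (Fin 2) K) :
    MvPolynomial (Fin 2) K →ₐ[K] MvPolynomial (Fin 2) K :=
  bind₁ (fun j : Fin 2 => C (M j 0) * X 0 + C (M j 1) * X 1)

lemma act_X (M : Matrix (Fin 2) (Fin 2) K) (j : Fin 2) :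
    act M (X j) = C (M j 0) * X 0 + C (M j 1) * X 1 := by
  simp [act]

lemma act_C (M : Matrix (Fin 2) (Fin 2) K) (c : K) : act M (C c) = C c := by
  simp [act]

lemma act_act (M N : Matrix (Fin 2) (Fin 2) K) (p : MvPolynomial (Fin 2) K) :
    act M (act N p) = act (N * M) p := by
  have : (act M).comp (act N) = act (N * M) := by
    apply MvPolynomial.algHom_ext
    intro j
    simp only [AlgHom.comp_apply, act_X, map_add, map_mul, act_C, Matrix.mul_apply,
      Fin.sum_univ_two]
    ring
  exact congrArg (fun F => F p) this

lemma act_one (p : MvPolynomial (Fin 2) K) : act (1 : Matrix (Fin 2) (Fin 2) K) p = p := by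
  have : act (1 : Matrix (Fin 2) (Fin 2) K) = AlgHom.id K _ := by
    apply MvPolynomial.algHom_ext
    intro j
    fin_cases j <;> simp [act_X]
  rw [this]; rfl

lemma pderiv_act (M : Matrix (Fin 2) (Fin 2) K) (i : Fin 2) (p : MvPolynomial (Fin 2) K) :
    pderiv i (act M p) = act M (C (M 0 i) * pderiv 0 p + C (M 1 i) * pderiv 1 p) := by
  induction p using MvPolynomial.induction_on with
  | C a => simp [act_C]
  | add p q hp hq => simp only [map_add, hp, hq, map_mul]; ring
  | mul_X p j hp =>
    simp only [map_mul, Derivation.leibniz, hp, smul_eq_mul, map_add, act_C, act_X]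
    fin_cases i <;> fin_cases j <;> simp [pderiv_X, act_X, act_C] <;> ring

/-- Cayley's Omega operator. -/
noncomputable def omegaOp (K : Type*) [Field K] :
    TensorProduct K (MvPolynomial (Fin 2) K) (MvPolynomial (Fin 2) K) →ₗ[K]
    TensorProduct K (MvPolynomial (Fin 2) K) (MvPolynomial (Fin 2) K) :=
  (-1 : K) • TensorProduct.map (pderiv (R := K) (1 : Fin 2)).toLinearMap
      (pderiv (R := K) (0 : Fin 2)).toLinearMap
  + TensorProduct.map (pderiv (R := K) (0 : Fin 2)).toLinearMap
      (pderiv (R := K) (1 : Fin 2)).toLinearMap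

lemma pderiv_swap (p : MvPolynomial (Fin 2) K) :
    pderiv (0 : Fin 2) (pderiv (1 : Fin 2) p) = pderiv (1 : Fin 2) (pderiv (0 : Fin 2) p) := by
  induction p using MvPolynomial.induction_on with
  | C a => simp
  | add p q hp hq => simp only [map_add, hp, hq]
  | mul_X p j hp =>
    fin_cases j <;> simp [pderiv_X, Derivation.leibniz, hp] <;> ring

lemma omega_act (M : Matrix (Fin 2) (Fin 2) K) :
    omegaOp K ∘ₗ TensorProduct.map (act M).toLinearMap (act M).toLinearMap =
      M.det • (TensorProduct.map (act M).toLinearMap (act M).toLinearMap ∘ₗ omegaOp K) := by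
  apply TensorProduct.ext'
  intro f g
  have e : ∀ (i : Fin 2) (p : MvPolynomial (Fin 2) K), pderiv i (act M p) =
      M 0 i • act M (pderiv 0 p) + M 1 i • act M (pderiv 1 p) := by
    intro i p
    rw [pderiv_act, map_add, map_mul, map_mul, act_C, act_C, MvPolynomial.smul_eq_C_mul,
      MvPolynomial.smul_eq_C_mul]
  simp only [omegaOp, LinearMap.comp_apply, LinearMap.add_apply, LinearMap.smul_apply,
    TensorProduct.map_tmul, AlgHom.toLinearMap_apply,
    Derivation.coeFn_coe, e, map_add, map_smul,
    Matrix.det_fin_two, TensorProduct.tmul_add, TensorProduct.add_tmul,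
    ← TensorProduct.smul_tmul', TensorProduct.tmul_smul]
  module

lemma omega_pow_act (M : Matrix (Fin 2) (Fin 2) K) (h : ℕ)
    (t : TensorProduct K (MvPolynomial (Fin 2) K) (MvPolynomial (Fin 2) K)) :
    (omegaOp K ^ h) (TensorProduct.map (act M).toLinearMap (act M).toLinearMap t) =
      M.det ^ h • TensorProduct.map (act M).toLinearMap (act M).toLinearMap
        ((omegaOp K ^ h) t) := by
  induction h with
  | zero => simp
  | succ h ih =>
    have := fun u => congrArg (fun F => F u) (omega_act M)
    simp only [LinearMap.comp_apply, LinearMap.smul_apply] at this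
    rw [pow_succ', Module.End.mul_apply, ih, map_smul, this, Module.End.mul_apply, smul_smul,
      pow_succ]

lemma dX_eq (n : ℕ) (p : MvPolynomial (Fin 2) K) :
    dX n p = ((pderiv (R := K) (0 : Fin 2)).toLinearMap ^ n) p := by
  rw [Module.End.pow_apply]; rfl

lemma dZ_eq (n : ℕ) (p : MvPolynomial (Fin 2) K) :
    dZ n p = ((pderiv (R := K) (1 : Fin 2)).toLinearMap ^ n) p := by
  rw [Module.End.pow_apply]; rfl

lemma pderiv_commute : Commute (pderiv (R := K) (0 : Fin 2)).toLinearMap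
    (pderiv (R := K) (1 : Fin 2)).toLinearMap := by
  apply LinearMap.ext
  intro p
  exact pderiv_swap p

lemma dX_dZ (m n : ℕ) (p : MvPolynomial (Fin 2) K) : dX m (dZ n p) = dZ n (dX m p) := by
  simp only [dX_eq, dZ_eq, ← Module.End.mul_apply]
  rw [(pderiv_commute.pow_pow m n).eq]

lemma omega_pow (h : ℕ) (f g : MvPolynomial (Fin 2) K) :
    LinearMap.mul' K _ ((omegaOp K ^ h) (f ⊗ₜ[K] g)) =
    ∑ j ∈ Finset.range (h + 1),
      C ((-1 : K) ^ j * (h.choose j : K)) * (dX (h - j) (dZ j f) * dX j (dZ (h - j) g)) := by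
  have hc : Commute (TensorProduct.map (pderiv (R := K) (1 : Fin 2)).toLinearMap
      (pderiv (R := K) (0 : Fin 2)).toLinearMap)
      (TensorProduct.map (pderiv (R := K) (0 : Fin 2)).toLinearMap
      (pderiv (R := K) (1 : Fin 2)).toLinearMap) := by
    show _ * _ = _ * _
    rw [← TensorProduct.map_mul, ← TensorProduct.map_mul, pderiv_commute.eq]
  have hc' := hc.smul_left (-1 : K)
  rw [omegaOp, hc'.add_pow, LinearMap.sum_apply, map_sum]
  apply Finset.sum_congr rfl
  intro j hj
  rw [dX_dZ, dZ_eq, dX_eq, dX_eq, dZ_eq, smul_pow]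
  simp only [TensorProduct.map_pow, Module.End.mul_apply]
  rw [Module.End.natCast_apply, ← Nat.cast_smul_eq_nsmul K]
  simp only [map_smul, LinearMap.smul_apply, TensorProduct.map_tmul, LinearMap.mul'_apply]
  rw [smul_smul, MvPolynomial.smul_eq_C_mul, mul_comm ((-1 : K) ^ j)]

lemma transvectant_act (M : Matrix (Fin 2) (Fin 2) K) (r₁ r₂ h : ℕ)
    (f g : MvPolynomial (Fin 2) K) :
    transvectant r₁ r₂ h (act M f) (act M g) = C (M.det ^ h) * act M (transvectant r₁ r₂ h f g) := by
  have key : ∀ t : TensorProduct K (MvPolynomial (Fin 2) K) (MvPolynomial (Fin 2) K),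
      LinearMap.mul' K _ (TensorProduct.map (act M).toLinearMap (act M).toLinearMap t) =
      act M (LinearMap.mul' K _ t) := by
    intro t
    induction t using TensorProduct.induction_on with
    | zero => simp
    | tmul x y => simp
    | add x y hx hy => simp only [map_add, hx, hy]
  unfold transvectant
  rw [← omega_pow, ← omega_pow]
  have := omega_pow_act M h (f ⊗ₜ[K] g)
  rw [TensorProduct.map_tmul] at this
  simp only [AlgHom.toLinearMap_apply] at this
  rw [this, map_smul, key, map_mul, act_C, MvPolynomial.smul_eq_C_mul]
  ring

/-- The binary form with binomially normalised coefficients `a`. -/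
noncomputable def frm (n : ℕ) (a : ℕ → K) : MvPolynomial (Fin 2) K :=
  ∑ i ∈ Finset.range (n + 1), C ((n.choose i : K) * a i) * X 0 ^ (n - i) * X 1 ^ i

lemma pderiv0_frm (n : ℕ) (a : ℕ → K) :
    pderiv (0 : Fin 2) (frm (n + 1) a) = C ((n + 1 : ℕ) : K) * frm n a := by
  unfold frm
  rw [Finset.sum_range_succ, map_add, map_sum, Finset.mul_sum]
  have h0 : pderiv (0 : Fin 2) (C (((n + 1).choose (n + 1) : K) * a (n + 1)) *
      (X 0 : MvPolynomial (Fin 2) K) ^ (n + 1 - (n + 1)) * X 1 ^ (n + 1)) = 0 := by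
    simp [Derivation.leibniz, Derivation.leibniz_pow, pderiv_X]
  rw [h0, add_zero]
  apply Finset.sum_congr rfl
  intro i hi
  have hi' : i ≤ n := by simpa [Nat.lt_succ_iff] using hi
  have e : n + 1 - i = (n - i) + 1 := by omega
  have hch : ((n + 1).choose i : K) * ((n - i + 1 : ℕ) : K) = ((n + 1 : ℕ) : K) * (n.choose i : K) := by
    have := Nat.choose_mul_succ_eq n i
    rw [← Nat.cast_mul, ← Nat.cast_mul]
    congr 1
    rw [e] at this
    linarith
  rw [e]
  have : C (((n + 1).choose i : K) * ((n - i + 1 : ℕ) : K) * a i) =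
    (C (((n + 1 : ℕ) : K) * (n.choose i : K) * a i) : MvPolynomial (Fin 2) K) := by rw [hch]
  simp only [map_mul] at this
  simp only [Derivation.leibniz, Derivation.leibniz_pow, pderiv_X, pderiv_C, smul_eq_mul,
    Pi.single_apply, map_mul]
  simp only [if_true, Fin.isValue, nsmul_eq_mul, add_tsub_cancel_right, one_ne_zero, if_false]
  have c1 : ((n - i + 1 : ℕ) : MvPolynomial (Fin 2) K) = C ((n - i + 1 : ℕ) : K) := by simp
  rw [c1]
  simp only [map_natCast] at this ⊢
  push_cast at this ⊢
  linear_combination X 0 ^ (n - i) * X 1 ^ i * this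

lemma pderiv1_frm (n : ℕ) (a : ℕ → K) :
    pderiv (1 : Fin 2) (frm (n + 1) a) = C ((n + 1 : ℕ) : K) * frm n (fun i => a (i + 1)) := by
  unfold frm
  rw [Finset.sum_range_succ', map_add, map_sum, Finset.mul_sum]
  have h0 : pderiv (1 : Fin 2) (C (((n + 1).choose 0 : K) * a 0) *
      (X 0 : MvPolynomial (Fin 2) K) ^ (n + 1 - 0) * X 1 ^ 0) = 0 := by
    simp [Derivation.leibniz, Derivation.leibniz_pow, pderiv_X]
  rw [h0, add_zero]
  apply Finset.sum_congr rfl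
  intro i hi
  have e : n + 1 - (i + 1) = n - i := by omega
  have hch : ((n + 1).choose (i + 1) : K) * ((i + 1 : ℕ) : K)
      = ((n + 1 : ℕ) : K) * (n.choose i : K) := by
    have := Nat.add_one_mul_choose_eq n i
    rw [← Nat.cast_mul, ← Nat.cast_mul]
    congr 1
    linarith
  rw [e]
  have : C (((n + 1).choose (i + 1) : K) * ((i + 1 : ℕ) : K) * a (i + 1)) =
    (C (((n + 1 : ℕ) : K) * (n.choose i : K) * a (i + 1)) : MvPolynomial (Fin 2) K) := by rw [hch]
  simp only [map_mul] at this
  simp only [Derivation.leibniz, Derivation.leibniz_pow, pderiv_X, pderiv_C, smul_eq_mul,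
    Pi.single_apply, map_mul]
  simp only [if_true, Fin.isValue, nsmul_eq_mul, add_tsub_cancel_right, zero_ne_one, if_false]
  have c1 : ((i + 1 : ℕ) : MvPolynomial (Fin 2) K) = C ((i + 1 : ℕ) : K) := by simp
  rw [c1]
  simp only [map_natCast] at this ⊢
  push_cast at this ⊢
  linear_combination X 0 ^ (n - i) * X 1 ^ i * this

lemma dX_succ (n : ℕ) (p : MvPolynomial (Fin 2) K) : dX (n + 1) p = dX n (pderiv 0 p) := rfl

lemma dZ_succ (n : ℕ) (p : MvPolynomial (Fin 2) K) : dZ (n + 1) p = dZ n (pderiv 1 p) := rfl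

lemma dX_C_mul (n : ℕ) (c : K) (p : MvPolynomial (Fin 2) K) : dX n (C c * p) = C c * dX n p := by
  rw [dX_eq, dX_eq, ← MvPolynomial.smul_eq_C_mul, map_smul, MvPolynomial.smul_eq_C_mul]

lemma dZ_C_mul (n : ℕ) (c : K) (p : MvPolynomial (Fin 2) K) : dZ n (C c * p) = C c * dZ n p := by
  rw [dZ_eq, dZ_eq, ← MvPolynomial.smul_eq_C_mul, map_smul, MvPolynomial.smul_eq_C_mul]

lemma dX_frm (n p : ℕ) (a : ℕ → K) :
    C (n.factorial : K) * dX p (frm (n + p) a) = C ((n + p).factorial : K) * frm n a := by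
  induction p with
  | zero => rfl
  | succ p ih =>
    rw [dX_succ, ← add_assoc, pderiv0_frm, dX_C_mul, mul_left_comm, ih, Nat.factorial_succ,
      Nat.cast_mul, C_mul, mul_assoc]

lemma dZ_frm (n p : ℕ) (a : ℕ → K) :
    C (n.factorial : K) * dZ p (frm (n + p) a) =
      C ((n + p).factorial : K) * frm n (fun i => a (i + p)) := by
  induction p generalizing a with
  | zero => rfl
  | succ p ih =>
    rw [dZ_succ, ← add_assoc, pderiv1_frm, dZ_C_mul, mul_left_comm, ih, Nat.factorial_succ,
      Nat.cast_mul, C_mul, mul_assoc]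
    simp only [add_assoc]

lemma C_cancel {c : K} (hc : c ≠ 0) {p q : MvPolynomial (Fin 2) K} (h : C c * p = C c * q) :
    p = q := by
  have : (C c : MvPolynomial (Fin 2) K) ≠ 0 := by simpa using hc
  exact mul_left_cancel₀ this h

lemma fact_ne_zero_of_le {m n : ℕ} (h : m ≤ n) (hn : (n.factorial : K) ≠ 0) :
    (m.factorial : K) ≠ 0 := by
  intro h0
  obtain ⟨c, hc⟩ := Nat.factorial_dvd_factorial h
  apply hn
  rw [hc, Nat.cast_mul, h0, zero_mul]

lemma dXdZ_frm (n p q : ℕ) (a : ℕ → K) (hn : ((n + p + q).factorial : K) ≠ 0) :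
    C (n.factorial : K) * dX p (dZ q (frm (n + p + q) a)) =
      C ((n + p + q).factorial : K) * frm n (fun i => a (i + q)) := by
  have h1 : ((n + p).factorial : K) ≠ 0 := fact_ne_zero_of_le (by omega) hn
  apply C_cancel h1
  have := dZ_frm (n + p) q a
  have h2 := congrArg (fun F => C (n.factorial : K) * dX p F) this
  simp only [dX_C_mul] at h2
  have h3 := dX_frm n p (fun i => a (i + q))
  linear_combination h2 + C ((n + p + q).factorial : K) * h3

lemma transvectant_frm (m n h : ℕ) (a b : ℕ → K) (hm : ((m + h).factorial : K) ≠ 0)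
    (hn : ((n + h).factorial : K) ≠ 0) :
    transvectant (m + h) (n + h) h (frm (m + h) a) (frm (n + h) b) =
    ∑ j ∈ Finset.range (h + 1), C ((-1 : K) ^ j * (h.choose j : K)) *
      (frm m (fun i => a (i + j)) * frm n (fun i => b (i + (h - j)))) := by
  unfold transvectant
  rw [Finset.mul_sum]
  apply Finset.sum_congr rfl
  intro j hj
  have hj' : j ≤ h := by simpa [Nat.lt_succ_iff] using hj
  have e1 : m + h = m + (h - j) + j := by omega
  have e2 : n + h = n + j + (h - j) := by omega
  have d1 := dXdZ_frm m (h - j) j a (by rw [← e1]; exact hm)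
  have d2 := dXdZ_frm n j (h - j) b (by rw [← e2]; exact hn)
  rw [← e1] at d1
  rw [← e2] at d2
  apply C_cancel (mul_ne_zero hm hn)
  have e3 : (C (((m + h).factorial : K) * ((n + h).factorial : K)) : MvPolynomial (Fin 2) K) *
    C ((((m + h - h).factorial * (n + h - h).factorial : ℕ) : K) /
      ((((m + h).factorial * (n + h).factorial : ℕ)) : K)) =
      C (m.factorial : K) * C (n.factorial : K) := by
    rw [← C_mul, ← C_mul]
    congr 1
    rw [Nat.add_sub_cancel, Nat.add_sub_cancel]
    push_cast
    field_simp
  rw [← mul_assoc, e3, C_mul (a := ((m + h).factorial : K))]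
  linear_combination C ((-1 : K) ^ j * (h.choose j : K)) *
    (C (n.factorial : K) * (dX j (dZ (h - j) (frm (n + h) b))) * d1 +
    C ((m + h).factorial : K) * frm m (fun i => a (i + j)) * d2)

set_option linter.unusedSimpArgs false

lemma C_num2 : (C ((2) : K) : MvPolynomial (Fin 2) K) = 2 := map_ofNat C 2

lemma C_num4 : (C ((4) : K) : MvPolynomial (Fin 2) K) = 4 := map_ofNat C 4

lemma C_num6 : (C ((6) : K) : MvPolynomial (Fin 2) K) = 6 := map_ofNat C 6

lemma C_num8 : (C ((8) : K) : MvPolynomial (Fin 2) K) = 8 := map_ofNat C 8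

lemma C_num12 : (C ((12) : K) : MvPolynomial (Fin 2) K) = 12 := map_ofNat C 12

lemma C_num14 : (C ((14) : K) : MvPolynomial (Fin 2) K) = 14 := map_ofNat C 14

lemma C_num16 : (C ((16) : K) : MvPolynomial (Fin 2) K) = 16 := map_ofNat C 16

lemma C_num20 : (C ((20) : K) : MvPolynomial (Fin 2) K) = 20 := map_ofNat C 20

lemma C_num24 : (C ((24) : K) : MvPolynomial (Fin 2) K) = 24 := map_ofNat C 24

lemma C_num28 : (C ((28) : K) : MvPolynomial (Fin 2) K) = 28 := map_ofNat C 28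

lemma C_num30 : (C ((30) : K) : MvPolynomial (Fin 2) K) = 30 := map_ofNat C 30

lemma C_num36 : (C ((36) : K) : MvPolynomial (Fin 2) K) = 36 := map_ofNat C 36

lemma C_num44 : (C ((44) : K) : MvPolynomial (Fin 2) K) = 44 := map_ofNat C 44

lemma C_num48 : (C ((48) : K) : MvPolynomial (Fin 2) K) = 48 := map_ofNat C 48

lemma C_num50 : (C ((50) : K) : MvPolynomial (Fin 2) K) = 50 := map_ofNat C 50

lemma C_num56 : (C ((56) : K) : MvPolynomial (Fin 2) K) = 56 := map_ofNat C 56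

lemma C_num68 : (C ((68) : K) : MvPolynomial (Fin 2) K) = 68 := map_ofNat C 68

lemma C_num70 : (C ((70) : K) : MvPolynomial (Fin 2) K) = 70 := map_ofNat C 70

lemma C_num72 : (C ((72) : K) : MvPolynomial (Fin 2) K) = 72 := map_ofNat C 72

lemma C_num90 : (C ((90) : K) : MvPolynomial (Fin 2) K) = 90 := map_ofNat C 90

lemma C_num96 : (C ((96) : K) : MvPolynomial (Fin 2) K) = 96 := map_ofNat C 96

/-- The characteristic does not divide `2 * 3 * 5 * 7`. -/
structure CharOK (K : Type*) [Field K] : Prop where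
  h2 : (2 : K) ≠ 0
  h3 : (3 : K) ≠ 0
  h5 : (5 : K) ≠ 0
  h7 : (7 : K) ≠ 0

lemma CharOK.of_ringChar (hchar : ringChar K = 0 ∨ 11 ≤ ringChar K) : CharOK K := by
  have key : ∀ n : ℕ, 0 < n → n < 11 → (n : K) ≠ 0 := by
    intro n h0 h1 h
    have hd := (ringChar.spec K n).1 h
    rcases hchar with hc | hc
    · rw [hc, zero_dvd_iff] at hd; omega
    · have := Nat.le_of_dvd h0 hd; omega
  constructor
  · exact_mod_cast key 2 (by norm_num) (by norm_num)
  · exact_mod_cast key 3 (by norm_num) (by norm_num)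
  · exact_mod_cast key 5 (by norm_num) (by norm_num)
  · exact_mod_cast key 7 (by norm_num) (by norm_num)

lemma CharOK.fact8 (hK : CharOK K) : ((8 : ℕ).factorial : K) ≠ 0 := by
  have : ((8 : ℕ).factorial : K) = 2 ^ 7 * 3 ^ 2 * 5 * 7 := by
    norm_num [Nat.factorial]
  rw [this]
  have := hK.h2; have := hK.h3; have := hK.h5; have := hK.h7
  positivity

lemma CharOK.fact4 (hK : CharOK K) : ((4 : ℕ).factorial : K) ≠ 0 :=
  fact_ne_zero_of_le (by norm_num) hK.fact8

/-- A sequence with five given values. -/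
def v5 (k0 k1 k2 k3 k4 : K) : ℕ → K
  | 0 => k0
  | 1 => k1
  | 2 => k2
  | 3 => k3
  | _ => k4

/-- A sequence with nine given values. -/
def v9 (a0 a1 a2 a3 a4 a5 a6 a7 a8 : K) : ℕ → K
  | 0 => a0
  | 1 => a1
  | 2 => a2
  | 3 => a3
  | 4 => a4
  | 5 => a5
  | 6 => a6
  | 7 => a7
  | _ => a8

lemma frm4_eq (k0 k1 k2 k3 k4 : K) : frm 4 (v5 k0 k1 k2 k3 k4) =
    C k0 * X 0 ^ 4 + C (4 * k1) * X 0 ^ 3 * X 1 + C (6 * k2) * X 0 ^ 2 * X 1 ^ 2 +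
      C (4 * k3) * X 0 * X 1 ^ 3 + C k4 * X 1 ^ 4 := by
  simp [frm, C_num2, C_num4, C_num6, C_num8, C_num12, C_num14, C_num16, C_num20, C_num24, C_num28, C_num30, C_num36, C_num44, C_num48, C_num50, C_num56, C_num68, C_num70, C_num72, C_num90, C_num96,
    Finset.sum_range_succ, v5, show Nat.choose 4 2 = 6 from rfl,
    show Nat.choose 4 3 = 4 from rfl]

lemma frm8_eq (a0 a1 a2 a3 a4 a5 a6 a7 a8 : K) : frm 8 (v9 a0 a1 a2 a3 a4 a5 a6 a7 a8) =
    C a0 * X 0 ^ 8 + C (8 * a1) * X 0 ^ 7 * X 1 + C (28 * a2) * X 0 ^ 6 * X 1 ^ 2 +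
      C (56 * a3) * X 0 ^ 5 * X 1 ^ 3 + C (70 * a4) * X 0 ^ 4 * X 1 ^ 4 +
      C (56 * a5) * X 0 ^ 3 * X 1 ^ 5 + C (28 * a6) * X 0 ^ 2 * X 1 ^ 6 +
      C (8 * a7) * X 0 * X 1 ^ 7 + C a8 * X 1 ^ 8 := by
  simp [frm, C_num2, C_num4, C_num6, C_num8, C_num12, C_num14, C_num16, C_num20, C_num24, C_num28, C_num30, C_num36, C_num44, C_num48, C_num50, C_num56, C_num68, C_num70, C_num72, C_num90, C_num96,
    Finset.sum_range_succ, v9, show Nat.choose 8 2 = 28 from rfl,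
    show Nat.choose 8 3 = 56 from rfl, show Nat.choose 8 4 = 70 from rfl,
    show Nat.choose 8 5 = 56 from rfl, show Nat.choose 8 6 = 28 from rfl,
    show Nat.choose 8 7 = 8 from rfl]

lemma frm4_of (hK : CharOK K) (c0 c1 c2 c3 c4 : K) :
    C c0 * X 0 ^ 4 + C c1 * X 0 ^ 3 * X 1 + C c2 * X 0 ^ 2 * X 1 ^ 2 +
      C c3 * X 0 * X 1 ^ 3 + C c4 * X 1 ^ 4 =
    frm 4 (v5 c0 (c1 / 4) (c2 / 6) (c3 / 4) c4) := by
  have h2 := hK.h2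
  have h3 := hK.h3
  have h4 : (4 : K) ≠ 0 := by rw [show (4 : K) = 2 * 2 by norm_num]; positivity
  have h6 : (6 : K) ≠ 0 := by rw [show (6 : K) = 2 * 3 by norm_num]; positivity
  rw [frm4_eq, mul_div_cancel₀ _ h4, mul_div_cancel₀ _ h4, mul_div_cancel₀ _ h6]

lemma frm8_of (hK : CharOK K) (c0 c1 c2 c3 c4 c5 c6 c7 c8 : K) :
    C c0 * X 0 ^ 8 + C c1 * X 0 ^ 7 * X 1 + C c2 * X 0 ^ 6 * X 1 ^ 2 +
      C c3 * X 0 ^ 5 * X 1 ^ 3 + C c4 * X 0 ^ 4 * X 1 ^ 4 +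
      C c5 * X 0 ^ 3 * X 1 ^ 5 + C c6 * X 0 ^ 2 * X 1 ^ 6 +
      C c7 * X 0 * X 1 ^ 7 + C c8 * X 1 ^ 8 =
    frm 8 (v9 c0 (c1 / 8) (c2 / 28) (c3 / 56) (c4 / 70) (c5 / 56) (c6 / 28) (c7 / 8) c8) := by
  have h2 := hK.h2
  have h5 := hK.h5
  have h7 := hK.h7
  have h8 : (8 : K) ≠ 0 := by rw [show (8 : K) = 2 * 2 * 2 by norm_num]; positivity
  have h28 : (28 : K) ≠ 0 := by rw [show (28 : K) = 2 * 2 * 7 by norm_num]; positivity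
  have h56 : (56 : K) ≠ 0 := by rw [show (56 : K) = 2 * 2 * 2 * 7 by norm_num]; positivity
  have h70 : (70 : K) ≠ 0 := by rw [show (70 : K) = 2 * 5 * 7 by norm_num]; positivity
  rw [frm8_eq]
  simp only [mul_div_cancel₀ _ h8, mul_div_cancel₀ _ h28, mul_div_cancel₀ _ h56,
    mul_div_cancel₀ _ h70]

lemma t886 (hK : CharOK K) (a0 a1 a2 a3 a4 a5 a6 a7 a8 : K) :
    covK (frm 8 (v9 a0 a1 a2 a3 a4 a5 a6 a7 a8)) = frm 4 (v5
      (2 * a0 * a6 - 12 * a1 * a5 + 30 * a2 * a4 - 20 * a3^2)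
      ((4 * a0 * a7 - 20 * a1 * a6 + 36 * a2 * a5 - 20 * a3 * a4) / 4)
      ((2 * a0 * a8 - 4 * a1 * a7 - 16 * a2 * a6 + 68 * a3 * a5 - 50 * a4^2) / 6)
      ((4 * a1 * a8 - 20 * a2 * a7 + 36 * a3 * a6 - 20 * a4 * a5) / 4)
      (2 * a2 * a8 - 12 * a3 * a7 + 30 * a4 * a6 - 20 * a5^2)) := by
  have := transvectant_frm 2 2 6 (v9 a0 a1 a2 a3 a4 a5 a6 a7 a8)
    (v9 a0 a1 a2 a3 a4 a5 a6 a7 a8) hK.fact8 hK.fact8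
  norm_num only at this
  rw [covK, this, ← frm4_of hK]
  simp [frm, C_num2, C_num4, C_num6, C_num8, C_num12, C_num14, C_num16, C_num20, C_num24, C_num28, C_num30, C_num36, C_num44, C_num48, C_num50, C_num56, C_num68, C_num70, C_num72, C_num90, C_num96,
    Finset.sum_range_succ, v9, Nat.choose]
  ring

lemma t884 (hK : CharOK K) (a0 a1 a2 a3 a4 a5 a6 a7 a8 : K) :
    covG (frm 8 (v9 a0 a1 a2 a3 a4 a5 a6 a7 a8)) = frm 8 (v9
      (2 * a0 * a4 - 8 * a1 * a3 + 6 * a2^2)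
      ((8 * a0 * a5 - 24 * a1 * a4 + 16 * a2 * a3) / 8)
      ((12 * a0 * a6 - 16 * a1 * a5 - 44 * a2 * a4 + 48 * a3^2) / 28)
      ((8 * a0 * a7 + 16 * a1 * a6 - 96 * a2 * a5 + 72 * a3 * a4) / 56)
      ((2 * a0 * a8 + 24 * a1 * a7 - 44 * a2 * a6 - 72 * a3 * a5 + 90 * a4^2) / 70)
      ((8 * a1 * a8 + 16 * a2 * a7 - 96 * a3 * a6 + 72 * a4 * a5) / 56)
      ((12 * a2 * a8 - 16 * a3 * a7 - 44 * a4 * a6 + 48 * a5^2) / 28)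
      ((8 * a3 * a8 - 24 * a4 * a7 + 16 * a5 * a6) / 8)
      (2 * a4 * a8 - 8 * a5 * a7 + 6 * a6^2)) := by
  have := transvectant_frm 4 4 4 (v9 a0 a1 a2 a3 a4 a5 a6 a7 a8)
    (v9 a0 a1 a2 a3 a4 a5 a6 a7 a8) hK.fact8 hK.fact8
  norm_num only at this
  rw [covG, this, ← frm8_of hK]
  simp [frm, C_num2, C_num4, C_num6, C_num8, C_num12, C_num14, C_num16, C_num20, C_num24, C_num28, C_num30, C_num36, C_num44, C_num48, C_num50, C_num56, C_num68, C_num70, C_num72, C_num90, C_num96,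
    Finset.sum_range_succ, v9, Nat.choose]
  ring

lemma t888 (hK : CharOK K) (a0 a1 a2 a3 a4 a5 a6 a7 a8 b0 b1 b2 b3 b4 b5 b6 b7 b8 : K) :
    transvectant 8 8 8 (frm 8 (v9 a0 a1 a2 a3 a4 a5 a6 a7 a8))
      (frm 8 (v9 b0 b1 b2 b3 b4 b5 b6 b7 b8)) = C (a0 * b8 - 8 * a1 * b7 + 28 * a2 * b6
        - 56 * a3 * b5 + 70 * a4 * b4 - 56 * a5 * b3 + 28 * a6 * b2 - 8 * a7 * b1 + a8 * b0) := by
  have := transvectant_frm 0 0 8 (v9 a0 a1 a2 a3 a4 a5 a6 a7 a8)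
    (v9 b0 b1 b2 b3 b4 b5 b6 b7 b8) hK.fact8 hK.fact8
  norm_num only at this
  rw [this]
  simp [frm, C_num2, C_num4, C_num6, C_num8, C_num12, C_num14, C_num16, C_num20, C_num24, C_num28, C_num30, C_num36, C_num44, C_num48, C_num50, C_num56, C_num68, C_num70, C_num72, C_num90, C_num96,
    Finset.sum_range_succ, v9, Nat.choose]
  ring

lemma t444 (hK : CharOK K) (a0 a1 a2 a3 a4 b0 b1 b2 b3 b4 : K) :
    transvectant 4 4 4 (frm 4 (v5 a0 a1 a2 a3 a4)) (frm 4 (v5 b0 b1 b2 b3 b4)) =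
      C (a0 * b4 - 4 * a1 * b3 + 6 * a2 * b2 - 4 * a3 * b1 + a4 * b0) := by
  have := transvectant_frm 0 0 4 (v5 a0 a1 a2 a3 a4) (v5 b0 b1 b2 b3 b4) hK.fact4 hK.fact4
  norm_num only at this
  rw [this]
  simp [frm, C_num2, C_num4, C_num6, C_num8, C_num12, C_num14, C_num16, C_num20, C_num24, C_num28, C_num30, C_num36, C_num44, C_num48, C_num50, C_num56, C_num68, C_num70, C_num72, C_num90, C_num96,
    Finset.sum_range_succ, v5, Nat.choose]
  ring

lemma t442 (hK : CharOK K) (k0 k1 k2 k3 k4 : K) :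
    transvectant 4 4 2 (frm 4 (v5 k0 k1 k2 k3 k4)) (frm 4 (v5 k0 k1 k2 k3 k4)) =
      frm 4 (v5 (2 * k0 * k2 - 2 * k1^2) ((4 * k0 * k3 - 4 * k1 * k2) / 4)
        ((2 * k0 * k4 - 6 * k2^2 + 4 * k1 * k3) / 6) ((4 * k1 * k4 - 4 * k2 * k3) / 4)
        (2 * k2 * k4 - 2 * k3^2)) := by
  have := transvectant_frm 2 2 2 (v5 k0 k1 k2 k3 k4) (v5 k0 k1 k2 k3 k4) hK.fact4 hK.fact4
  norm_num only at this
  rw [this, ← frm4_of hK]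
  simp [frm, C_num2, C_num4, C_num6, C_num8, C_num12, C_num14, C_num16, C_num20, C_num24, C_num28, C_num30, C_num36, C_num44, C_num48, C_num50, C_num56, C_num68, C_num70, C_num72, C_num90, C_num96,
    Finset.sum_range_succ, v5, Nat.choose]
  ring

lemma t844 (hK : CharOK K) (a0 a1 a2 a3 a4 a5 a6 a7 a8 k0 k1 k2 k3 k4 : K) :
    transvectant 8 4 4 (frm 8 (v9 a0 a1 a2 a3 a4 a5 a6 a7 a8)) (frm 4 (v5 k0 k1 k2 k3 k4)) =
      frm 4 (v5 (a0 * k4 - 4 * a1 * k3 + 6 * a2 * k2 - 4 * a3 * k1 + a4 * k0)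
        (a1 * k4 - 4 * a2 * k3 + 6 * a3 * k2 - 4 * a4 * k1 + a5 * k0)
        (a2 * k4 - 4 * a3 * k3 + 6 * a4 * k2 - 4 * a5 * k1 + a6 * k0)
        (a3 * k4 - 4 * a4 * k3 + 6 * a5 * k2 - 4 * a6 * k1 + a7 * k0)
        (a4 * k4 - 4 * a5 * k3 + 6 * a6 * k2 - 4 * a7 * k1 + a8 * k0)) := by
  have := transvectant_frm 4 0 4 (v9 a0 a1 a2 a3 a4 a5 a6 a7 a8) (v5 k0 k1 k2 k3 k4)
    hK.fact8 hK.fact4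
  norm_num only at this
  rw [this]
  simp [frm, C_num2, C_num4, C_num6, C_num8, C_num12, C_num14, C_num16, C_num20, C_num24, C_num28, C_num30, C_num36, C_num44, C_num48, C_num50, C_num56, C_num68, C_num70, C_num72, C_num90, C_num96,
    Finset.sum_range_succ, v5, v9, Nat.choose]
  ring

/-- The exponent of `X ^ (n - i) * Z ^ i`. -/
noncomputable def expo (n i : ℕ) : Fin 2 →₀ ℕ := Finsupp.single 0 (n - i) + Finsupp.single 1 i

lemma expo_inj {n i j : ℕ} (h : expo n i = expo n j) : i = j := by
  have := congrArg (fun F => F 1) h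
  simpa [expo] using this

lemma mono_eq (n i : ℕ) (c : K) :
    C c * X 0 ^ (n - i) * X 1 ^ i = monomial (expo n i) c := by
  rw [expo, X_pow_eq_monomial, X_pow_eq_monomial, C_mul_monomial, monomial_mul, mul_one, mul_one]

lemma coeff_frm (n i : ℕ) (hi : i ≤ n) (a : ℕ → K) :
    coeff (expo n i) (frm n a) = (n.choose i : K) * a i := by
  unfold frm
  simp only [mono_eq, coeff_sum, coeff_monomial]
  rw [Finset.sum_eq_single i]
  · simp
  · intro j _ hj
    rw [if_neg]
    exact fun h => hj (expo_inj h)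
  · intro h
    exact absurd (Finset.mem_range.2 (Nat.lt_succ_of_le hi)) h

lemma hom_sum (n : ℕ) (f : MvPolynomial (Fin 2) K) (hf : f.IsHomogeneous n) :
    f = ∑ i ∈ Finset.range (n + 1), C (coeff (expo n i) f) * X 0 ^ (n - i) * X 1 ^ i := by
  simp only [mono_eq]
  apply MvPolynomial.ext
  intro m
  simp only [coeff_sum, coeff_monomial]
  by_cases hm : m.degree = n
  · have hd : m 0 + m 1 = n := by
      rw [← hm, Finsupp.degree_eq_sum, Fin.sum_univ_two]
    have hm' : expo n (m 1) = m := by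
      ext j
      fin_cases j
      · simp [expo]; omega
      · simp [expo]
    rw [Finset.sum_eq_single (m 1)]
    · simp [hm']
    · intro j _ hj
      rw [if_neg]
      intro h
      apply hj
      rw [← hm'] at h
      exact expo_inj h
    · intro h
      exact absurd (Finset.mem_range.2 (by omega)) h
  · rw [hf.coeff_eq_zero hm, Finset.sum_eq_zero]
    intro i hi
    split_ifs with h
    · rw [h]; exact hf.coeff_eq_zero hm
    · rfl

lemma hom8 (hK : CharOK K) (f : MvPolynomial (Fin 2) K) (hf : f.IsHomogeneous 8) :
    ∃ a0 a1 a2 a3 a4 a5 a6 a7 a8 : K, f = frm 8 (v9 a0 a1 a2 a3 a4 a5 a6 a7 a8) := by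
  have h := hom_sum 8 f hf
  have h2 := frm8_of hK (coeff (expo 8 0) f) (coeff (expo 8 1) f) (coeff (expo 8 2) f)
    (coeff (expo 8 3) f) (coeff (expo 8 4) f) (coeff (expo 8 5) f) (coeff (expo 8 6) f)
    (coeff (expo 8 7) f) (coeff (expo 8 8) f)
  refine ⟨_, _, _, _, _, _, _, _, _, Eq.trans ?_ h2⟩
  conv_lhs => rw [h]
  simp [Finset.sum_range_succ]

lemma frm4_inj (hK : CharOK K) {a0 a1 a2 a3 a4 b0 b1 b2 b3 b4 : K}
    (h : frm 4 (v5 a0 a1 a2 a3 a4) = frm 4 (v5 b0 b1 b2 b3 b4)) :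
    a0 = b0 ∧ a1 = b1 ∧ a2 = b2 ∧ a3 = b3 ∧ a4 = b4 := by
  have h2 := hK.h2
  have h3 := hK.h3
  have h4 : (4 : K) ≠ 0 := by rw [show (4 : K) = 2 * 2 by norm_num]; positivity
  have h6 : (6 : K) ≠ 0 := by rw [show (6 : K) = 2 * 3 by norm_num]; positivity
  have key : ∀ i ≤ 4, ((Nat.choose 4 i : ℕ) : K) * v5 a0 a1 a2 a3 a4 i =
      (Nat.choose 4 i : ℕ) * v5 b0 b1 b2 b3 b4 i := by
    intro i hi
    rw [← coeff_frm 4 i hi, ← coeff_frm 4 i hi, h]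
  refine ⟨?_, ?_, ?_, ?_, ?_⟩
  · simpa [v5] using key 0 (by norm_num)
  · simpa [v5, h4] using key 1 (by norm_num)
  · simpa [v5, h6, show Nat.choose 4 2 = 6 from rfl] using key 2 (by norm_num)
  · simpa [v5, h4, show Nat.choose 4 3 = 4 from rfl] using key 3 (by norm_num)
  · simpa [v5] using key 4 (by norm_num)

lemma act_hom (M : Matrix (Fin 2) (Fin 2) K) (n : ℕ) (f : MvPolynomial (Fin 2) K)
    (hf : f.IsHomogeneous n) : (act M f).IsHomogeneous n := by
  have := hf.eval₂ (C : K →+* MvPolynomial (Fin 2) K)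
    (fun j : Fin 2 => C (M j 0) * X 0 + C (M j 1) * X 1) (n := 1) (fun r => isHomogeneous_C _ r)
    (fun j => ((isHomogeneous_X K 0).C_mul _).add ((isHomogeneous_X K 1).C_mul _))
  rw [one_mul] at this
  exact this

lemma eval_act (M : Matrix (Fin 2) (Fin 2) K) (u v : K) (f : MvPolynomial (Fin 2) K) :
    eval ![u, v] (act M f) = eval ![M 0 0 * u + M 0 1 * v, M 1 0 * u + M 1 1 * v] f := by
  induction f using MvPolynomial.induction_on with
  | C a => simp [act_C]
  | add p q hp hq => simp only [map_add, hp, hq]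
  | mul_X p j hp =>
    simp only [map_mul, hp, act_X]
    fin_cases j <;> simp

lemma act_inv {M : Matrix (Fin 2) (Fin 2) K} (hM : IsUnit M.det) (f : MvPolynomial (Fin 2) K) :
    act M⁻¹ (act M f) = f := by
  rw [act_act, Matrix.mul_nonsing_inv _ hM, act_one]

lemma act_inv' {M : Matrix (Fin 2) (Fin 2) K} (hM : IsUnit M.det) (f : MvPolynomial (Fin 2) K) :
    act M (act M⁻¹ f) = f := by
  rw [act_act, Matrix.nonsing_inv_mul _ hM, act_one]

lemma act_sqf {M : Matrix (Fin 2) (Fin 2) K} (hM : IsUnit M.det) {f : MvPolynomial (Fin 2) K}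
    (hf : Squarefree f) : Squarefree (act M f) := by
  intro x hx
  have h1 : act M⁻¹ x * act M⁻¹ x ∣ f := by
    rw [← map_mul]
    have := map_dvd (act M⁻¹) hx
    rwa [act_inv hM] at this
  have h2 := (hf _ h1).map (act M)
  rwa [act_inv' hM] at h2

lemma trans_act1 {M : Matrix (Fin 2) (Fin 2) K} (hM : M.det = 1) (r₁ r₂ h : ℕ)
    (f g : MvPolynomial (Fin 2) K) :
    transvectant r₁ r₂ h (act M f) (act M g) = act M (transvectant r₁ r₂ h f g) := by
  rw [transvectant_act, hM, one_pow, C_1, one_mul]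

lemma cc_act (M : Matrix (Fin 2) (Fin 2) K) (f : MvPolynomial (Fin 2) K) :
    constantCoeff (act M f) = constantCoeff f := by
  induction f using MvPolynomial.induction_on with
  | C a => simp [act_C]
  | add p q hp hq => simp only [map_add, hp, hq]
  | mul_X p j hp => simp [act_X]

/-- The hypotheses of the forward implication. -/
structure Good (f : MvPolynomial (Fin 2) K) : Prop where
  hom : f.IsHomogeneous 8
  sqf : Squarefree f
  rel : 30 * shJ3 f ^ 2 = shJ2 f ^ 3
  j4 : shJ4 f = 0
  j5 : shJ5 f = 0
  j6 : shJ6 f = 0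
  j7 : shJ7 f = 0
  j9 : shJ9 f = 0

lemma Good.act {f : MvPolynomial (Fin 2) K} (hf : Good f) {M : Matrix (Fin 2) (Fin 2) K}
    (hM : M.det = 1) : Good (act M f) where
  hom := act_hom _ _ _ hf.hom
  sqf := act_sqf (by rw [hM]; exact isUnit_one) hf.sqf
  rel := by
    have := hf.rel
    simp only [shJ2, shJ3, covG, trans_act1 hM, cc_act] at this ⊢
    exact this
  j4 := by
    have := hf.j4
    simp only [shJ4, covK, trans_act1 hM, cc_act] at this ⊢
    exact this
  j5 := by
    have := hf.j5
    simp only [shJ5, covM, covK, trans_act1 hM, cc_act] at this ⊢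
    exact this
  j6 := by
    have := hf.j6
    simp only [shJ6, covH, covK, trans_act1 hM, cc_act] at this ⊢
    exact this
  j7 := by
    have := hf.j7
    simp only [shJ7, covM, covH, covK, trans_act1 hM, cc_act] at this ⊢
    exact this
  j9 := by
    have := hf.j9
    simp only [shJ9, covN, covH, covK, trans_act1 hM, cc_act] at this ⊢
    exact this

/-- Equivalence with the octahedral form. -/
def Oct (f : MvPolynomial (Fin 2) K) : Prop :=
  ∃ M : Matrix (Fin 2) (Fin 2) K, IsUnit M.det ∧
    f = act M (X 0 ^ 8 + 14 * X 0 ^ 4 * X 1 ^ 4 + X 1 ^ 8)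

lemma Oct.of_act {f : MvPolynomial (Fin 2) K} {M : Matrix (Fin 2) (Fin 2) K}
    (hM : M.det = 1) (h : Oct (act M f)) : Oct f := by
  have hM' : IsUnit M.det := by rw [hM]; exact isUnit_one
  obtain ⟨N, hN, e⟩ := h
  refine ⟨N * M⁻¹, ?_, ?_⟩
  · rw [Matrix.det_mul]
    exact hN.mul (Matrix.isUnit_nonsing_inv_det _ hM')
  · rw [← act_act, ← e, act_inv hM']

lemma root_exists [IsAlgClosed K] (n : ℕ) (hn : 0 < n) (c : ℕ → K) (hc : c n ≠ 0) :
    ∃ u : K, ∑ i ∈ Finset.range (n + 1), c i * u ^ i = 0 := by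
  let p : Polynomial K := ∑ i ∈ Finset.range (n + 1), Polynomial.monomial i (c i)
  have hp : p.coeff n ≠ 0 := by
    simpa [p, Polynomial.coeff_monomial] using hc
  have hd : p.degree ≠ 0 := by
    intro h
    have h1 := Polynomial.le_degree_of_ne_zero hp
    rw [h] at h1
    have : n ≤ 0 := by exact_mod_cast h1
    omega
  obtain ⟨u, hu⟩ := IsAlgClosed.exists_root p hd
  refine ⟨u, ?_⟩
  simpa [p, Polynomial.IsRoot, Polynomial.eval_finsetSum] using hu

lemma exists_move [IsAlgClosed K] (n : ℕ) (hn : 0 < n) (a : ℕ → K) :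
    ∃ M : Matrix (Fin 2) (Fin 2) K, M.det = 1 ∧ eval ![0, 1] (act M (frm n a)) = 0 := by
  by_cases h0 : a 0 = 0
  · refine ⟨!![0, 1; -1, 0], by simp [Matrix.det_fin_two], ?_⟩
    rw [eval_act]
    simp only [frm, map_sum]
    apply Finset.sum_eq_zero
    intro i _
    rcases Nat.eq_zero_or_pos i with h | h
    · subst h; simp [h0]
    · simp [h.ne']
  · obtain ⟨u, hu⟩ := root_exists n hn (fun j => (n.choose (n - j) : K) * a (n - j)) (by simpa using h0)
    refine ⟨!![1, u; 0, 1], by simp [Matrix.det_fin_two], ?_⟩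
    refine Eq.trans ?_ hu
    rw [eval_act, ← Finset.sum_range_reflect]
    simp only [frm, map_sum]
    apply Finset.sum_congr rfl
    intro i hi
    have hi' : i ≤ n := by simpa [Nat.lt_succ_iff] using hi
    have e : n - (n + 1 - 1 - i) = i := by omega
    have e' : n + 1 - 1 - i = n - i := by omega
    rw [e, e']
    simp

lemma eval_frm4 (k0 k1 k2 k3 k4 : K) : eval ![0, 1] (frm 4 (v5 k0 k1 k2 k3 k4)) = k4 := by
  rw [frm4_eq]; simp

lemma eval_frm8 (a0 a1 a2 a3 a4 a5 a6 a7 a8 : K) :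
    eval ![0, 1] (frm 8 (v9 a0 a1 a2 a3 a4 a5 a6 a7 a8)) = a8 := by
  rw [frm8_eq]; simp

lemma covK_act {M : Matrix (Fin 2) (Fin 2) K} (hM : M.det = 1) (f : MvPolynomial (Fin 2) K) :
    covK (act M f) = act M (covK f) := trans_act1 hM _ _ _ _ _

lemma shear4 (t k0 k1 k2 k3 : K) : act !![1, 0; t, 1] (frm 4 (v5 k0 k1 k2 k3 0)) =
    frm 4 (v5 (k0 + 4 * t * k1 + 6 * t ^ 2 * k2 + 4 * t ^ 3 * k3)
      (k1 + 3 * t * k2 + 3 * t ^ 2 * k3) (k2 + 2 * t * k3) k3 0) := by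
  have c3 : (C (3 : K) : MvPolynomial (Fin 2) K) = 3 := map_ofNat C 3
  rw [frm4_eq, frm4_eq]
  simp only [map_add, map_mul, map_pow, act_C, act_X]
  simp [C_num2, C_num4, C_num6, c3]
  ring

lemma shear8 (t a0 a1 a2 a3 a4 a5 a6 a7 : K) :
    act !![1, 0; t, 1] (frm 8 (v9 a0 a1 a2 a3 a4 a5 a6 a7 0)) =
    frm 8 (v9 (a0 + 8 * t * a1 + 28 * t ^ 2 * a2 + 56 * t ^ 3 * a3 + 70 * t ^ 4 * a4 + 56 * t ^ 5 * a5 + 28 * t ^ 6 * a6 + 8 * t ^ 7 * a7)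
      (a1 + 7 * t * a2 + 21 * t ^ 2 * a3 + 35 * t ^ 3 * a4 + 35 * t ^ 4 * a5 + 21 * t ^ 5 * a6 + 7 * t ^ 6 * a7)
      (a2 + 6 * t * a3 + 15 * t ^ 2 * a4 + 20 * t ^ 3 * a5 + 15 * t ^ 4 * a6 + 6 * t ^ 5 * a7)
      (a3 + 5 * t * a4 + 10 * t ^ 2 * a5 + 10 * t ^ 3 * a6 + 5 * t ^ 4 * a7)
      (a4 + 4 * t * a5 + 6 * t ^ 2 * a6 + 4 * t ^ 3 * a7)
      (a5 + 3 * t * a6 + 3 * t ^ 2 * a7)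
      (a6 + 2 * t * a7)
      (a7) 0) := by
  have c3 : (C (3 : K) : MvPolynomial (Fin 2) K) = 3 := map_ofNat C 3
  have c5 : (C (5 : K) : MvPolynomial (Fin 2) K) = 5 := map_ofNat C 5
  have c7 : (C (7 : K) : MvPolynomial (Fin 2) K) = 7 := map_ofNat C 7
  have c10 : (C (10 : K) : MvPolynomial (Fin 2) K) = 10 := map_ofNat C 10
  have c15 : (C (15 : K) : MvPolynomial (Fin 2) K) = 15 := map_ofNat C 15
  have c21 : (C (21 : K) : MvPolynomial (Fin 2) K) = 21 := map_ofNat C 21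
  have c35 : (C (35 : K) : MvPolynomial (Fin 2) K) = 35 := map_ofNat C 35
  rw [frm8_eq, frm8_eq]
  simp only [map_add, map_mul, map_pow, act_C, act_X]
  simp [c3, c5, c7, c10, c15, c21, c35, C_num2, C_num4, C_num6, C_num8, C_num20, C_num28, C_num56, C_num70]
  ring

lemma swap4 (k3 : K) : act !![0, 1; -1, 0] (frm 4 (v5 0 0 0 k3 0)) =
    frm 4 (v5 0 (-k3) 0 0 0) := by
  rw [frm4_eq, frm4_eq]
  simp only [map_add, map_mul, map_pow, act_C, act_X]
  simp [C_num4]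
  ring

lemma oct_alg {R : Type*} [CommRing R] (S x z : R) (hs : S ^ 2 = 3) :
    (-4 * ((28 + 16 * S) * x ^ 4 - (32 + 16 * S) * x ^ 3 * z
      + 24 * x ^ 2 * z ^ 2 - (32 - 16 * S) * x * z ^ 3 + (28 - 16 * S) * z ^ 4)) ^ 2
      + 14 * (-4 * ((28 + 16 * S) * x ^ 4 - (32 + 16 * S) * x ^ 3 * z
      + 24 * x ^ 2 * z ^ 2 - (32 - 16 * S) * x * z ^ 3 + (28 - 16 * S) * z ^ 4))
        * (2 * x + 2 * z) ^ 4 + (2 * x + 2 * z) ^ 8 =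
    256 * (-480 - 288 * S) * x ^ 7 * z + 256 * 336 * x ^ 4 * z ^ 4 +
      256 * (288 * S - 480) * x * z ^ 7 := by
  obtain ⟨A, hA⟩ : ∃ A, A = 7 * x ^ 4 - 8 * x ^ 3 * z + 6 * x ^ 2 * z ^ 2 - 8 * x * z ^ 3
    + 7 * z ^ 4 := ⟨_, rfl⟩
  obtain ⟨T, hT⟩ : ∃ T, T = 4 * (x ^ 4 - x ^ 3 * z + x * z ^ 3 - z ^ 4) := ⟨_, rfl⟩
  obtain ⟨Q, hQ⟩ : ∃ Q, Q = x ^ 4 + 4 * x ^ 3 * z + 6 * x ^ 2 * z ^ 2 + 4 * x * z ^ 3 + z ^ 4 :=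
    ⟨_, rfl⟩
  have h1 : (28 + 16 * S) * x ^ 4 - (32 + 16 * S) * x ^ 3 * z
      + 24 * x ^ 2 * z ^ 2 - (32 - 16 * S) * x * z ^ 3 + (28 - 16 * S) * z ^ 4
      = 4 * (A + S * T) := by rw [hA, hT]; ring
  have h2 : (2 * x + 2 * z) ^ 4 = 16 * Q := by rw [hQ]; ring
  have h3 : (2 * x + 2 * z) ^ 8 = (16 * Q) ^ 2 := by rw [← h2, ← pow_mul]
  have h4 : A ^ 2 + 3 * T ^ 2 - 14 * A * Q + Q ^ 2 =
      336 * x ^ 4 * z ^ 4 - 480 * x ^ 7 * z - 480 * x * z ^ 7 := by rw [hA, hT, hQ]; ring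
  have h5 : 2 * A * T - 14 * T * Q = 288 * x * z ^ 7 - 288 * x ^ 7 * z := by
    rw [hA, hT, hQ]; ring
  rw [h1, h3, h2]
  clear hA hT hQ h1 h2 h3
  linear_combination 256 * h4 + 256 * S * h5 + 256 * T ^ 2 * hs

lemma oct_pre (i s : K) (hi : i ^ 2 = -1) (hs : s ^ 2 = 3) :
    act !![-(1 + i) * (s + 1), (1 + i) * (s - 1); 2, 2]
      (X 0 ^ 8 + 14 * X 0 ^ 4 * X 1 ^ 4 + X 1 ^ 8) =
    C (256 * (-480 - 288 * s)) * X 0 ^ 7 * X 1 + C (256 * 336) * X 0 ^ 4 * X 1 ^ 4 +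
      C (256 * (288 * s - 480)) * X 0 * X 1 ^ 7 := by
  have cn : ∀ n : ℕ, (C (n : K) : MvPolynomial (Fin 2) K) = n := fun n => map_natCast C n
  have c2 : (C (2 : K) : MvPolynomial (Fin 2) K) = 2 := map_ofNat C 2
  have c256 : (C (256 : K) : MvPolynomial (Fin 2) K) = 256 := map_ofNat C 256
  have c336 : (C (336 : K) : MvPolynomial (Fin 2) K) = 336 := map_ofNat C 336
  have c288 : (C (288 : K) : MvPolynomial (Fin 2) K) = 288 := map_ofNat C 288
  have c480 : (C (480 : K) : MvPolynomial (Fin 2) K) = 480 := map_ofNat C 480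
  have c14 : act !![-(1 + i) * (s + 1), (1 + i) * (s - 1); 2, 2]
    (14 : MvPolynomial (Fin 2) K) = 14 := map_ofNat _ 14
  have hi' : (C i : MvPolynomial (Fin 2) K) ^ 2 = -1 := by rw [← map_pow, hi]; simp
  have hs' : (C s : MvPolynomial (Fin 2) K) ^ 2 = 3 := by
    rw [← map_pow, hs]; exact map_ofNat C 3
  simp only [map_add, map_mul, map_pow, act_X, c14]
  simp only [Matrix.of_apply, Matrix.cons_val', Matrix.cons_val_zero, Matrix.cons_val_one,
    Matrix.cons_val_fin_one, map_add, map_mul, map_sub, map_neg, C_1, c2, c256, c336, c288, c480]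
  generalize (C i : MvPolynomial (Fin 2) K) = I at *
  generalize (C s : MvPolynomial (Fin 2) K) = S at *
  generalize (X 0 : MvPolynomial (Fin 2) K) = x at *
  generalize (X 1 : MvPolynomial (Fin 2) K) = z at *
  -- first the even powers of the first row
  have i4 : (1 + I) ^ 4 = -4 := by
    linear_combination (I ^ 2 + 4 * I + 5) * hi'
  have w2 : ((S + 1) * x - (S - 1) * z) ^ 2 =
      (4 + 2 * S) * x ^ 2 - 4 * x * z + (4 - 2 * S) * z ^ 2 := by
    linear_combination (x - z) ^ 2 * hs'
  have w4 : ((S + 1) * x - (S - 1) * z) ^ 4 =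
      ((4 + 2 * S) * x ^ 2 - 4 * x * z + (4 - 2 * S) * z ^ 2) ^ 2 := by
    rw [← w2]; ring
  have w4' : ((S + 1) * x - (S - 1) * z) ^ 4 = (28 + 16 * S) * x ^ 4 - (32 + 16 * S) * x ^ 3 * z
      + 24 * x ^ 2 * z ^ 2 - (32 - 16 * S) * x * z ^ 3 + (28 - 16 * S) * z ^ 4 := by
    rw [w4]
    linear_combination (4 * x ^ 4 - 8 * x ^ 2 * z ^ 2 + 4 * z ^ 4) * hs'
  have e4 : (-(1 + I) * (S + 1) * x + (1 + I) * (S - 1) * z) ^ 4 =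
      -4 * ((28 + 16 * S) * x ^ 4 - (32 + 16 * S) * x ^ 3 * z
      + 24 * x ^ 2 * z ^ 2 - (32 - 16 * S) * x * z ^ 3 + (28 - 16 * S) * z ^ 4) := by
    rw [← w4', ← i4]; ring
  have e8 : (-(1 + I) * (S + 1) * x + (1 + I) * (S - 1) * z) ^ 8 =
      (-4 * ((28 + 16 * S) * x ^ 4 - (32 + 16 * S) * x ^ 3 * z
      + 24 * x ^ 2 * z ^ 2 - (32 - 16 * S) * x * z ^ 3 + (28 - 16 * S) * z ^ 4)) ^ 2 := by
    rw [← e4, ← pow_mul]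
  rw [e8, e4]
  exact oct_alg S x z hs'

lemma oct_final [IsAlgClosed K] (hK : CharOK K) (a b : K) (ha : a ≠ 0) (hb : b ≠ 0) :
    Oct (C (-100 * a * b ^ 2) * X 0 ^ 7 * X 1 + C (70 * a * b) * X 0 ^ 4 * X 1 ^ 4 +
      C (8 * a) * X 0 * X 1 ^ 7) := by
  have h2 := hK.h2
  have h3 := hK.h3
  have h5 := hK.h5
  have h7 := hK.h7
  obtain ⟨i, hi⟩ := IsAlgClosed.exists_pow_nat_eq (-1 : K) (n := 2) (by norm_num)
  obtain ⟨s, hs⟩ := IsAlgClosed.exists_pow_nat_eq (3 : K) (n := 2) (by norm_num)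
  have hs0 : s ≠ 0 := by
    rintro rfl
    apply h3
    rw [← hs]; ring
  have hi0 : 1 + i ≠ 0 := by
    intro h
    apply h2
    linear_combination (1 - i) * h + hi
  have hA : 256 * (288 * s - 480) ≠ 0 := by
    intro h
    have : (2 : K) ^ 27 * 3 ^ 2 = 0 := by
      linear_combination (-256 * (-480 - 288 * s)) * h - 256 * 256 * 288 ^ 2 * hs
    have h' : (2 : K) ^ 27 * 3 ^ 2 ≠ 0 := by positivity
    exact h' this
  -- w = p q
  obtain ⟨w, hw⟩ := IsAlgClosed.exists_pow_nat_eq (70 * a * b / (256 * 336)) (n := 4) (by norm_num)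
  have h336 : (256 * 336 : K) ≠ 0 := by
    rw [show (256 * 336 : K) = 2 ^ 12 * 3 * 7 by norm_num]; positivity
  have h70 : (70 : K) ≠ 0 := by rw [show (70 : K) = 2 * 5 * 7 by norm_num]; positivity
  have h8 : (8 : K) ≠ 0 := by rw [show (8 : K) = 2 ^ 3 by norm_num]; positivity
  have hw' : 256 * 336 * w ^ 4 = 70 * a * b := by rw [hw, mul_div_cancel₀ _ h336]
  have hw0 : w ≠ 0 := by
    rintro rfl
    have : 70 * a * b ≠ 0 := by positivity
    apply this
    rw [← hw']; ring
  obtain ⟨q, hq⟩ := IsAlgClosed.exists_pow_nat_eq (8 * a / (256 * (288 * s - 480) * w)) (n := 6)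
    (by norm_num)
  have hAw : 256 * (288 * s - 480) * w ≠ 0 := mul_ne_zero hA hw0
  have hq' : 256 * (288 * s - 480) * w * q ^ 6 = 8 * a := by
    rw [hq, mul_div_cancel₀ _ hAw]
  have hq0 : q ≠ 0 := by
    rintro rfl
    have : 8 * a ≠ 0 := by positivity
    apply this
    rw [← hq']; ring
  obtain ⟨p, hp⟩ : ∃ p, p * q = w := ⟨w / q, by field_simp⟩
  have hp0 : p ≠ 0 := by
    rintro rfl
    apply hw0; rw [← hp]; ring
  refine ⟨!![-(1 + i) * (s + 1), (1 + i) * (s - 1); 2, 2] * !![p, 0; 0, q], ?_, ?_⟩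
  · rw [Matrix.det_mul, Matrix.det_fin_two, Matrix.det_fin_two]
    simp only [Matrix.of_apply, Matrix.cons_val', Matrix.cons_val_zero, Matrix.cons_val_one,
      Matrix.cons_val_fin_one]
    rw [isUnit_iff_ne_zero, show (-(1 + i) * (s + 1) * 2 - (1 + i) * (s - 1) * 2) * (p * q - 0 * 0)
      = - (2 * 2 * (1 + i) * s * p * q) by ring]
    rw [neg_ne_zero]
    positivity
  · rw [← act_act, oct_pre i s hi hs]
    have e1 : 256 * (288 * s - 480) * (p * q ^ 7) = 8 * a := by
      rw [← hq', ← hp]; ring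
    have e2 : 256 * 336 * (p ^ 4 * q ^ 4) = 70 * a * b := by
      rw [← hw', ← hp]; ring
    have e3 : 256 * (-480 - 288 * s) * (p ^ 7 * q) = -100 * a * b ^ 2 := by
      have h8a : 8 * a ≠ 0 := by positivity
      have h576 : (576 : K) ≠ 0 := by
        rw [show (576 : K) = 2 ^ 6 * 3 ^ 2 by norm_num]; positivity
      have h1 : (256 * 24 * 2 * (p ^ 4 * q ^ 4)) = 10 * a * b := by
        apply mul_left_cancel₀ h7
        linear_combination e2
      apply mul_left_cancel₀ h8a
      rw [← e1]
      have h3' : 256 * 48 * (p ^ 4 * q ^ 4) = 10 * a * b := by linear_combination h1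
      have : 256 * (288 * s - 480) * (p * q ^ 7) * (256 * (-480 - 288 * s) * (p ^ 7 * q))
          = -18432 * (256 * (p ^ 4 * q ^ 4)) ^ 2 := by
        linear_combination - 256 ^ 2 * 288 ^ 2 * p ^ 8 * q ^ 8 * hs
      rw [this, e1]
      linear_combination (-8) * (256 * 48 * (p ^ 4 * q ^ 4) + 10 * a * b) * h3'
    rw [← e1, ← e2, ← e3]
    simp only [map_add, map_mul, map_pow, act_X, act_C]
    simp
    ring

lemma J2_eq (hK : CharOK K) (a0 a1 a2 a3 a4 a5 a6 a7 a8 : K) :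
    shJ2 (frm 8 (v9 a0 a1 a2 a3 a4 a5 a6 a7 a8)) =
      2 * a0 * a8 - 16 * a1 * a7 + 56 * a2 * a6 - 112 * a3 * a5 + 70 * a4 ^ 2 := by
  rw [shJ2, t888 hK, constantCoeff_C]; ring

lemma J3_eq (hK : CharOK K) (a0 a1 a2 a3 a4 a5 a6 a7 a8 : K) :
    shJ3 (frm 8 (v9 a0 a1 a2 a3 a4 a5 a6 a7 a8)) =
      a0 * (2 * a4 * a8 - 8 * a5 * a7 + 6 * a6^2)
      - a1 * (8 * a3 * a8 - 24 * a4 * a7 + 16 * a5 * a6)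
      + a2 * (12 * a2 * a8 - 16 * a3 * a7 - 44 * a4 * a6 + 48 * a5^2)
      - a3 * (8 * a1 * a8 + 16 * a2 * a7 - 96 * a3 * a6 + 72 * a4 * a5)
      + a4 * (2 * a0 * a8 + 24 * a1 * a7 - 44 * a2 * a6 - 72 * a3 * a5 + 90 * a4^2)
      - a5 * (8 * a0 * a7 + 16 * a1 * a6 - 96 * a2 * a5 + 72 * a3 * a4)
      + a6 * (12 * a0 * a6 - 16 * a1 * a5 - 44 * a2 * a4 + 48 * a3^2)
      - a7 * (8 * a0 * a5 - 24 * a1 * a4 + 16 * a2 * a3)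
      + a8 * (2 * a0 * a4 - 8 * a1 * a3 + 6 * a2^2) := by
  have c2 := hK.h2
  have c5 := hK.h5
  have c7 := hK.h7
  have c8 : (8 : K) ≠ 0 := by rw [show (8 : K) = 2 ^ 3 by norm_num]; positivity
  have c28 : (28 : K) ≠ 0 := by rw [show (28 : K) = 2 * 2 * 7 by norm_num]; positivity
  have c56 : (56 : K) ≠ 0 := by rw [show (56 : K) = 2 * 2 * 2 * 7 by norm_num]; positivity
  have c70 : (70 : K) ≠ 0 := by rw [show (70 : K) = 2 * 5 * 7 by norm_num]; positivity
  have q : ∀ n x y : K, n ≠ 0 → n * x * (y / n) = x * y := by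
    intro n x y hn
    rw [mul_comm n x, mul_assoc, mul_div_cancel₀ _ hn]
  rw [shJ3, t884 hK, t888 hK, constantCoeff_C, q 8 _ _ c8, q 28 _ _ c28, q 56 _ _ c56,
    q 70 _ _ c70, q 56 _ _ c56, q 28 _ _ c28, q 8 _ _ c8]

lemma sextic_sq (a7 s : K) : (X 1 - C s * X 0) * (X 1 - C s * X 0) ∣
    frm 8 (v9 (a7 * (48 * s ^ 7)) (a7 * (-35 * s ^ 6)) (a7 * (24 * s ^ 5)) (a7 * (-15 * s ^ 4))
      (a7 * (8 * s ^ 3)) (a7 * (-3 * s ^ 2)) 0 a7 0) := by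
  refine ⟨C (8 * a7) * X 0 * (X 1 - C s * X 0) ^ 4 * (X 1 + C (6 * s) * X 0), ?_⟩
  rw [frm8_eq]
  have c35 : (C (35 : K) : MvPolynomial (Fin 2) K) = 35 := map_ofNat C 35
  have c15 : (C (15 : K) : MvPolynomial (Fin 2) K) = 15 := map_ofNat C 15
  have c3 : (C (3 : K) : MvPolynomial (Fin 2) K) = 3 := map_ofNat C 3
  simp only [map_mul, map_pow, map_neg, C_num8, C_num28, C_num56, C_num70, C_num6, C_num48,
    C_num24, c35, c15, c3, map_zero]
  ring

lemma L5 [IsAlgClosed K] (hK : CharOK K) {a0 a1 a2 a3 a4 a5 a7 k0 : K}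
    (hf : Good (frm 8 (v9 a0 a1 a2 a3 a4 a5 0 a7 0)))
    (hk : covK (frm 8 (v9 a0 a1 a2 a3 a4 a5 0 a7 0)) = frm 4 (v5 k0 0 0 0 0)) (h7 : a7 ≠ 0) :
    Oct (frm 8 (v9 a0 a1 a2 a3 a4 a5 0 a7 0)) := by
  have c2 := hK.h2
  have c3 := hK.h3
  have c5 := hK.h5
  have c4 : (4 : K) ≠ 0 := by rw [show (4 : K) = 2 ^ 2 by norm_num]; positivity
  have c6 : (6 : K) ≠ 0 := by rw [show (6 : K) = 2 * 3 by norm_num]; positivity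
  rw [t886 hK] at hk
  obtain ⟨-, e1, e2, e3, e4⟩ := frm4_inj hK hk
  rw [div_eq_zero_iff, or_iff_left c4] at e1 e3
  rw [div_eq_zero_iff, or_iff_left c6] at e2
  obtain ⟨γ, rfl⟩ : ∃ γ, a4 = a7 * (2 * γ) := ⟨a4 / (a7 * 2), by field_simp⟩
  obtain ⟨β, rfl⟩ : ∃ β, a5 = a7 * (3 * β) := ⟨a5 / (a7 * 3), by field_simp⟩
  have r3 : a3 = a7 * (-15 * β ^ 2) := by
    apply mul_left_cancel₀ (mul_ne_zero (mul_ne_zero c4 c3) h7)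
    linear_combination -e4
  have r2 : a2 = a7 * (- 6 * β * γ) := by
    apply mul_left_cancel₀ (mul_ne_zero (mul_ne_zero c4 c5) h7)
    linear_combination -e3
  subst r3 r2
  have r1 : a1 = a7 * (-765 * β ^ 3 - 50 * γ ^ 2) := by
    apply mul_left_cancel₀ (mul_ne_zero c4 h7)
    linear_combination - e2
  subst r1
  have r0 : a0 = a7 * (12 * γ * β ^ 2) := by
    apply mul_left_cancel₀ (mul_ne_zero c4 h7)
    linear_combination e1
  subst r0
  have hrel := hf.rel
  rw [J3_eq hK, J2_eq hK] at hrel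
  have hD : β = 0 ∨ γ ^ 2 + 16 * β ^ 3 = 0 := by
    have h0 : (2 ^ 13 * 3 ^ 9 * 5 ^ 3 * a7 ^ 6) * (β ^ 3 * (γ ^ 2 + 16 * β ^ 3) ^ 2) = 0 := by
      linear_combination -hrel
    have h1 : (2 ^ 13 * 3 ^ 9 * 5 ^ 3 * a7 ^ 6) ≠ 0 := by positivity
    have h2 := (mul_eq_zero.1 h0).resolve_left h1
    rcases mul_eq_zero.1 h2 with h | h
    · left; exact pow_eq_zero_iff (by norm_num) |>.1 h
    · right; exact pow_eq_zero_iff (by norm_num) |>.1 h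
  have hD0 : γ ^ 2 + 16 * β ^ 3 ≠ 0 := by
    intro hD
    obtain ⟨s, rfl, rfl⟩ : ∃ s, β = -s ^ 2 ∧ γ = 4 * s ^ 3 := by
      by_cases h5 : β = 0
      · refine ⟨0, by simp [h5], ?_⟩
        subst h5
        have : γ ^ 2 = 0 := by linear_combination hD
        simpa using this
      · obtain ⟨s, hs⟩ : ∃ s, 4 * β * s = -γ := ⟨-γ / (4 * β), by field_simp⟩
        have hs2 : β = - s ^ 2 := by
          apply mul_left_cancel₀ (mul_ne_zero (mul_ne_zero c4 c4) (pow_ne_zero 2 h5))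
          linear_combination hD + (4 * β * s - γ) * hs
        refine ⟨s, hs2, ?_⟩
        linear_combination hs - 4 * s * hs2
    have hdvd := sextic_sq a7 s
    have hu := hf.sqf (X 1 - C s * X 0) (by
      convert hdvd using 3 <;> ring)
    have hu' := hu.map (eval ![1, s])
    simp at hu'
  have h5 : β = 0 := hD.resolve_right hD0
  subst h5
  have h4 : γ ≠ 0 := by
    rintro rfl
    apply hD0; ring
  have := oct_final hK a7 (2 * γ) h7 (mul_ne_zero c2 h4)
  convert this using 1
  rw [frm8_eq]
  have z1 : 8 * (a7 * (-765 * 0 ^ 3 - 50 * γ ^ 2)) = -100 * a7 * (2 * γ) ^ 2 := by ring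
  rw [z1]
  simp [mul_assoc]

lemma sq_dvd8 (a0 a1 a2 a3 a4 a5 a6 : K) :
    X 0 * X 0 ∣ frm 8 (v9 a0 a1 a2 a3 a4 a5 a6 0 0) := by
  refine ⟨C a0 * X 0 ^ 6 + C (8 * a1) * X 0 ^ 5 * X 1 + C (28 * a2) * X 0 ^ 4 * X 1 ^ 2 +
      C (56 * a3) * X 0 ^ 3 * X 1 ^ 3 + C (70 * a4) * X 0 ^ 2 * X 1 ^ 4 +
      C (56 * a5) * X 0 * X 1 ^ 5 + C (28 * a6) * X 1 ^ 6, ?_⟩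
  rw [frm8_eq]
  simp only [mul_zero, map_zero]
  ring

lemma a7_ne {a0 a1 a2 a3 a4 a5 a6 a7 : K} (hf : Good (frm 8 (v9 a0 a1 a2 a3 a4 a5 a6 a7 0))) :
    a7 ≠ 0 := by
  rintro rfl
  have hu := (hf.sqf _ (sq_dvd8 a0 a1 a2 a3 a4 a5 a6)).map (eval ![(0 : K), 0])
  simp at hu

lemma det_shear (t : K) : (!![1, 0; t, 1] : Matrix (Fin 2) (Fin 2) K).det = 1 := by
  simp [Matrix.det_fin_two]

lemma det_swap : (!![0, 1; -1, 0] : Matrix (Fin 2) (Fin 2) K).det = 1 := by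
  simp [Matrix.det_fin_two]

lemma L4 [IsAlgClosed K] (hK : CharOK K) {a0 a1 a2 a3 a4 a5 a6 a7 k0 : K}
    (hf : Good (frm 8 (v9 a0 a1 a2 a3 a4 a5 a6 a7 0)))
    (hk : covK (frm 8 (v9 a0 a1 a2 a3 a4 a5 a6 a7 0)) = frm 4 (v5 k0 0 0 0 0)) :
    Oct (frm 8 (v9 a0 a1 a2 a3 a4 a5 a6 a7 0)) := by
  have c2 := hK.h2
  have h7 := a7_ne hf
  obtain ⟨t, ht⟩ : ∃ t, a6 + 2 * t * a7 = 0 := ⟨-a6 / (2 * a7), by field_simp; ring⟩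
  have hd := det_shear t
  apply Oct.of_act hd
  have hf' := hf.act hd
  have hk' := covK_act hd (frm 8 (v9 a0 a1 a2 a3 a4 a5 a6 a7 0))
  rw [hk, shear4] at hk'
  rw [shear8, ht] at hk' hf' ⊢
  refine L5 hK (k0 := k0) hf' (hk'.trans ?_) h7
  congr 2 <;> ring

lemma L3 [IsAlgClosed K] (hK : CharOK K) {f : MvPolynomial (Fin 2) K} {k0 : K} (hf : Good f)
    (hk : covK f = frm 4 (v5 k0 0 0 0 0)) : Oct f := by
  obtain ⟨a0, a1, a2, a3, a4, a5, a6, a7, a8, rfl⟩ := hom8 hK f hf.hom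
  by_cases h0 : k0 = 0
  · subst h0
    have hz : frm 4 (v5 (0 : K) 0 0 0 0) = 0 := by rw [frm4_eq]; simp
    obtain ⟨M, hd, he⟩ := exists_move 8 (by norm_num) (v9 a0 a1 a2 a3 a4 a5 a6 a7 a8)
    apply Oct.of_act hd
    have hf' := hf.act hd
    have hk' := covK_act hd (frm 8 (v9 a0 a1 a2 a3 a4 a5 a6 a7 a8))
    rw [hk, hz, map_zero, ← hz] at hk'
    obtain ⟨b0, b1, b2, b3, b4, b5, b6, b7, b8, e⟩ := hom8 hK _ hf'.hom
    rw [e] at he hf' hk' ⊢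
    rw [eval_frm8] at he
    subst he
    exact L4 hK hf' hk'
  · have h8 : a8 = 0 := by
      have := hf.j5
      rw [shJ5, covM, hk, t844 hK, t444 hK, constantCoeff_C] at this
      have : k0 ^ 2 * a8 = 0 := by linear_combination this
      exact (mul_eq_zero.1 this).resolve_left (pow_ne_zero 2 h0)
    subst h8
    exact L4 hK hf hk

lemma L2 [IsAlgClosed K] (hK : CharOK K) {f : MvPolynomial (Fin 2) K} {k0 k1 : K} (hf : Good f)
    (hk : covK f = frm 4 (v5 k0 k1 0 0 0)) : Oct f := by
  have c2 := hK.h2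
  obtain ⟨a0, a1, a2, a3, a4, a5, a6, a7, a8, rfl⟩ := hom8 hK f hf.hom
  by_cases h0 : k1 = 0
  · subst h0
    exact L3 hK hf hk
  · exfalso
    have hH : covH (frm 8 (v9 a0 a1 a2 a3 a4 a5 a6 a7 a8)) = frm 4 (v5 (-2 * k1 ^ 2) 0 0 0 0) := by
      rw [covH, hk, t442 hK]
      simp
    have h8 : a8 = 0 := by
      have := hf.j9
      rw [shJ9, covN, hH, t844 hK, t444 hK, constantCoeff_C] at this
      have : (2 ^ 2 * k1 ^ 4) * a8 = 0 := by linear_combination this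
      exact (mul_eq_zero.1 this).resolve_left (by positivity)
    subst h8
    apply a7_ne hf
    have := hf.j7
    rw [shJ7, covM, hH, hk, t844 hK, t444 hK, constantCoeff_C] at this
    have : (2 ^ 3 * k1 ^ 3) * a7 = 0 := by linear_combination this
    exact (mul_eq_zero.1 this).resolve_left (by positivity)

lemma J4_eq (hK : CharOK K) {f : MvPolynomial (Fin 2) K} {k0 k1 k2 k3 : K}
    (hk : covK f = frm 4 (v5 k0 k1 k2 k3 0)) : shJ4 f = 6 * k2 ^ 2 - 8 * k1 * k3 := by
  rw [shJ4, hk, t444 hK, constantCoeff_C]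
  ring

lemma L1a [IsAlgClosed K] (hK : CharOK K) {f : MvPolynomial (Fin 2) K} {k0 k1 k3 : K}
    (hf : Good f) (hk : covK f = frm 4 (v5 k0 k1 0 k3 0)) (h3 : k3 ≠ 0) : Oct f := by
  have c2 := hK.h2
  have c3 := hK.h3
  have h1 : k1 = 0 := by
    have := hf.j4
    rw [J4_eq hK hk] at this
    have : (2 ^ 3 * k3) * k1 = 0 := by linear_combination - this
    exact (mul_eq_zero.1 this).resolve_left (by positivity)
  subst h1
  have h0 : k0 = 0 := by
    have c4 : (4 : K) ≠ 0 := by rw [show (4 : K) = 2 ^ 2 by norm_num]; positivity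
    have := hf.j6
    rw [shJ6, covH, hk, t442 hK, t444 hK, constantCoeff_C] at this
    simp only [mul_zero, zero_mul, sub_zero, zero_sub, add_zero, zero_add, zero_div,
      mul_div_assoc] at this
    have e : 4 * (k0 * (k3 / 4)) = k0 * k3 := by field_simp
    have e' : 4 * k0 * (k3 / 4) = k0 * k3 := by field_simp
    rw [e'] at this
    have : (2 * 3 * k3 ^ 2) * k0 = 0 := by linear_combination - this
    exact (mul_eq_zero.1 this).resolve_left (by positivity)
  subst h0
  apply Oct.of_act det_swap
  refine L2 hK (k0 := 0) (k1 := -k3) (hf.act det_swap) ?_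
  rw [covK_act det_swap, hk, swap4]

lemma L1 [IsAlgClosed K] (hK : CharOK K) {f : MvPolynomial (Fin 2) K} {k0 k1 k2 k3 : K}
    (hf : Good f) (hk : covK f = frm 4 (v5 k0 k1 k2 k3 0)) : Oct f := by
  have c2 := hK.h2
  have c3 := hK.h3
  by_cases h3 : k3 = 0
  · subst h3
    have h2 : k2 = 0 := by
      have := hf.j4
      rw [J4_eq hK hk] at this
      have : (2 * 3) * k2 ^ 2 = 0 := by linear_combination this
      have := (mul_eq_zero.1 this).resolve_left (by positivity)
      simpa using this
    subst h2
    exact L2 hK hf hk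
  · obtain ⟨t, ht⟩ : ∃ t, k2 + 2 * t * k3 = 0 := ⟨-k2 / (2 * k3), by field_simp; ring⟩
    have hd := det_shear t
    apply Oct.of_act hd
    have hk' := covK_act hd f
    rw [hk, shear4, ht] at hk'
    exact L1a hK (hf.act hd) hk' h3

lemma forward [IsAlgClosed K] (hK : CharOK K) {f : MvPolynomial (Fin 2) K} (hf : Good f) :
    Oct f := by
  have key : ∀ g : MvPolynomial (Fin 2) K, Good g →
      ∃ k0 k1 k2 k3 k4 : K, covK g = frm 4 (v5 k0 k1 k2 k3 k4) := by
    intro g hg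
    obtain ⟨a0, a1, a2, a3, a4, a5, a6, a7, a8, rfl⟩ := hom8 hK g hg.hom
    exact ⟨_, _, _, _, _, t886 hK _ _ _ _ _ _ _ _ _⟩
  obtain ⟨k0, k1, k2, k3, k4, hk⟩ := key f hf
  obtain ⟨M, hd, he⟩ := exists_move 4 (by norm_num) (v5 k0 k1 k2 k3 k4)
  apply Oct.of_act hd
  obtain ⟨l0, l1, l2, l3, l4, hl⟩ := key _ (hf.act hd)
  have h4 : l4 = 0 := by
    rw [← eval_frm4 l0 l1 l2 l3 l4, ← hl, covK_act hd, hk, he]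
  subst h4
  exact L1 hK (hf.act hd) hl

lemma trans_zero_left (r₁ r₂ h : ℕ) (g : MvPolynomial (Fin 2) K) :
    transvectant r₁ r₂ h 0 g = 0 := by
  have hz : ∀ n, dX n (0 : MvPolynomial (Fin 2) K) = 0 := fun n => by
    have := dX_C_mul n (0 : K) 0
    simpa using this
  have hz' : ∀ n, dZ n (0 : MvPolynomial (Fin 2) K) = 0 := fun n => by
    have := dZ_C_mul n (0 : K) 0
    simpa using this
  simp [transvectant, hz, hz']

lemma trans_zero_right (r₁ r₂ h : ℕ) (g : MvPolynomial (Fin 2) K) :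
    transvectant r₁ r₂ h g 0 = 0 := by
  have hz : ∀ n, dX n (0 : MvPolynomial (Fin 2) K) = 0 := fun n => by
    have := dX_C_mul n (0 : K) 0
    simpa using this
  have hz' : ∀ n, dZ n (0 : MvPolynomial (Fin 2) K) = 0 := fun n => by
    have := dZ_C_mul n (0 : K) 0
    simpa using this
  simp [transvectant, hz, hz']

lemma trans_C_right (r₁ r₂ h : ℕ) (c : K) (f g : MvPolynomial (Fin 2) K) :
    transvectant r₁ r₂ h f (C c * g) = C c * transvectant r₁ r₂ h f g := by
  simp only [transvectant, dZ_C_mul, dX_C_mul, Finset.mul_sum]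
  apply Finset.sum_congr rfl
  intro j _
  ring

lemma oct_frm (hK : CharOK K) : (X 0 ^ 8 + 14 * X 0 ^ 4 * X 1 ^ 4 + X 1 ^ 8 :
    MvPolynomial (Fin 2) K) = frm 8 (v9 1 0 0 0 (1 / 5) 0 0 0 1) := by
  have c5 := hK.h5
  rw [frm8_eq, show (70 : K) * (1 / 5) = 14 by field_simp; norm_num, C_num14]
  simp

lemma covK_oct (hK : CharOK K) : covK (X 0 ^ 8 + 14 * X 0 ^ 4 * X 1 ^ 4 + X 1 ^ 8 :
    MvPolynomial (Fin 2) K) = 0 := by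
  have c5 := hK.h5
  have h : (2 : K) - 50 * (1 / 5) ^ 2 = 0 := by field_simp; norm_num
  rw [oct_frm hK, t886 hK, frm4_eq]
  simp only [mul_zero, zero_mul, sub_zero, add_zero, zero_div, mul_one, map_zero,
    ne_eq, OfNat.ofNat_ne_zero, not_false_eq_true, zero_pow, h]

lemma covG_oct (hK : CharOK K) : covG (X 0 ^ 8 + 14 * X 0 ^ 4 * X 1 ^ 4 + X 1 ^ 8 :
    MvPolynomial (Fin 2) K) = C (2 / 5) * (X 0 ^ 8 + 14 * X 0 ^ 4 * X 1 ^ 4 + X 1 ^ 8) := by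
  have c5 := hK.h5
  have c7 := hK.h7
  have c2 := hK.h2
  have c70 : (70 : K) ≠ 0 := by rw [show (70 : K) = 2 * 5 * 7 by norm_num]; positivity
  have e : (2 : K) + 90 * (1 / 5) ^ 2 = 2 / 5 * 14 := by field_simp; norm_num
  have e' : (2 : K) * (1 / 5) = 2 / 5 := by field_simp
  rw [oct_frm hK, t884 hK, ← oct_frm hK, frm8_eq, mul_div_cancel₀ _ c70]
  simp only [mul_zero, zero_mul, sub_zero, add_zero, zero_div, mul_one, map_zero, zero_sub,
    neg_zero, zero_add, ne_eq, OfNat.ofNat_ne_zero, not_false_eq_true, zero_pow, e, e', map_mul,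
    C_num14]
  ring

lemma J2_oct (hK : CharOK K) : transvectant 8 8 8 (X 0 ^ 8 + 14 * X 0 ^ 4 * X 1 ^ 4 + X 1 ^ 8 :
    MvPolynomial (Fin 2) K) (X 0 ^ 8 + 14 * X 0 ^ 4 * X 1 ^ 4 + X 1 ^ 8) = C (24 / 5) := by
  have c5 := hK.h5
  rw [oct_frm hK, t888 hK]
  congr 1
  field_simp
  norm_num

lemma reverse (hK : CharOK K) {f : MvPolynomial (Fin 2) K} (hf : Oct f) :
    30 * shJ3 f ^ 2 = shJ2 f ^ 3 ∧ shJ4 f = 0 ∧ shJ5 f = 0 ∧ shJ6 f = 0 ∧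
      shJ7 f = 0 ∧ shJ8 f = 0 ∧ shJ9 f = 0 ∧ shJ10 f = 0 := by
  have c5 := hK.h5
  obtain ⟨M, -, rfl⟩ := hf
  have hk : covK (act M (X 0 ^ 8 + 14 * X 0 ^ 4 * X 1 ^ 4 + X 1 ^ 8)) = 0 := by
    have := covK_oct hK
    rw [covK] at this
    rw [covK, transvectant_act, this, map_zero, mul_zero]
  have hg : covG (act M (X 0 ^ 8 + 14 * X 0 ^ 4 * X 1 ^ 4 + X 1 ^ 8)) =
      C (M.det ^ 4 * (2 / 5)) * act M (X 0 ^ 8 + 14 * X 0 ^ 4 * X 1 ^ 4 + X 1 ^ 8) := by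
    have := covG_oct hK
    rw [covG] at this
    rw [covG, transvectant_act, this, map_mul (act M) (C _), act_C, C_mul, mul_assoc (C _)]
  have h2 : shJ2 (act M (X 0 ^ 8 + 14 * X 0 ^ 4 * X 1 ^ 4 + X 1 ^ 8)) = M.det ^ 8 * (24 / 5) := by
    rw [shJ2, transvectant_act, J2_oct hK, act_C, map_mul, constantCoeff_C, constantCoeff_C]
  have h3 : shJ3 (act M (X 0 ^ 8 + 14 * X 0 ^ 4 * X 1 ^ 4 + X 1 ^ 8)) =
      (M.det ^ 4 * (2 / 5)) * (M.det ^ 8 * (24 / 5)) := by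
    rw [shJ3, hg, trans_C_right, map_mul, constantCoeff_C, ← h2, shJ2]
  refine ⟨?_, ?_, ?_, ?_, ?_, ?_, ?_, ?_⟩
  · rw [h2, h3]
    field_simp
    ring
  all_goals
    simp only [shJ4, shJ5, shJ6, shJ7, shJ8, shJ9, shJ10, covM, covN, covP, covQ, covH, hk,
      map_zero, trans_zero_left, trans_zero_right]

end Helpers

/-- Identification of the stratum `C₂ × S₄`: a squarefree binary octic `f` over an
algebraically closed field of characteristic `0` or `≥ 11` satisfies `30·J₃² = J₂³` and
`J₄ = J₅ = ⋯ = J₁₀ = 0` iff `f` is `GL₂(K)`-equivalent to `X⁸ + 14·X⁴Z⁴ + Z⁸`; equivalently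
the genus-3 curve `y² = f(x,1)` has automorphism group `C₂ × S₄` iff these relations hold,
and such a curve is `K`-isomorphic to `y² = x⁸ + 14x⁴ + 1`. -/
theorem statement15 {K : Type*} [Field K] [IsAlgClosed K]
    (hchar : ringChar K = 0 ∨ 11 ≤ ringChar K)
    (f : MvPolynomial (Fin 2) K) (hf : f.IsHomogeneous 8) (hsf : Squarefree f) :
    (30 * shJ3 f ^ 2 = shJ2 f ^ 3 ∧ shJ4 f = 0 ∧ shJ5 f = 0 ∧ shJ6 f = 0 ∧
      shJ7 f = 0 ∧ shJ8 f = 0 ∧ shJ9 f = 0 ∧ shJ10 f = 0) ↔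
    ∃ M : Matrix (Fin 2) (Fin 2) K, IsUnit M.det ∧
      f = bind₁ (fun j : Fin 2 => C (M j 0) * X 0 + C (M j 1) * X 1)
        (X 0 ^ 8 + 14 * X 0 ^ 4 * X 1 ^ 4 + X 1 ^ 8) := by
  have hK : CharOK K := CharOK.of_ringChar hchar
  constructor
  · rintro ⟨h3, h4, h5, h6, h7, -, h9, -⟩
    exact forward hK ⟨hf, hsf, h3, h4, h5, h6, h7, h9⟩
  · intro h
    exact reverse hK h
end

section
/- Let K be an algebraically closed field of characteristic 0 or at least 11, and let f ∈ K[X,Z] be a squarefree binary octic with Shioda invariants J₂,…,J₁₀. Then the conditions 6·J₄(f) = J₂(f)², 36·J₆(f) = −J₂(f)³, 420·J₈(f) = −J₂(f)⁴, 2520·J₁₀(f) = J₂(f)⁵ and J₃(f) = J₅(f) = J₇(f) = J₉(f) = 0 hold if and only if f is GL₂(K)-equivalent to X⁸ − Z⁸; equivalently, the genus-3 hyperelliptic curve y² = f(x,1) has automorphism group V₈ (the group of order 32 ⟨S,T : S⁴ = T⁸ = (ST)² = (S⁻¹T)² = 1⟩) if and only if these relations hold, and such a curve is K-isomorphic to y²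 = x⁸ − 1. -/
open MvPolynomial

namespace V8

variable {k : Type*} [Field k]

lemma pd_comm (f : MvPolynomial (Fin 2) k) :
    pderiv (0 : Fin 2) (pderiv (1 : Fin 2) f) = pderiv (1 : Fin 2) (pderiv (0 : Fin 2) f) := by
  induction f using MvPolynomial.induction_on' with
  | add p q hp hq => simp [hp, hq]
  | monomial u a =>
    simp only [pderiv_monomial]
    have : u - Finsupp.single 1 1 - Finsupp.single 0 1
        = u - Finsupp.single (0 : Fin 2) 1 - Finsupp.single (1 : Fin 2) 1 := by
      rw [tsub_right_comm]
    rw [this]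
    congr 1
    simp; ring

lemma dX_succ (n : ℕ) (p : MvPolynomial (Fin 2) k) : dX (n + 1) p = dX n (pderiv 0 p) := rfl
lemma dZ_succ (n : ℕ) (p : MvPolynomial (Fin 2) k) : dZ (n + 1) p = dZ n (pderiv 1 p) := rfl

lemma dZ_pd0 (n : ℕ) (p : MvPolynomial (Fin 2) k) :
    dZ n (pderiv 0 p) = pderiv 0 (dZ n p) := by
  induction n generalizing p with
  | zero => rfl
  | succ n ih => rw [dZ_succ, dZ_succ, ← pd_comm, ih]

/-- The (unnormalised) transvectant, defined by recursion. -/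
noncomputable def Bil : ℕ → MvPolynomial (Fin 2) k → MvPolynomial (Fin 2) k →
    MvPolynomial (Fin 2) k
  | 0, f, g => f * g
  | h + 1, f, g => Bil h (pderiv 0 f) (pderiv 1 g) - Bil h (pderiv 1 f) (pderiv 0 g)

lemma sum_eq_Bil (h : ℕ) (f g : MvPolynomial (Fin 2) k) :
    ∑ j ∈ Finset.range (h + 1),
      C ((-1 : k) ^ j * (h.choose j : k)) * (dX (h - j) (dZ j f) * dX j (dZ (h - j) g))
      = Bil h f g := by
  induction h generalizing f g with
  | zero => simp [Bil, dX, dZ]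
  | succ h ih =>
    rw [Bil, ← ih, ← ih]
    set T : ℕ → MvPolynomial (Fin 2) k :=
      fun j => dX (h + 1 - j) (dZ j f) * dX j (dZ (h + 1 - j) g) with hT
    have e1 : ∑ j ∈ Finset.range (h + 1), C ((-1 : k) ^ j * (h.choose j : k)) *
        (dX (h - j) (dZ j (pderiv 0 f)) * dX j (dZ (h - j) (pderiv 1 g)))
        = ∑ j ∈ Finset.range (h + 1), C ((-1 : k) ^ j * (h.choose j : k)) * T j := by
      refine Finset.sum_congr rfl fun j hj => ?_
      have : h + 1 - j = (h - j) + 1 := by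
        have := Finset.mem_range.mp hj; omega
      simp only [hT]
      rw [this, dZ_pd0, ← dX_succ, ← dZ_succ]
    have e2 : ∑ j ∈ Finset.range (h + 1), C ((-1 : k) ^ j * (h.choose j : k)) *
        (dX (h - j) (dZ j (pderiv 1 f)) * dX j (dZ (h - j) (pderiv 0 g)))
        = ∑ j ∈ Finset.range (h + 1), C ((-1 : k) ^ j * (h.choose j : k)) * T (j + 1) := by
      refine Finset.sum_congr rfl fun j hj => ?_
      simp only [hT]
      rw [dZ_pd0, ← dX_succ, ← dZ_succ, Nat.add_sub_add_right]
    rw [e1, e2, Finset.sum_range_succ']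
    have e3 : ∑ j ∈ Finset.range (h + 1), C ((-1 : k) ^ j * (h.choose j : k)) * T j
       = ∑ j ∈ Finset.range (h + 1), C ((-1 : k) ^ (j+1) * (h.choose (j+1) : k)) * T (j+1)
         + T 0 := by
      rw [Finset.sum_range_succ', Finset.sum_range_succ _ h]
      simp
    rw [e3, add_sub_right_comm, ← Finset.sum_sub_distrib]
    congr 1
    · refine Finset.sum_congr rfl fun j hj => ?_
      rw [← sub_mul, ← C_sub]
      congr 2
      rw [Nat.choose_succ_succ]; push_cast; ring
    · simp [hT]

lemma transvectant_eq (r₁ r₂ h : ℕ) (f g : MvPolynomial (Fin 2) k) :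
    transvectant r₁ r₂ h f g = C ((((r₁ - h).factorial * (r₂ - h).factorial : ℕ) : k) /
      (((r₁.factorial * r₂.factorial : ℕ)) : k)) * Bil h f g := by
  rw [transvectant, sum_eq_Bil]

lemma Bil_add_left (h : ℕ) (f f' g : MvPolynomial (Fin 2) k) :
    Bil h (f + f') g = Bil h f g + Bil h f' g := by
  induction h generalizing f f' g with
  | zero => simp [Bil, add_mul]
  | succ h ih => simp only [Bil, map_add, ih]; ring

lemma Bil_add_right (h : ℕ) (f g g' : MvPolynomial (Fin 2) k) :
    Bil h f (g + g') = Bil h f g + Bil h f g' := by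
  induction h generalizing f g g' with
  | zero => simp [Bil, mul_add]
  | succ h ih => simp only [Bil, map_add, ih]; ring

lemma Bil_smul_left (h : ℕ) (c : k) (f g : MvPolynomial (Fin 2) k) :
    Bil h (C c * f) g = C c * Bil h f g := by
  induction h generalizing f g with
  | zero => simp [Bil, mul_assoc]
  | succ h ih => simp only [Bil, pderiv_C_mul, ih]; ring

lemma Bil_smul_right (h : ℕ) (c : k) (f g : MvPolynomial (Fin 2) k) :
    Bil h f (C c * g) = C c * Bil h f g := by
  induction h generalizing f g with
  | zero => simp [Bil]; ring
  | succ h ih => simp only [Bil, pderiv_C_mul, ih]; ring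

/-- Linear substitution. -/
noncomputable def sub (M : Matrix (Fin 2) (Fin 2) k) :
    MvPolynomial (Fin 2) k →ₐ[k] MvPolynomial (Fin 2) k :=
  bind₁ (fun j : Fin 2 => C (M j 0) * X 0 + C (M j 1) * X 1)

lemma sub_X (M : Matrix (Fin 2) (Fin 2) k) (j : Fin 2) :
    sub M (X j) = C (M j 0) * X 0 + C (M j 1) * X 1 := by simp [sub]

lemma sub_C (M : Matrix (Fin 2) (Fin 2) k) (c : k) : sub M (C c) = C c := by simp [sub]

lemma pd_sub (M : Matrix (Fin 2) (Fin 2) k) (i : Fin 2) (f : MvPolynomial (Fin 2) k) :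
    pderiv i (sub M f) = C (M 0 i) * sub M (pderiv 0 f) + C (M 1 i) * sub M (pderiv 1 f) := by
  induction f using MvPolynomial.induction_on with
  | C a => simp [sub_C]
  | add p q hp hq => simp only [map_add, hp, hq]; ring
  | mul_X p j hp =>
    simp only [map_mul, Derivation.leibniz, hp, sub_X, map_add, smul_eq_mul, pderiv_C, pderiv_X]
    fin_cases j <;> fin_cases i <;> simp [sub_X] <;> ring

lemma Bil_sub (h : ℕ) (M : Matrix (Fin 2) (Fin 2) k) (f g : MvPolynomial (Fin 2) k) :
    Bil h (sub M f) (sub M g) = C (M.det ^ h) * sub M (Bil h f g) := by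
  induction h generalizing f g with
  | zero => simp [Bil]
  | succ h ih =>
    simp only [Bil, pd_sub, Bil_add_left, Bil_add_right, Bil_smul_left, Bil_smul_right, ih,
      map_sub, Matrix.det_fin_two, pow_succ, C_mul, C_sub]
    ring

lemma tv_sub (r₁ r₂ h : ℕ) (M : Matrix (Fin 2) (Fin 2) k) (f g : MvPolynomial (Fin 2) k) :
    transvectant r₁ r₂ h (sub M f) (sub M g) = C (M.det ^ h) * sub M (transvectant r₁ r₂ h f g) := by
  simp only [transvectant_eq, Bil_sub, map_mul, sub_C]; ring

lemma tv_smul (r₁ r₂ h : ℕ) (c d : k) (f g : MvPolynomial (Fin 2) k) :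
    transvectant r₁ r₂ h (C c * f) (C d * g) = C (c * d) * (transvectant r₁ r₂ h f g) := by
  simp only [transvectant_eq, Bil_smul_left, Bil_smul_right, map_mul]; ring

lemma tv_smul_left (r₁ r₂ h : ℕ) (c : k) (f g : MvPolynomial (Fin 2) k) :
    transvectant r₁ r₂ h (C c * f) g = C c * (transvectant r₁ r₂ h f g) := by
  simp only [transvectant_eq, Bil_smul_left]; ring

lemma tv_smul_right (r₁ r₂ h : ℕ) (d : k) (f g : MvPolynomial (Fin 2) k) :
    transvectant r₁ r₂ h f (C d * g) = C d * (transvectant r₁ r₂ h f g) := by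
  simp only [transvectant_eq, Bil_smul_right]; ring

lemma cc_sub (M : Matrix (Fin 2) (Fin 2) k) (p : MvPolynomial (Fin 2) k) :
    constantCoeff (sub M p) = constantCoeff p := by
  induction p using MvPolynomial.induction_on with
  | C a => simp [sub_C]
  | add p q hp hq => simp only [map_add, hp, hq]
  | mul_X p j hp => simp [sub_X]

lemma sub_sub (M N : Matrix (Fin 2) (Fin 2) k) (p : MvPolynomial (Fin 2) k) :
    sub N (sub M p) = sub (M * N) p := by
  induction p using MvPolynomial.induction_on with
  | C a => simp [sub_C]
  | add p q hp hq => simp only [map_add, hp, hq]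
  | mul_X p j hp =>
    simp only [map_mul, map_add, hp, sub_X, sub_C, Matrix.mul_apply, Fin.sum_univ_two, C_add, C_mul]
    ring

lemma sub_one (p : MvPolynomial (Fin 2) k) : sub 1 p = p := by
  induction p using MvPolynomial.induction_on with
  | C a => simp [sub_C]
  | add p q hp hq => simp only [map_add, hp, hq]
  | mul_X p j hp =>
    rw [map_mul, hp, sub_X]
    congr 1
    fin_cases j
    · change C ((1 : Matrix (Fin 2) (Fin 2) k) 0 0) * X 0 + C ((1 : Matrix (Fin 2) (Fin 2) k) 0 1) * X 1 = X 0
      simp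
    · change C ((1 : Matrix (Fin 2) (Fin 2) k) 1 0) * X 0 + C ((1 : Matrix (Fin 2) (Fin 2) k) 1 1) * X 1 = X 1
      simp

section cov
variable (M : Matrix (Fin 2) (Fin 2) k) (f : MvPolynomial (Fin 2) k)

lemma covG_sub : covG (sub M f) = C (M.det ^ 4) * sub M (covG f) := tv_sub ..
lemma covK_sub : covK (sub M f) = C (M.det ^ 6) * sub M (covK f) := tv_sub ..
lemma covH_sub : covH (sub M f) = C (M.det ^ 14) * sub M (covH f) := by
  rw [covH, covK_sub, tv_smul, tv_sub, ← mul_assoc, ← C_mul, covH]; ring_nf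
lemma covM_sub : covM (sub M f) = C (M.det ^ 10) * sub M (covM f) := by
  rw [covM, covK_sub, tv_smul_right, tv_sub, ← mul_assoc, ← C_mul, covM]; ring_nf
lemma covN_sub : covN (sub M f) = C (M.det ^ 18) * sub M (covN f) := by
  rw [covN, covH_sub, tv_smul_right, tv_sub, ← mul_assoc, ← C_mul, covN]; ring_nf
lemma covP_sub : covP (sub M f) = C (M.det ^ 14) * sub M (covP f) := by
  rw [covP, covK_sub, covG_sub, tv_smul, tv_sub, ← mul_assoc, ← C_mul, covP]; ring_nf
lemma covQ_sub : covQ (sub M f) = C (M.det ^ 22) * sub M (covQ f) := by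
  rw [covQ, covH_sub, covG_sub, tv_smul, tv_sub, ← mul_assoc, ← C_mul, covQ]; ring_nf

lemma J2_sub : shJ2 (sub M f) = M.det ^ 8 * shJ2 f := by
  rw [shJ2, tv_sub, map_mul, cc_sub, constantCoeff_C, shJ2]
lemma J3_sub : shJ3 (sub M f) = M.det ^ 12 * shJ3 f := by
  rw [shJ3, covG_sub, tv_smul_right, tv_sub]
  simp only [map_mul, cc_sub, constantCoeff_C, shJ3]; ring
lemma J4_sub : shJ4 (sub M f) = M.det ^ 16 * shJ4 f := by
  rw [shJ4, covK_sub, tv_smul, tv_sub]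
  simp only [map_mul, cc_sub, constantCoeff_C, shJ4]; ring
lemma J5_sub : shJ5 (sub M f) = M.det ^ 20 * shJ5 f := by
  rw [shJ5, covK_sub, covM_sub, tv_smul, tv_sub]
  simp only [map_mul, cc_sub, constantCoeff_C, shJ5]; ring
lemma J6_sub : shJ6 (sub M f) = M.det ^ 24 * shJ6 f := by
  rw [shJ6, covK_sub, covH_sub, tv_smul, tv_sub]
  simp only [map_mul, cc_sub, constantCoeff_C, shJ6]; ring
lemma J7_sub : shJ7 (sub M f) = M.det ^ 28 * shJ7 f := by
  rw [shJ7, covM_sub, covH_sub, tv_smul, tv_sub]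
  simp only [map_mul, cc_sub, constantCoeff_C, shJ7]; ring
lemma J8_sub : shJ8 (sub M f) = M.det ^ 32 * shJ8 f := by
  rw [shJ8, covP_sub, covH_sub, tv_smul, tv_sub]
  simp only [map_mul, cc_sub, constantCoeff_C, shJ8]; ring
lemma J9_sub : shJ9 (sub M f) = M.det ^ 36 * shJ9 f := by
  rw [shJ9, covN_sub, covH_sub, tv_smul, tv_sub]
  simp only [map_mul, cc_sub, constantCoeff_C, shJ9]; ring
lemma J10_sub : shJ10 (sub M f) = M.det ^ 40 * shJ10 f := by
  rw [shJ10, covQ_sub, covH_sub, tv_smul, tv_sub]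
  simp only [map_mul, cc_sub, constantCoeff_C, shJ10]; ring
end cov

/-- The relations. -/
def Rel (f : MvPolynomial (Fin 2) k) : Prop :=
  6 * shJ4 f = shJ2 f ^ 2 ∧ 36 * shJ6 f = -(shJ2 f ^ 3) ∧
      420 * shJ8 f = -(shJ2 f ^ 4) ∧ 2520 * shJ10 f = shJ2 f ^ 5 ∧
      shJ3 f = 0 ∧ shJ5 f = 0 ∧ shJ7 f = 0 ∧ shJ9 f = 0

lemma Rel_sub (M : Matrix (Fin 2) (Fin 2) k) (f : MvPolynomial (Fin 2) k) (h : Rel f) :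
    Rel (sub M f) := by
  obtain ⟨h4, h6, h8, h10, h3, h5, h7, h9⟩ := h
  simp only [Rel, J2_sub, J3_sub, J4_sub, J5_sub, J6_sub, J7_sub, J8_sub, J9_sub, J10_sub,
    h3, h5, h7, h9, mul_zero, and_self, and_true]
  refine ⟨?_, ?_, ?_, ?_⟩
  · linear_combination M.det ^ 16 * h4
  · linear_combination M.det ^ 24 * h6
  · linear_combination M.det ^ 32 * h8
  · linear_combination M.det ^ 40 * h10

/-- The good forms. -/
def Good (f : MvPolynomial (Fin 2) k) : Prop := f.IsHomogeneous 8 ∧ Squarefree f ∧ Rel f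

/-- The conclusion. -/
def Concl (f : MvPolynomial (Fin 2) k) : Prop :=
  ∃ M : Matrix (Fin 2) (Fin 2) k, IsUnit M.det ∧ f = sub M (X 0 ^ 8 - X 1 ^ 8)

lemma sub_hom {n : ℕ} (M : Matrix (Fin 2) (Fin 2) k) (f : MvPolynomial (Fin 2) k)
    (h : f.IsHomogeneous n) : (sub M f).IsHomogeneous n := by
  have h1 : ∀ i : Fin 2, (C (M i 0) * X 0 + C (M i 1) * X 1 : MvPolynomial (Fin 2) k).IsHomogeneous 1 := by
    intro i
    refine IsHomogeneous.add ?_ ?_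
    · simpa using (isHomogeneous_C (Fin 2) (M i 0)).mul (isHomogeneous_X k (0 : Fin 2))
    · simpa using (isHomogeneous_C (Fin 2) (M i 1)).mul (isHomogeneous_X k (1 : Fin 2))
  have := h.aeval _ h1
  rw [one_mul] at this
  exact this

lemma sub_inv (M : Matrix (Fin 2) (Fin 2) k) (h : M.det = 1) (f : MvPolynomial (Fin 2) k) :
    sub M⁻¹ (sub M f) = f := by
  rw [sub_sub, Matrix.mul_nonsing_inv _ (by simp [h]), sub_one]

lemma sub_inv' (M : Matrix (Fin 2) (Fin 2) k) (h : M.det = 1) (f : MvPolynomial (Fin 2) k) :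
    sub M (sub M⁻¹ f) = f := by
  rw [sub_sub, Matrix.nonsing_inv_mul _ (by simp [h]), sub_one]

lemma sub_sqf (M : Matrix (Fin 2) (Fin 2) k) (h : M.det = 1) (f : MvPolynomial (Fin 2) k)
    (hs : Squarefree f) : Squarefree (sub M f) := by
  intro x hx
  have h1 := hs (sub M⁻¹ x) (by
    have := map_dvd (sub M⁻¹) hx
    rwa [map_mul, sub_inv M h] at this)
  have := h1.map (sub M)
  rwa [sub_inv' M h] at this

lemma Good_sub (M : Matrix (Fin 2) (Fin 2) k) (h : M.det = 1) (f : MvPolynomial (Fin 2) k)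
    (hs : Good f) : Good (sub M f) :=
  ⟨sub_hom M f hs.1, sub_sqf M h f hs.2.1, Rel_sub M f hs.2.2⟩

lemma Concl_of_sub (M : Matrix (Fin 2) (Fin 2) k) (h : M.det = 1) (f : MvPolynomial (Fin 2) k)
    (hs : Concl (sub M f)) : Concl f := by
  obtain ⟨N, hN, e⟩ := hs
  refine ⟨N * M⁻¹, ?_, ?_⟩
  · simp [Matrix.det_mul, Matrix.det_nonsing_inv, h, isUnit_iff_ne_zero.mp hN]
  · rw [← sub_sub, ← e, sub_inv M h]

/-- Binary form of degree `n` with binomially normalised coefficients. -/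
noncomputable def form (n : ℕ) (a : ℕ → k) : MvPolynomial (Fin 2) k :=
  ∑ i ∈ Finset.range (n + 1), C ((n.choose i : k) * a i) * (X 0 ^ (n - i) * X 1 ^ i)

lemma coeff_form (n : ℕ) (a : ℕ → k) (m : Fin 2 →₀ ℕ) :
    coeff m (form n a) = if m 0 + m 1 = n then (n.choose (m 1) : k) * a (m 1) else 0 := by
  have key : ∀ i, coeff m (C ((n.choose i : k) * a i) * (X 0 ^ (n - i) * X 1 ^ i) :
      MvPolynomial (Fin 2) k) = if n - i = m 0 ∧ i = m 1 then (n.choose i : k) * a i else 0 := by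
    intro i
    rw [coeff_C_mul, X_pow_eq_monomial, X_pow_eq_monomial, monomial_mul, coeff_monomial]
    have : (Finsupp.single (0 : Fin 2) (n - i) + Finsupp.single 1 i = m) ↔
        (n - i = m 0 ∧ i = m 1) := by
      rw [DFunLike.ext_iff, Fin.forall_fin_two]; simp
    rw [if_congr this rfl rfl, mul_ite]; simp only [mul_one, mul_zero]
  rw [form, coeff_sum, Finset.sum_congr rfl (fun i _ => key i)]
  split_ifs with h
  · rw [Finset.sum_eq_single (m 1)]
    · rw [if_pos]; omega
    · intro b _ hb; rw [if_neg]; tauto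
    · intro hb; simp at hb; omega
  · refine Finset.sum_eq_zero fun i hi => if_neg ?_
    simp at hi; omega

lemma exists_form (n : ℕ) (hn : (n.factorial : k) ≠ 0) (f : MvPolynomial (Fin 2) k)
    (hf : f.IsHomogeneous n) : ∃ a, f = form n a := by
  refine ⟨fun i => coeff (Finsupp.single 0 (n - i) + Finsupp.single 1 i) f / (n.choose i : k), ?_⟩
  ext m
  rw [coeff_form]
  split_ifs with h
  · have : Finsupp.single 0 (n - m 1) + Finsupp.single 1 (m 1) = m := by
      rw [DFunLike.ext_iff, Fin.forall_fin_two]; simp; omega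
    rw [this]
    have hc : (n.choose (m 1) : k) ≠ 0 := by
      intro h0
      apply hn
      rw [← Nat.choose_mul_factorial_mul_factorial (show m 1 ≤ n by omega)]
      push_cast; rw [h0]; ring
    field_simp
  · by_contra h0
    have := hf h0
    apply h
    rw [← this]
    simp [Finsupp.weight_apply, Finsupp.sum_fintype]

lemma form_inj (n : ℕ) (hn : (n.factorial : k) ≠ 0) (a b : ℕ → k) (h : form n a = form n b)
    (i : ℕ) (hi : i ≤ n) : a i = b i := by
  have := congrArg (coeff (Finsupp.single 0 (n - i) + Finsupp.single 1 i)) h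
  rw [coeff_form, coeff_form] at this
  have hc : (n.choose i : k) ≠ 0 := by
    intro h0
    apply hn
    rw [← Nat.choose_mul_factorial_mul_factorial hi]
    push_cast; rw [h0]; ring
  simpa [hi, hc] using this

lemma pd0_form (n : ℕ) (a : ℕ → k) :
    pderiv 0 (form (n + 1) a) = C ((n + 1 : ℕ) : k) * form n a := by
  rw [form, form, map_sum, Finset.sum_range_succ, Finset.mul_sum]
  have : pderiv 0 (C (((n + 1).choose (n + 1) : k) * a (n + 1)) *
    (X (0 : Fin 2) ^ (n + 1 - (n + 1)) * X 1 ^ (n + 1)) : MvPolynomial (Fin 2) k) = 0 := by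
    simp [pderiv_pow, pderiv_X_of_ne (show (1 : Fin 2) ≠ 0 by decide)]
  rw [this, add_zero]
  refine Finset.sum_congr rfl fun i hi => ?_
  have hi' : i ≤ n := by simp at hi; omega
  have e := Nat.choose_mul_succ_eq n i
  rw [show n + 1 - i = (n - i) + 1 by omega] at e ⊢
  have e' : (n.choose i : k) * ((n + 1 : ℕ) : k) = ((n + 1).choose i : k) * ((n - i + 1 : ℕ) : k) := by
    rw [← Nat.cast_mul, ← Nat.cast_mul, e]
  have e2 : (C ((n + 1).choose i : k) * C ((n - i + 1 : ℕ) : k) : MvPolynomial (Fin 2) k)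
    = C (n.choose i : k) * C ((n + 1 : ℕ) : k) := by rw [← C_mul, ← e', C_mul]
  simp only [pderiv_C, pderiv_mul, pderiv_pow, pderiv_X_self,
    pderiv_X_of_ne (show (1 : Fin 2) ≠ 0 by decide), Nat.add_sub_cancel, C_mul,
    ← C_eq_coe_nat (σ := Fin 2) (R := k)] at e2 ⊢
  linear_combination (C (a i) * X 0 ^ (n - i) * X 1 ^ i) * e2

lemma pd1_form (n : ℕ) (a : ℕ → k) :
    pderiv 1 (form (n + 1) a) = C ((n + 1 : ℕ) : k) * form n (fun i => a (i + 1)) := by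
  rw [form, form, map_sum, Finset.sum_range_succ', Finset.mul_sum]
  have : pderiv 1 (C (((n + 1).choose 0 : k) * a 0) *
    (X (0 : Fin 2) ^ (n + 1 - 0) * X 1 ^ 0) : MvPolynomial (Fin 2) k) = 0 := by
    simp [pderiv_pow, pderiv_X_of_ne (show (0 : Fin 2) ≠ 1 by decide)]
  rw [this, add_zero]
  refine Finset.sum_congr rfl fun i hi => ?_
  have e := Nat.add_one_mul_choose_eq n i
  have e' : ((n + 1 : ℕ) : k) * (n.choose i : k) = ((n + 1).choose (i + 1) : k) * ((i + 1 : ℕ) : k) := by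
    rw [← Nat.cast_mul, ← Nat.cast_mul, e]
  have e2 : (C ((n + 1).choose (i + 1) : k) * C ((i + 1 : ℕ) : k) : MvPolynomial (Fin 2) k)
    = C (n.choose i : k) * C ((n + 1 : ℕ) : k) := by rw [← C_mul, ← e', C_mul, mul_comm]
  rw [show n + 1 - (i + 1) = n - i by omega]
  simp only [pderiv_C, pderiv_mul, pderiv_pow, pderiv_X_self,
    pderiv_X_of_ne (show (0 : Fin 2) ≠ 1 by decide), Nat.add_sub_cancel, C_mul,
    ← C_eq_coe_nat (σ := Fin 2) (R := k)] at e2 ⊢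
  linear_combination (C (a (i + 1)) * X 0 ^ (n - i) * X 1 ^ i) * e2

lemma pd_iter_smul (i : Fin 2) (n : ℕ) (c : k) (p : MvPolynomial (Fin 2) k) :
    (fun q => pderiv i q)^[n] (C c * p) = C c * (fun q => pderiv i q)^[n] p := by
  induction n generalizing p with
  | zero => rfl
  | succ n ih => simp only [Function.iterate_succ_apply, pderiv_C_mul, ih]

lemma dX_form (i m : ℕ) (a : ℕ → k) :
    C (m.factorial : k) * dX i (form (m + i) a) = C ((m + i).factorial : k) * form m a := by
  induction i with
  | zero => simp [dX]
  | succ i ih =>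
    rw [dX_succ, ← add_assoc, pd0_form, dX, pd_iter_smul, mul_left_comm, ← dX, ih, ← mul_assoc,
      ← C_mul, Nat.factorial_succ (m + i)]
    push_cast; rfl

lemma dZ_form (i m : ℕ) (a : ℕ → k) :
    C (m.factorial : k) * dZ i (form (m + i) a) = C ((m + i).factorial : k) *
      form m (fun l => a (l + i)) := by
  induction i generalizing a with
  | zero => simp [dZ]
  | succ i ih =>
    rw [dZ_succ, ← add_assoc, pd1_form, dZ, pd_iter_smul, mul_left_comm, ← dZ, ih, ← mul_assoc,
      ← C_mul, Nat.factorial_succ (m + i)]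
    push_cast
    simp only [add_assoc, add_comm 1]

lemma fac_ne {n m : ℕ} (h : m ≤ n) (hn : (n.factorial : k) ≠ 0) : (m.factorial : k) ≠ 0 := by
  obtain ⟨c, hc⟩ := Nat.factorial_dvd_factorial h
  intro h0; apply hn; rw [hc]; push_cast; rw [h0, zero_mul]

lemma dXdZ_form (i j m : ℕ) (a : ℕ → k) (h : ((m + i + j).factorial : k) ≠ 0) :
    dX i (dZ j (form (m + i + j) a)) = C (((m + i + j).factorial : k) / (m.factorial : k)) *
      form m (fun l => a (l + j)) := by
  have h1 : ((m + i).factorial : k) ≠ 0 := fac_ne (by omega) h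
  have h2 : (m.factorial : k) ≠ 0 := fac_ne (by omega) h
  have e1 := dZ_form j (m + i) a
  have e2 := dX_form i m (fun l => a (l + j))
  have c1 : (C ((m + i).factorial : k) : MvPolynomial (Fin 2) k) ≠ 0 := C_ne_zero.mpr h1
  have c2 : (C (m.factorial : k) : MvPolynomial (Fin 2) k) ≠ 0 := C_ne_zero.mpr h2
  apply mul_left_cancel₀ c1
  apply mul_left_cancel₀ c2
  have e3 := congrArg (dX i) e1
  simp only [dX, pd_iter_smul] at e3
  rw [← dX, ← dX] at e3
  rw [e3, mul_left_comm, e2]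
  simp only [← mul_assoc, ← C_mul]
  congr 2
  field_simp

lemma tv_form (r s h : ℕ) (a b : ℕ → k) (h1 : ((r + h).factorial : k) ≠ 0)
    (h2 : ((s + h).factorial : k) ≠ 0) :
    transvectant (r + h) (s + h) h (form (r + h) a) (form (s + h) b) =
    ∑ j ∈ Finset.range (h + 1), C ((-1 : k) ^ j * (h.choose j : k)) *
      (form r (fun l => a (l + j)) * form s (fun l => b (l + (h - j)))) := by
  rw [transvectant, Finset.mul_sum]
  refine Finset.sum_congr rfl fun j hj => ?_
  have hj' : j ≤ h := by simp at hj; omega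
  have e1 : dX (h - j) (dZ j (form (r + h) a)) = C (((r + h).factorial : k) / (r.factorial : k)) *
      form r (fun l => a (l + j)) := by
    have := dXdZ_form (h - j) j r a
    rw [show r + (h - j) + j = r + h by omega] at this
    exact this h1
  have e2 : dX j (dZ (h - j) (form (s + h) b)) = C (((s + h).factorial : k) / (s.factorial : k)) *
      form s (fun l => b (l + (h - j))) := by
    have := dXdZ_form j (h - j) s b
    rw [show s + j + (h - j) = s + h by omega] at this
    exact this h2
  have hr : (r.factorial : k) ≠ 0 := fac_ne (by omega) h1
  have hs : (s.factorial : k) ≠ 0 := fac_ne (by omega) h2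
  rw [e1, e2, Nat.add_sub_cancel, Nat.add_sub_cancel]
  have : (C (((r.factorial * s.factorial : ℕ) : k) / (((r + h).factorial * (s + h).factorial : ℕ) : k))
    * (C (((r + h).factorial : k) / (r.factorial : k)) * C (((s + h).factorial : k) / (s.factorial : k)))
     : MvPolynomial (Fin 2) k) = 1 := by
    rw [← C_mul, ← C_mul, ← C_1]
    congr 1
    push_cast
    field_simp
  linear_combination (C ((-1 : k) ^ j * (h.choose j : k)) *
      (form r (fun l => a (l + j)) * form s (fun l => b (l + (h - j))))) * this

lemma form_congr {n : ℕ} {a b : ℕ → k} (h : ∀ i, i ≤ n → a i = b i) : form n a = form n b := by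
  refine Finset.sum_congr rfl fun i hi => ?_
  rw [h i (by simp at hi; omega)]

lemma form_sum (n m : ℕ) (c : ℕ → k) (a : ℕ → ℕ → k) :
    ∑ j ∈ Finset.range m, C (c j) * form n (a j) =
      form n (fun l => ∑ j ∈ Finset.range m, c j * a j l) := by
  simp only [form, Finset.mul_sum, map_sum, Finset.sum_mul]
  rw [Finset.sum_comm]
  refine Finset.sum_congr rfl fun i _ => Finset.sum_congr rfl fun j _ => ?_
  simp only [C_mul]; ring

/-- Coefficients of a product of two quadratic forms. -/
def p22 (a b : ℕ → k) : ℕ → k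
  | 0 => a 0 * b 0
  | 1 => (a 0 * b 1 + a 1 * b 0) / 2
  | 2 => (a 0 * b 2 + 4 * a 1 * b 1 + a 2 * b 0) / 6
  | 3 => (a 1 * b 2 + a 2 * b 1) / 2
  | _ => a 2 * b 2

/-- Coefficients of a product of two quartic forms. -/
def p44 (a b : ℕ → k) : ℕ → k
  | 0 => a 0 * b 0
  | 1 => (a 0 * b 1 + a 1 * b 0) / 2
  | 2 => (6 * a 0 * b 2 + 16 * a 1 * b 1 + 6 * a 2 * b 0) / 28
  | 3 => (4 * a 0 * b 3 + 24 * a 1 * b 2 + 24 * a 2 * b 1 + 4 * a 3 * b 0) / 56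
  | 4 => (a 0 * b 4 + 16 * a 1 * b 3 + 36 * a 2 * b 2 + 16 * a 3 * b 1 + a 4 * b 0) / 70
  | 5 => (4 * a 1 * b 4 + 24 * a 2 * b 3 + 24 * a 3 * b 2 + 4 * a 4 * b 1) / 56
  | 6 => (6 * a 2 * b 4 + 16 * a 3 * b 3 + 6 * a 4 * b 2) / 28
  | 7 => (a 3 * b 4 + a 4 * b 3) / 2
  | _ => a 4 * b 4

lemma C_num2 : (C (2 : k) : MvPolynomial (Fin 2) k) = 2 := map_ofNat C 2
lemma C_num3 : (C (3 : k) : MvPolynomial (Fin 2) k) = 3 := map_ofNat C 3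
lemma C_num4 : (C (4 : k) : MvPolynomial (Fin 2) k) = 4 := map_ofNat C 4
lemma C_num6 : (C (6 : k) : MvPolynomial (Fin 2) k) = 6 := map_ofNat C 6
lemma C_num8 : (C (8 : k) : MvPolynomial (Fin 2) k) = 8 := map_ofNat C 8
lemma C_num16 : (C (16 : k) : MvPolynomial (Fin 2) k) = 16 := map_ofNat C 16
lemma C_num24 : (C (24 : k) : MvPolynomial (Fin 2) k) = 24 := map_ofNat C 24
lemma C_num28 : (C (28 : k) : MvPolynomial (Fin 2) k) = 28 := map_ofNat C 28
lemma C_num36 : (C (36 : k) : MvPolynomial (Fin 2) k) = 36 := map_ofNat C 36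
lemma C_num56 : (C (56 : k) : MvPolynomial (Fin 2) k) = 56 := map_ofNat C 56
lemma C_num70 : (C (70 : k) : MvPolynomial (Fin 2) k) = 70 := map_ofNat C 70
lemma cc_num4 : constantCoeff (4 : MvPolynomial (Fin 2) k) = 4 := map_ofNat constantCoeff 4
lemma cc_num6 : constantCoeff (6 : MvPolynomial (Fin 2) k) = 6 := map_ofNat constantCoeff 6
lemma cc_num8 : constantCoeff (8 : MvPolynomial (Fin 2) k) = 8 := map_ofNat constantCoeff 8
lemma cc_num28 : constantCoeff (28 : MvPolynomial (Fin 2) k) = 28 := map_ofNat constantCoeff 28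
lemma cc_num56 : constantCoeff (56 : MvPolynomial (Fin 2) k) = 56 := map_ofNat constantCoeff 56
lemma cc_num70 : constantCoeff (70 : MvPolynomial (Fin 2) k) = 70 := map_ofNat constantCoeff 70

lemma form_zero (a : ℕ → k) : form 0 a = C (a 0) := by simp [form]

lemma form_two (a : ℕ → k) : form 2 a = C (a 0) * X 0 ^ 2 + C (2 * a 1) * (X 0 * X 1) +
    C (a 2) * X 1 ^ 2 := by
  simp [form, Finset.sum_range_succ, Nat.choose, C_num2, C_num3, C_num4, C_num6, C_num8, C_num16, C_num24, C_num28, C_num36, C_num56, C_num70]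

lemma form_four (a : ℕ → k) : form 4 a = C (a 0) * X 0 ^ 4 + C (4 * a 1) * (X 0 ^ 3 * X 1) +
    C (6 * a 2) * (X 0 ^ 2 * X 1 ^ 2) + C (4 * a 3) * (X 0 * X 1 ^ 3) + C (a 4) * X 1 ^ 4 := by
  simp [form, Finset.sum_range_succ, Nat.choose, C_num2, C_num3, C_num4, C_num6, C_num8, C_num16, C_num24, C_num28, C_num36, C_num56, C_num70]

lemma form_eight (a : ℕ → k) : form 8 a = C (a 0) * X 0 ^ 8 + C (8 * a 1) * (X 0 ^ 7 * X 1) +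
    C (28 * a 2) * (X 0 ^ 6 * X 1 ^ 2) + C (56 * a 3) * (X 0 ^ 5 * X 1 ^ 3) +
    C (70 * a 4) * (X 0 ^ 4 * X 1 ^ 4) + C (56 * a 5) * (X 0 ^ 3 * X 1 ^ 5) +
    C (28 * a 6) * (X 0 ^ 2 * X 1 ^ 6) + C (8 * a 7) * (X 0 * X 1 ^ 7) + C (a 8) * X 1 ^ 8 := by
  simp [form, Finset.sum_range_succ, Nat.choose, C_num2, C_num3, C_num4, C_num6, C_num8, C_num16, C_num24, C_num28, C_num36, C_num56, C_num70]

/-- The characteristic hypotheses. -/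
structure Chr (k : Type*) [Field k] : Prop where
  h2 : (2 : k) ≠ 0
  h3 : (3 : k) ≠ 0
  h5 : (5 : k) ≠ 0
  h7 : (7 : k) ≠ 0

lemma Chr.nz (H : Chr k) (a b c d : ℕ) : ((2 ^ a * 3 ^ b * 5 ^ c * 7 ^ d : ℕ) : k) ≠ 0 := by
  push_cast
  exact mul_ne_zero (mul_ne_zero (mul_ne_zero (pow_ne_zero _ H.h2) (pow_ne_zero _ H.h3))
    (pow_ne_zero _ H.h5)) (pow_ne_zero _ H.h7)

lemma form_mul22 (H : Chr k) (a b : ℕ → k) : form 2 a * form 2 b = form 4 (p22 a b) := by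
  have h2 := H.h2
  have h6 : (6 : k) ≠ 0 := by have := H.nz 1 1 0 0; norm_num at this; exact this
  rw [form_two, form_two, form_four]
  simp only [p22]
  rw [show (4 : k) * ((a 0 * b 1 + a 1 * b 0) / 2) = 2 * (a 0 * b 1 + a 1 * b 0) by field_simp; ring,
    show (4 : k) * ((a 1 * b 2 + a 2 * b 1) / 2) = 2 * (a 1 * b 2 + a 2 * b 1) by field_simp; ring,
    mul_div_cancel₀ _ h6]
  simp only [C_mul, C_add, C_num2, C_num3, C_num4, C_num6, C_num8, C_num16, C_num24, C_num28, C_num36, C_num56, C_num70]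
  ring

lemma form_mul44 (H : Chr k) (a b : ℕ → k) : form 4 a * form 4 b = form 8 (p44 a b) := by
  have h2 := H.h2
  have h28 : (28 : k) ≠ 0 := by have := H.nz 2 0 0 1; norm_num at this; exact this
  have h56 : (56 : k) ≠ 0 := by have := H.nz 3 0 0 1; norm_num at this; exact this
  have h70 : (70 : k) ≠ 0 := by have := H.nz 1 0 1 1; norm_num at this; exact this
  rw [form_four, form_four, form_eight]
  simp only [p44]
  rw [show (8 : k) * ((a 0 * b 1 + a 1 * b 0) / 2) = 4 * (a 0 * b 1 + a 1 * b 0) by field_simp; ring,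
    show (8 : k) * ((a 3 * b 4 + a 4 * b 3) / 2) = 4 * (a 3 * b 4 + a 4 * b 3) by field_simp; ring]
  simp only [mul_div_cancel₀ _ h28, mul_div_cancel₀ _ h56, mul_div_cancel₀ _ h70]
  simp only [C_mul, C_add, C_num2, C_num3, C_num4, C_num6, C_num8, C_num16, C_num24, C_num28, C_num36, C_num56, C_num70]
  ring

/-- Coefficients of `𝔤`. -/
def gc (a : ℕ → k) : ℕ → k := fun l => ∑ j ∈ Finset.range 5,
  ((-1 : k) ^ j * (Nat.choose 4 j : k)) * p44 (fun l => a (l + j)) (fun l => a (l + (4 - j))) l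

/-- Coefficients of `𝔨`. -/
def kc (a : ℕ → k) : ℕ → k := fun l => ∑ j ∈ Finset.range 7,
  ((-1 : k) ^ j * (Nat.choose 6 j : k)) * p22 (fun l => a (l + j)) (fun l => a (l + (6 - j))) l

/-- Coefficients of `𝔥`. -/
def hc (a : ℕ → k) : ℕ → k := fun l => ∑ j ∈ Finset.range 3,
  ((-1 : k) ^ j * (Nat.choose 2 j : k)) * p22 (fun l => a (l + j)) (fun l => a (l + (2 - j))) l

/-- Contraction of an octic with a quartic. -/
def mc (a b : ℕ → k) : ℕ → k := fun l =>
  a l * b 4 - 4 * a (l + 1) * b 3 + 6 * a (l + 2) * b 2 - 4 * a (l + 3) * b 1 + a (l + 4) * b 0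

lemma Chr.f8 (H : Chr k) : (Nat.factorial 8 : k) ≠ 0 := by
  have := H.nz 7 2 1 1
  rwa [show Nat.factorial 8 = 2 ^ 7 * 3 ^ 2 * 5 ^ 1 * 7 ^ 1 by decide]

lemma Chr.f4 (H : Chr k) : (Nat.factorial 4 : k) ≠ 0 := fac_ne (by norm_num) H.f8

lemma tvG (H : Chr k) (a : ℕ → k) : covG (form 8 a) = form 8 (gc a) := by
  rw [covG, tv_form 4 4 4 a a H.f8 H.f8]
  simp only [form_mul44 H]
  rw [form_sum]; rfl

lemma tvK (H : Chr k) (a : ℕ → k) : covK (form 8 a) = form 4 (kc a) := by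
  rw [covK, tv_form 2 2 6 a a H.f8 H.f8]
  simp only [form_mul22 H]
  rw [form_sum]; rfl

lemma tvH (H : Chr k) (b : ℕ → k) : transvectant 4 4 2 (form 4 b) (form 4 b) = form 4 (hc b) := by
  rw [tv_form 2 2 2 b b H.f4 H.f4]
  simp only [form_mul22 H]
  rw [form_sum]; rfl

lemma tvM (H : Chr k) (a b : ℕ → k) :
    transvectant 8 4 4 (form 8 a) (form 4 b) = form 4 (mc a b) := by
  rw [tv_form 4 0 4 a b H.f8 H.f4]
  have : ∀ j, (C ((-1 : k) ^ j * (Nat.choose 4 j : k)) * (form 4 (fun l => a (l + j)) *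
      form 0 (fun l => b (l + (4 - j)))) : MvPolynomial (Fin 2) k)
      = C ((-1 : k) ^ j * (Nat.choose 4 j : k) * b (4 - j)) * form 4 (fun l => a (l + j)) := by
    intro j; rw [form_zero, zero_add, C_mul (a' := b _)]; ring
  simp only [this]
  rw [form_sum]
  congr 1
  funext l
  simp [Finset.sum_range_succ, Nat.choose, mc]; ring

lemma tvL (H : Chr k) (a b : ℕ → k) :
    constantCoeff (transvectant 4 4 4 (form 4 a) (form 4 b)) = mc a b 0 := by
  rw [tv_form 0 0 4 a b H.f4 H.f4]
  simp [form_zero, Finset.sum_range_succ, Nat.choose, cc_num4, cc_num6, cc_num8, cc_num28, cc_num56, cc_num70, mc]; ring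

lemma tvL8 (H : Chr k) (a b : ℕ → k) :
    constantCoeff (transvectant 8 8 8 (form 8 a) (form 8 b)) =
     a 0 * b 8 - 8 * a 1 * b 7 + 28 * a 2 * b 6 - 56 * a 3 * b 5 + 70 * a 4 * b 4
      - 56 * a 5 * b 3 + 28 * a 6 * b 2 - 8 * a 7 * b 1 + a 8 * b 0 := by
  rw [tv_form 0 0 8 a b H.f8 H.f8]
  simp [form_zero, Finset.sum_range_succ, Nat.choose, cc_num4, cc_num6, cc_num8, cc_num28, cc_num56, cc_num70]; ring

lemma J2_form (H : Chr k) (a : ℕ → k) : shJ2 (form 8 a) = 2 * a 0 * a 8 - 16 * a 1 * a 7 + 56 * a 2 * a 6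
    - 112 * a 3 * a 5 + 70 * a 4 ^ 2 := by
  rw [shJ2, tvL8 H]; ring
lemma J3_form (H : Chr k) (a : ℕ → k) : shJ3 (form 8 a) = a 0 * gc a 8 - 8 * a 1 * gc a 7 + 28 * a 2 * gc a 6
    - 56 * a 3 * gc a 5 + 70 * a 4 * gc a 4
      - 56 * a 5 * gc a 3 + 28 * a 6 * gc a 2 - 8 * a 7 * gc a 1 + a 8 * gc a 0 := by
  rw [shJ3, tvG H, tvL8 H]
lemma J4_form (H : Chr k) (a : ℕ → k) : shJ4 (form 8 a) = mc (kc a) (kc a) 0 := by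
  rw [shJ4, tvK H, tvL H]
lemma J5_form (H : Chr k) (a : ℕ → k) : shJ5 (form 8 a) = mc (mc a (kc a)) (kc a) 0 := by
  rw [shJ5, covM, tvK H, tvM H, tvL H]
lemma J6_form (H : Chr k) (a : ℕ → k) : shJ6 (form 8 a) = mc (kc a) (hc (kc a)) 0 := by
  rw [shJ6, covH, tvK H, tvH H, tvL H]
lemma J7_form (H : Chr k) (a : ℕ → k) : shJ7 (form 8 a) = mc (mc a (kc a)) (hc (kc a)) 0 := by
  rw [shJ7, covM, covH, tvK H, tvH H, tvM H, tvL H]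
lemma J8_form (H : Chr k) (a : ℕ → k) : shJ8 (form 8 a) = mc (mc (gc a) (kc a)) (hc (kc a)) 0 := by
  rw [shJ8, covP, covH, tvK H, tvG H, tvH H, tvM H, tvL H]
lemma J9_form (H : Chr k) (a : ℕ → k) : shJ9 (form 8 a) = mc (mc a (hc (kc a))) (hc (kc a)) 0 := by
  rw [shJ9, covN, covH, tvK H, tvH H, tvM H, tvL H]
lemma J10_form (H : Chr k) (a : ℕ → k) : shJ10 (form 8 a) = mc (mc (gc a) (hc (kc a))) (hc (kc a)) 0 := by
  rw [shJ10, covQ, covH, tvK H, tvG H, tvH H, tvM H, tvL H]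

lemma C_num5 : (C (5 : k) : MvPolynomial (Fin 2) k) = 5 := map_ofNat C 5
lemma C_num7 : (C (7 : k) : MvPolynomial (Fin 2) k) = 7 := map_ofNat C 7
lemma C_num10 : (C (10 : k) : MvPolynomial (Fin 2) k) = 10 := map_ofNat C 10
lemma C_num15 : (C (15 : k) : MvPolynomial (Fin 2) k) = 15 := map_ofNat C 15
lemma C_num20 : (C (20 : k) : MvPolynomial (Fin 2) k) = 20 := map_ofNat C 20
lemma C_num21 : (C (21 : k) : MvPolynomial (Fin 2) k) = 21 := map_ofNat C 21
lemma C_num35 : (C (35 : k) : MvPolynomial (Fin 2) k) = 35 := map_ofNat C 35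

/-- Coefficients after the substitution `Z ↦ Z + tX` in degree 4. -/
def T4 (t : k) (a : ℕ → k) : ℕ → k
  | 0 => a 0 + 4 * t ^ 1 * a 1 + 6 * t ^ 2 * a 2 + 4 * t ^ 3 * a 3 + t ^ 4 * a 4
  | 1 => a 1 + 3 * t ^ 1 * a 2 + 3 * t ^ 2 * a 3 + t ^ 3 * a 4
  | 2 => a 2 + 2 * t ^ 1 * a 3 + t ^ 2 * a 4
  | 3 => a 3 + t ^ 1 * a 4
  | _ => a 4

/-- Coefficients after the substitution `X ↦ Z, Z ↦ -X` in degree 4. -/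
def W4 (a : ℕ → k) : ℕ → k
  | 0 => a 4
  | 1 => -a 3
  | 2 => a 2
  | 3 => -a 1
  | _ => a 0

/-- Coefficients after the substitution `Z ↦ Z + tX` in degree 8. -/
def T8 (t : k) (a : ℕ → k) : ℕ → k
  | 0 => a 0 + 8 * t ^ 1 * a 1 + 28 * t ^ 2 * a 2 + 56 * t ^ 3 * a 3 + 70 * t ^ 4 * a 4 + 56 * t ^ 5 * a 5 + 28 * t ^ 6 * a 6 + 8 * t ^ 7 * a 7 + t ^ 8 * a 8
  | 1 => a 1 + 7 * t ^ 1 * a 2 + 21 * t ^ 2 * a 3 + 35 * t ^ 3 * a 4 + 35 * t ^ 4 * a 5 + 21 * t ^ 5 * a 6 + 7 * t ^ 6 * a 7 + t ^ 7 * a 8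
  | 2 => a 2 + 6 * t ^ 1 * a 3 + 15 * t ^ 2 * a 4 + 20 * t ^ 3 * a 5 + 15 * t ^ 4 * a 6 + 6 * t ^ 5 * a 7 + t ^ 6 * a 8
  | 3 => a 3 + 5 * t ^ 1 * a 4 + 10 * t ^ 2 * a 5 + 10 * t ^ 3 * a 6 + 5 * t ^ 4 * a 7 + t ^ 5 * a 8
  | 4 => a 4 + 4 * t ^ 1 * a 5 + 6 * t ^ 2 * a 6 + 4 * t ^ 3 * a 7 + t ^ 4 * a 8
  | 5 => a 5 + 3 * t ^ 1 * a 6 + 3 * t ^ 2 * a 7 + t ^ 3 * a 8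
  | 6 => a 6 + 2 * t ^ 1 * a 7 + t ^ 2 * a 8
  | 7 => a 7 + t ^ 1 * a 8
  | _ => a 8

/-- Coefficients after the substitution `X ↦ Z, Z ↦ -X` in degree 8. -/
def W8 (a : ℕ → k) : ℕ → k
  | 0 => a 8
  | 1 => -a 7
  | 2 => a 6
  | 3 => -a 5
  | 4 => a 4
  | 5 => -a 3
  | 6 => a 2
  | 7 => -a 1
  | _ => a 0

/-- The matrix of the translation. -/
def MT (t : k) : Matrix (Fin 2) (Fin 2) k := !![1, 0; t, 1]
/-- The matrix of the swap. -/
def MW : Matrix (Fin 2) (Fin 2) k := !![0, 1; -1, 0]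

lemma det_MT (t : k) : (MT t).det = 1 := by simp [MT, Matrix.det_fin_two]
lemma det_MW : (MW : Matrix (Fin 2) (Fin 2) k).det = 1 := by simp [MW, Matrix.det_fin_two]

lemma MT_X0 (t : k) : sub (MT t) (X 0) = X 0 := by simp [sub_X, MT]
lemma MT_X1 (t : k) : sub (MT t) (X 1) = C t * X 0 + X 1 := by simp [sub_X, MT]
lemma MW_X0 : sub (MW : Matrix (Fin 2) (Fin 2) k) (X 0) = X 1 := by simp [sub_X, MW]
lemma MW_X1 : sub (MW : Matrix (Fin 2) (Fin 2) k) (X 1) = - X 0 := by simp [sub_X, MW]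

lemma sub_T4 (t : k) (a : ℕ → k) : sub (MT t) (form 4 a) = form 4 (T4 t a) := by
  rw [form_four, form_four]
  simp only [T4, map_add, map_mul, map_pow, MT_X0, MT_X1, sub_C]
  simp only [C_num2, C_num3, C_num4, C_num6, C_num8, C_num28, C_num56, C_num70, C_num5, C_num7, C_num10, C_num15, C_num20, C_num21, C_num35]
  ring

lemma sub_W4 (a : ℕ → k) : sub MW (form 4 a) = form 4 (W4 a) := by
  rw [form_four, form_four]
  simp only [W4, map_add, map_mul, map_pow, MW_X0, MW_X1, sub_C, map_neg]
  simp only [C_num2, C_num3, C_num4, C_num6, C_num8, C_num28, C_num56, C_num70, C_num5, C_num7, C_num10, C_num15, C_num20, C_num21, C_num35]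
  ring

lemma sub_T8 (t : k) (a : ℕ → k) : sub (MT t) (form 8 a) = form 8 (T8 t a) := by
  rw [form_eight, form_eight]
  simp only [T8, map_add, map_mul, map_pow, MT_X0, MT_X1, sub_C]
  simp only [C_num2, C_num3, C_num4, C_num6, C_num8, C_num28, C_num56, C_num70, C_num5, C_num7, C_num10, C_num15, C_num20, C_num21, C_num35]
  ring

lemma sub_W8 (a : ℕ → k) : sub MW (form 8 a) = form 8 (W8 a) := by
  rw [form_eight, form_eight]
  simp only [W8, map_add, map_mul, map_pow, MW_X0, MW_X1, sub_C, map_neg]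
  simp only [C_num2, C_num3, C_num4, C_num6, C_num8, C_num28, C_num56, C_num70, C_num5, C_num7, C_num10, C_num15, C_num20, C_num21, C_num35]
  ring

section coefs

lemma kc0 (a : ℕ → k) : kc a 0 = 2 * a 0 * a 6 - 12 * a 1 * a 5 + 30 * a 2 * a 4 - 20 * a 3 ^ 2 := by
  simp [kc, Finset.sum_range_succ, Nat.choose, p22]; ring
lemma kc4 (a : ℕ → k) : kc a 4 = 2 * a 2 * a 8 - 12 * a 3 * a 7 + 30 * a 4 * a 6 - 20 * a 5 ^ 2 := by
  simp [kc, Finset.sum_range_succ, Nat.choose, p22]; ring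
lemma kc1 (H : Chr k) (a : ℕ → k) :
    kc a 1 = a 0 * a 7 - 5 * a 1 * a 6 + 9 * a 2 * a 5 - 5 * a 3 * a 4 := by
  have := H.h2
  simp [kc, Finset.sum_range_succ, Nat.choose, p22]; field_simp; ring
lemma kc3 (H : Chr k) (a : ℕ → k) :
    kc a 3 = a 1 * a 8 - 5 * a 2 * a 7 + 9 * a 3 * a 6 - 5 * a 4 * a 5 := by
  have := H.h2
  simp [kc, Finset.sum_range_succ, Nat.choose, p22]; field_simp; ring
lemma kc2 (H : Chr k) (a : ℕ → k) :
    3 * kc a 2 = a 0 * a 8 - 2 * a 1 * a 7 - 8 * a 2 * a 6 + 34 * a 3 * a 5 - 25 * a 4 ^ 2 := by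
  have h6 : (6 : k) ≠ 0 := by have := H.nz 1 1 0 0; norm_num at this; exact this
  simp [kc, Finset.sum_range_succ, Nat.choose, p22]; field_simp; ring

lemma hc0 (b : ℕ → k) : hc b 0 = 2 * b 0 * b 2 - 2 * b 1 ^ 2 := by
  simp [hc, Finset.sum_range_succ, Nat.choose, p22]; ring
lemma hc4 (b : ℕ → k) : hc b 4 = 2 * b 2 * b 4 - 2 * b 3 ^ 2 := by
  simp [hc, Finset.sum_range_succ, Nat.choose, p22]; ring
lemma hc1 (H : Chr k) (b : ℕ → k) : hc b 1 = b 0 * b 3 - b 1 * b 2 := by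
  have := H.h2
  simp [hc, Finset.sum_range_succ, Nat.choose, p22]; field_simp; ring
lemma hc3 (H : Chr k) (b : ℕ → k) : hc b 3 = b 1 * b 4 - b 2 * b 3 := by
  have := H.h2
  simp [hc, Finset.sum_range_succ, Nat.choose, p22]; field_simp; ring
lemma hc2 (H : Chr k) (b : ℕ → k) : 3 * hc b 2 = b 0 * b 4 + 2 * b 1 * b 3 - 3 * b 2 ^ 2 := by
  have h6 : (6 : k) ≠ 0 := by have := H.nz 1 1 0 0; norm_num at this; exact this
  simp [hc, Finset.sum_range_succ, Nat.choose, p22]; field_simp; ring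

lemma gc0 (a : ℕ → k) : gc a 0 = 2 * a 0 * a 4 - 8 * a 1 * a 3 + 6 * a 2 ^ 2 := by
  simp [gc, Finset.sum_range_succ, Nat.choose, p44]; ring
lemma gc8 (a : ℕ → k) : gc a 8 = 2 * a 4 * a 8 - 8 * a 5 * a 7 + 6 * a 6 ^ 2 := by
  simp [gc, Finset.sum_range_succ, Nat.choose, p44]; ring
lemma gc4 (H : Chr k) (a : ℕ → k) : 35 * gc a 4 =
    a 0 * a 8 + 12 * a 1 * a 7 - 22 * a 2 * a 6 - 36 * a 3 * a 5 + 45 * a 4 ^ 2 := by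
  have h70 : (70 : k) ≠ 0 := by have := H.nz 1 0 1 1; norm_num at this; exact this
  simp [gc, Finset.sum_range_succ, Nat.choose, p44]; field_simp; ring
lemma gc6 (H : Chr k) (a : ℕ → k) : 7 * gc a 6 =
    3 * a 2 * a 8 - 4 * a 3 * a 7 - 11 * a 4 * a 6 + 12 * a 5 ^ 2 := by
  have h28 : (28 : k) ≠ 0 := by have := H.nz 2 0 0 1; norm_num at this; exact this
  simp [gc, Finset.sum_range_succ, Nat.choose, p44]; field_simp; ring

end coefs

/-- First invariant of a binary quartic. -/
def I4 (b : ℕ → k) : k := b 0 * b 4 - 4 * b 1 * b 3 + 3 * b 2 ^ 2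
/-- Second invariant of a binary quartic. -/
def D4 (b : ℕ → k) : k := b 0 * b 2 * b 4 + 2 * b 1 * b 2 * b 3 - b 2 ^ 3 - b 0 * b 3 ^ 2
  - b 1 ^ 2 * b 4

lemma mc_I4 (b : ℕ → k) : mc b b 0 = 2 * I4 b := by simp [mc, I4]; ring
lemma mc_D4 (H : Chr k) (b : ℕ → k) : mc b (hc b) 0 = 6 * D4 b := by
  have h := hc2 H b
  simp only [mc, D4, hc0, hc1 H, hc3 H, hc4, zero_add]
  linear_combination (2 * b 2) * h

/-- The relation on the quartic covariant. -/
def Q4 (c : k) (b : ℕ → k) : Prop := 12 * I4 b = c ^ 2 ∧ 216 * D4 b = - c ^ 3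
/-- Reducibility to a quartic divisible by `X²`. -/
def R4 (b : ℕ → k) : Prop := ∃ M : Matrix (Fin 2) (Fin 2) k, M.det = 1 ∧ ∃ b',
  sub M (form 4 b) = form 4 b' ∧ b' 3 = 0 ∧ b' 4 = 0

lemma Q4_T (c t : k) (b : ℕ → k) (h : Q4 c b) : Q4 c (T4 t b) := by
  obtain ⟨h1, h2⟩ := h
  refine ⟨?_, ?_⟩
  · rw [← h1]; simp only [I4, T4]; ring
  · rw [← h2]; simp only [D4, T4]; ring
lemma Q4_W (c : k) (b : ℕ → k) (h : Q4 c b) : Q4 c (W4 b) := by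
  obtain ⟨h1, h2⟩ := h
  refine ⟨?_, ?_⟩
  · rw [← h1]; simp only [I4, W4]; ring
  · rw [← h2]; simp only [D4, W4]; ring
lemma R4_T (t : k) (b : ℕ → k) (h : R4 (T4 t b)) : R4 b := by
  obtain ⟨M, hM, b', h1, h2⟩ := h
  exact ⟨MT t * M, by rw [Matrix.det_mul, det_MT, hM, one_mul], b', by rw [← sub_sub, sub_T4, h1], h2⟩
lemma R4_W (b : ℕ → k) (h : R4 (W4 b)) : R4 b := by
  obtain ⟨M, hM, b', h1, h2⟩ := h
  exact ⟨MW * M, by rw [Matrix.det_mul, det_MW, hM, one_mul], b', by rw [← sub_sub, sub_W4, h1], h2⟩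

lemma exists_root4 [IsAlgClosed k] (b : ℕ → k) (h : b 4 ≠ 0) : ∃ t, T4 t b 0 = 0 := by
  let p : Polynomial k := Polynomial.C (b 4) * Polynomial.X ^ 4 + Polynomial.C (4 * b 3) * Polynomial.X ^ 3 +
    Polynomial.C (6 * b 2) * Polynomial.X ^ 2 + Polynomial.C (4 * b 1) * Polynomial.X + Polynomial.C (b 0)
  have hd : p.degree = 4 := by
    simp only [p]; compute_degree!
  obtain ⟨t, ht⟩ := IsAlgClosed.exists_root p (by rw [hd]; norm_num)
  refine ⟨t, ?_⟩
  simp [p, Polynomial.IsRoot] at ht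
  simp only [T4]
  linear_combination ht

lemma exists_root8 [IsAlgClosed k] (b : ℕ → k) (h : b 8 ≠ 0) : ∃ t, T8 t b 0 = 0 := by
  let p : Polynomial k := Polynomial.C (b 8) * Polynomial.X ^ 8 + Polynomial.C (8 * b 7) * Polynomial.X ^ 7 +
    Polynomial.C (28 * b 6) * Polynomial.X ^ 6 + Polynomial.C (56 * b 5) * Polynomial.X ^ 5 +
    Polynomial.C (70 * b 4) * Polynomial.X ^ 4 + Polynomial.C (56 * b 3) * Polynomial.X ^ 3 +
    Polynomial.C (28 * b 2) * Polynomial.X ^ 2 + Polynomial.C (8 * b 1) * Polynomial.X + Polynomial.C (b 0)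
  have hd : p.degree = 8 := by
    simp only [p]; compute_degree!
  obtain ⟨t, ht⟩ := IsAlgClosed.exists_root p (by rw [hd]; norm_num)
  refine ⟨t, ?_⟩
  simp [p, Polynomial.IsRoot] at ht
  simp only [T8]
  linear_combination ht

lemma R4_step1 (H : Chr k) (c : k) (b : ℕ → k) (h : Q4 c b) (h4 : b 4 = 0) (h2 : b 2 = 0) :
    R4 b := by
  by_cases h3 : b 3 = 0
  · exact ⟨1, by simp, b, sub_one _, h3, h4⟩
  have h12 : (12 : k) ≠ 0 := by have := H.nz 2 1 0 0; norm_num at this; exact this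
  have h216 : (216 : k) ≠ 0 := by have := H.nz 3 3 0 0; norm_num at this; exact this
  have h48 : (48 : k) ≠ 0 := by have := H.nz 4 1 0 0; norm_num at this; exact this
  obtain ⟨hI, hD⟩ := h
  simp only [I4, D4, h4, h2] at hI hD
  obtain ⟨t, ht⟩ : ∃ t, c = 12 * t * b 3 := ⟨c / (12 * b 3), by field_simp⟩
  have e1 : b 1 = -3 * t ^ 2 * b 3 := by
    apply mul_left_cancel₀ (mul_ne_zero h48 h3)
    rw [ht] at hI
    linear_combination -hI
  have e0 : b 0 = 8 * t ^ 3 * b 3 := by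
    apply mul_left_cancel₀ (mul_ne_zero h216 (pow_ne_zero 2 h3))
    rw [ht] at hD
    linear_combination -hD
  apply R4_T t
  apply R4_W
  refine ⟨1, by simp, _, sub_one _, ?_, ?_⟩
  · simp only [W4, T4, e1, h2, h4]; ring
  · simp only [W4, T4, e1, e0, h2, h4]; ring

lemma R4_step2 (H : Chr k) (c : k) (b : ℕ → k) (h : Q4 c b) (h4 : b 4 = 0) : R4 b := by
  by_cases h3 : b 3 = 0
  · exact ⟨1, by simp, b, sub_one _, h3, h4⟩
  apply R4_T (-(b 2) / (2 * b 3))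
  apply R4_step1 H c _ (Q4_T _ _ _ h)
  · simp [T4, h4]
  · have := H.h2
    simp only [T4, h4]; field_simp; ring

lemma R4_of_Q4 [IsAlgClosed k] (H : Chr k) (c : k) (b : ℕ → k) (h : Q4 c b) : R4 b := by
  by_cases h4 : b 4 = 0
  · exact R4_step2 H c b h h4
  obtain ⟨t, ht⟩ := exists_root4 b h4
  apply R4_T t
  apply R4_W
  exact R4_step2 H c _ (Q4_W _ _ (Q4_T _ _ _ h)) ht

lemma sq_aux (f p : MvPolynomial (Fin 2) k) (x : Fin 2 → k) (hf : Squarefree f)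
    (h : p * p ∣ f) (hx : eval x p = 0) : False := by
  have hu := (hf p h).map (eval x)
  rw [hx] at hu
  exact not_isUnit_zero hu

lemma sq78 (a : ℕ → k) (hf : Squarefree (form 8 a)) (h7 : a 7 = 0) (h8 : a 8 = 0) : False := by
  refine sq_aux _ (X 0) (fun _ => 0) hf ?_ (by simp)
  rw [form_eight, h7, h8]
  refine ⟨C (a 0) * X 0 ^ 6 + C (8 * a 1) * (X 0 ^ 5 * X 1) +
    C (28 * a 2) * (X 0 ^ 4 * X 1 ^ 2) + C (56 * a 3) * (X 0 ^ 3 * X 1 ^ 3) +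
    C (70 * a 4) * (X 0 ^ 2 * X 1 ^ 4) + C (56 * a 5) * (X 0 * X 1 ^ 5) +
    C (28 * a 6) * (X 1 ^ 6), ?_⟩
  simp only [mul_zero, C_0]
  ring

lemma kc_sub (H : Chr k) (M : Matrix (Fin 2) (Fin 2) k) (hM : M.det = 1) (a a' b' : ℕ → k)
    (h : sub M (form 8 a) = form 8 a') (hb : sub M (form 4 (kc a)) = form 4 b') (i : ℕ)
    (hi : i ≤ 4) : kc a' i = b' i := by
  refine form_inj 4 H.f4 _ _ ?_ i hi
  rw [← tvK H, ← h, covK_sub, hM, tvK H, hb]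
  simp

lemma kc_T (H : Chr k) (t : k) (a : ℕ → k) (i : ℕ) (hi : i ≤ 4) :
    kc (T8 t a) i = T4 t (kc a) i :=
  kc_sub H (MT t) (det_MT t) a _ _ (sub_T8 t a) (sub_T4 t _) i hi

lemma kc_W (H : Chr k) (a : ℕ → k) (i : ℕ) (hi : i ≤ 4) : kc (W8 a) i = W4 (kc a) i :=
  kc_sub H MW det_MW a _ _ (sub_W8 a) (sub_W4 _) i hi

lemma Good_T (t : k) (a : ℕ → k) (h : Good (form 8 a)) : Good (form 8 (T8 t a)) := by
  rw [← sub_T8]; exact Good_sub _ (det_MT t) _ h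
lemma Good_W (a : ℕ → k) (h : Good (form 8 a)) : Good (form 8 (W8 a)) := by
  rw [← sub_W8]; exact Good_sub _ det_MW _ h
lemma Concl_T (t : k) (a : ℕ → k) (h : Concl (form 8 (T8 t a))) : Concl (form 8 a) := by
  rw [← sub_T8] at h; exact Concl_of_sub _ (det_MT t) _ h

/-- The degenerate case with `a₆ = a₈ = 0` and vanishing `k₁, …, k₄`. -/
lemma main5 (H : Chr k) (a : ℕ → k) (hf : Squarefree (form 8 a)) (h8 : a 8 = 0) (h6 : a 6 = 0)
    (h7 : a 7 ≠ 0) (k1 : kc a 1 = 0) (k2 : kc a 2 = 0) (k3 : kc a 3 = 0) (k4 : kc a 4 = 0)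
    (hJ : shJ2 (form 8 a) = 0) : False := by
  have e2 := kc2 H a
  rw [k2] at e2
  rw [kc1 H] at k1
  rw [kc3 H] at k3
  rw [kc4] at k4
  rw [J2_form H] at hJ
  simp only [h8, h6] at k1 k3 k4 e2 hJ
  have n2 := H.h2
  have n3 := H.h3
  have n5 := H.h5
  have n4 : (4 : k) ≠ 0 := by have := H.nz 2 0 0 0; norm_num at this; exact this
  have n6 : (6 : k) ≠ 0 := by have := H.nz 1 1 0 0; norm_num at this; exact this
  have n8 : (8 : k) ≠ 0 := by have := H.nz 3 0 0 0; norm_num at this; exact this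
  have n270 : (270 : k) ≠ 0 := by have := H.nz 1 3 1 0; norm_num at this; exact this
  have n9 : (9 : k) ≠ 0 := by have := H.nz 0 2 0 0; norm_num at this; exact this
  have f3 : 3 * a 3 * a 7 = -5 * a 5 ^ 2 := by
    apply mul_left_cancel₀ n4; linear_combination -k4
  have f2 : a 2 * a 7 = - a 4 * a 5 := by
    apply mul_left_cancel₀ n5; linear_combination -k3
  have f4 : 64 * a 3 * a 5 = 45 * a 4 ^ 2 := by
    apply mul_left_cancel₀ n6; linear_combination -hJ - 8 * e2
  have f5 : -64 * a 5 ^ 3 = 27 * a 4 ^ 2 * a 7 := by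
    apply mul_left_cancel₀ n5; linear_combination 3 * a 7 * f4 - 64 * a 5 * f3
  obtain ⟨u, hu5, hu4⟩ : ∃ u, a 5 = -3 * u ^ 2 * a 7 ∧ a 4 = 8 * u ^ 3 * a 7 := by
    by_cases h5 : a 5 = 0
    · refine ⟨0, by simp [h5], ?_⟩
      rw [h5] at f5
      have : a 4 ^ 2 = 0 := by
        apply mul_left_cancel₀ (mul_ne_zero (pow_ne_zero 3 n3) h7)
        linear_combination -f5
      rw [pow_eq_zero_iff two_ne_zero] at this
      simp [this]
    · have g : a 5 = -3 * (-3 * a 4 / (8 * a 5)) ^ 2 * a 7 := by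
        field_simp
        linear_combination -f5
      refine ⟨-3 * a 4 / (8 * a 5), g, ?_⟩
      field_simp
      linear_combination -a 4 * f5
  have u3 : a 3 = -15 * u ^ 4 * a 7 := by
    apply mul_left_cancel₀ (mul_ne_zero n3 h7); rw [hu5] at f3; linear_combination f3
  have u2 : a 2 = 24 * u ^ 5 * a 7 := by
    apply mul_left_cancel₀ h7; rw [hu5, hu4] at f2; linear_combination f2
  have u1 : a 1 = -35 * u ^ 6 * a 7 := by
    apply mul_left_cancel₀ (mul_ne_zero n2 h7); rw [hu5, hu4, u3] at e2; linear_combination e2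
  have u0 : a 0 = 48 * u ^ 7 * a 7 := by
    apply mul_left_cancel₀ h7; rw [hu5, hu4, u3, u2] at k1; linear_combination k1
  refine sq_aux _ (X 1 - C u * X 0) ![1, u] hf ?_ (by simp)
  refine ⟨C (8 * a 7) * X 0 * (X 1 - C u * X 0) ^ 4 * (X 1 + 6 * C u * X 0), ?_⟩
  have : form 8 a = form 8 (fun i => match i with
      | 0 => 48 * u ^ 7 * a 7
      | 1 => -35 * u ^ 6 * a 7
      | 2 => 24 * u ^ 5 * a 7
      | 3 => -15 * u ^ 4 * a 7
      | 4 => 8 * u ^ 3 * a 7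
      | 5 => -3 * u ^ 2 * a 7
      | 6 => 0
      | 7 => a 7
      | _ => 0) := by
    refine form_congr fun i hi => ?_
    interval_cases i
    exacts [u0, u1, u2, u3, hu4, hu5, h6, rfl, h8]
  rw [this, form_eight]
  simp only [map_mul, map_pow, map_neg, C_0, map_ofNat]
  ring

lemma main4 (H : Chr k) (a : ℕ → k) (hf : Good (form 8 a)) (h8 : a 8 = 0)
    (k1 : kc a 1 = 0) (k2 : kc a 2 = 0) (k3 : kc a 3 = 0) (k4 : kc a 4 = 0)
    (hJ : shJ2 (form 8 a) = 0) : False := by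
  by_cases h7 : a 7 = 0
  · exact sq78 a hf.2.1 h7 h8
  have n2 := H.h2
  refine main5 H (T8 (-(a 6) / (2 * a 7)) a) (Good_T _ _ hf).2.1 ?_ ?_ ?_ ?_ ?_ ?_ ?_ ?_
  · simpa [T8] using h8
  · simp only [T8, h8]; field_simp; ring
  · simpa [T8, h8] using h7
  · rw [kc_T H _ _ _ (by norm_num)]; simp [T4, k1, k2, k3, k4]
  · rw [kc_T H _ _ _ (by norm_num)]; simp [T4, k2, k3, k4]
  · rw [kc_T H _ _ _ (by norm_num)]; simp [T4, k3, k4]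
  · rw [kc_T H _ _ _ (by norm_num)]; simp [T4, k4]
  · rw [← sub_T8, J2_sub, det_MT, hJ]; simp

lemma main3 [IsAlgClosed k] (H : Chr k) (a : ℕ → k) (hf : Good (form 8 a))
    (k1 : kc a 1 = 0) (k2 : kc a 2 = 0) (k3 : kc a 3 = 0) (k4 : kc a 4 = 0)
    (hJ : shJ2 (form 8 a) = 0) : False := by
  by_cases h8 : a 8 = 0
  · exact main4 H a hf h8 k1 k2 k3 k4 hJ
  by_cases k0 : kc a 0 = 0
  · obtain ⟨t, ht⟩ := exists_root8 a h8
    have hk : ∀ i, i ≤ 4 → kc (W8 (T8 t a)) i = 0 := by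
      intro i hi
      have key : ∀ j, j ≤ 4 → kc (T8 t a) j = 0 := by
        intro j hj
        rw [kc_T H _ _ _ hj]
        interval_cases j <;> simp [T4, k0, k1, k2, k3, k4]
      rw [kc_W H _ _ hi]
      interval_cases i <;> simp [W4, key]
    refine main4 H (W8 (T8 t a)) (Good_W _ (Good_T t a hf)) ht (hk _ (by norm_num))
      (hk _ (by norm_num)) (hk _ (by norm_num)) (hk _ (by norm_num)) ?_
    rw [← sub_W8, J2_sub, ← sub_T8, J2_sub, hJ]; simp
  · have h5 := hf.2.2.2.2.2.2.2.1
    rw [J5_form H] at h5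
    simp [mc, k1, k2, k3, k4] at h5
    tauto

lemma main1' (H : Chr k) (a : ℕ → k) (hf : Good (form 8 a))
    (k1 : kc a 1 ≠ 0) (k2 : kc a 2 = 0) (k3 : kc a 3 = 0) (k4 : kc a 4 = 0) : False := by
  obtain ⟨-, hs, -, -, -, -, -, h5, h7, h9⟩ := hf
  have n2 := H.h2
  have e0 : hc (kc a) 0 = -2 * kc a 1 ^ 2 := by rw [hc0, k2]; ring
  have e1 : hc (kc a) 1 = 0 := by rw [hc1 H, k2, k3]; ring
  have e3 : hc (kc a) 3 = 0 := by rw [hc3 H, k2, k4]; ring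
  have e4 : hc (kc a) 4 = 0 := by rw [hc4, k2, k3]; ring
  have e2 : hc (kc a) 2 = 0 := by
    apply mul_left_cancel₀ H.h3; rw [hc2 H, k2, k3, k4]; ring
  rw [J9_form H] at h9
  rw [J7_form H] at h7
  have n4 : (4 : k) ≠ 0 := by have := H.nz 2 0 0 0; norm_num at this; exact this
  have h8 : a 8 = 0 := by
    simpa [mc, e0, e1, e2, e3, e4, k1, n2, n4] using h9
  have h7 : a 7 = 0 := by
    simpa [mc, e0, e1, e2, e3, e4, k1, k2, k3, k4, n2, n4, h8] using h7
  exact sq78 a hs h7 h8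
/-- Values of `𝔥` in the normalised case. -/
lemma h_norm (H : Chr k) (b : ℕ → k) (k1 : b 1 = 0) (k3 : b 3 = 0) (k4 : b 4 = 0) :
    hc b 0 = 2 * b 0 * b 2 ∧ hc b 1 = 0 ∧ hc b 2 = - b 2 ^ 2 ∧ hc b 3 = 0 ∧ hc b 4 = 0 := by
  refine ⟨?_, ?_, ?_, ?_, ?_⟩
  · rw [hc0, k1]; ring
  · rw [hc1 H, k1, k3]; ring
  · apply mul_left_cancel₀ H.h3; rw [hc2 H, k1, k3, k4]; ring
  · rw [hc3 H, k1, k3]; ring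
  · rw [hc4, k3, k4]; ring

/-- The case `b₀ ≠ 0` is impossible. -/
lemma main2a (H : Chr k) (a : ℕ → k) (hf : Good (form 8 a))
    (k0 : kc a 0 ≠ 0) (k1 : kc a 1 = 0) (k2 : kc a 2 ≠ 0) (k3 : kc a 3 = 0) (k4 : kc a 4 = 0)
    (hJ : shJ2 (form 8 a) = 6 * kc a 2) : False := by
  obtain ⟨-, hs, -, -, r8, -, -, h5, h7, h9⟩ := hf
  obtain ⟨e0, e1, e2, e3, e4⟩ := h_norm H (kc a) k1 k3 k4
  rw [J5_form H] at h5
  rw [J7_form H] at h7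
  rw [J9_form H] at h9
  rw [J8_form H, hJ] at r8
  simp only [mc, e0, e1, e2, e3, e4, k1, k3, k4, zero_add] at h5 h7 h9 r8
  norm_num only at h5 h7 h9 r8
  have n2 := H.h2
  have n3 := H.h3
  have n4 : (4 : k) ≠ 0 := by have := H.nz 2 0 0 0; norm_num at this; exact this
  have n5 := H.h5
  have n7 := H.h7
  have n9 : (9 : k) ≠ 0 := by have := H.nz 0 2 0 0; norm_num at this; exact this
  have n12 : (12 : k) ≠ 0 := by have := H.nz 2 1 0 0; norm_num at this; exact this
  have n36 : (36 : k) ≠ 0 := by have := H.nz 2 2 0 0; norm_num at this; exact this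
  have nb := H.nz 27 8 5 1
  norm_num at nb
  have g8 := gc8 a
  have g6 := gc6 H a
  have g4 := gc4 H a
  have c2 := kc2 H a
  have c0 := kc0 a
  rw [kc1 H] at k1
  rw [kc3 H] at k3
  rw [kc4] at k4
  generalize kc a 0 = b0 at *
  generalize kc a 2 = b2 at *
  have q5 : b0 ^ 2 * a 8 + 12 * b0 * b2 * a 6 + 36 * b2 ^ 2 * a 4 = 0 := by
    linear_combination h5
  have q7 : 2 * (b0 ^ 2 * a 8) + 6 * b0 * b2 * a 6 - 36 * b2 ^ 2 * a 4 = 0 := by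
    apply mul_left_cancel₀ k2; linear_combination h7
  have q9 : 4 * (b0 ^ 2 * a 8) - 24 * b0 * b2 * a 6 + 36 * b2 ^ 2 * a 4 = 0 := by
    apply mul_left_cancel₀ (pow_ne_zero 2 k2); linear_combination h9
  have h8 : a 8 = 0 := by
    apply mul_left_cancel₀ (mul_ne_zero n9 (pow_ne_zero 2 k0))
    linear_combination q5 + 2 * q7 + q9
  have h6 : a 6 = 0 := by
    rw [h8] at q5 q7
    apply mul_left_cancel₀ (mul_ne_zero (mul_ne_zero n9 n2) (mul_ne_zero k0 k2))
    linear_combination q5 + q7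
  have h4 : a 4 = 0 := by
    rw [h8, h6] at q5
    apply mul_left_cancel₀ (mul_ne_zero n36 (pow_ne_zero 2 k2))
    linear_combination q5
  have h7' : a 7 ≠ 0 := fun h => sq78 a hs h h8
  simp only [h8, h6, h4] at k1 k3 k4 c2 c0 g8 g6 g4 hJ
  rw [J2_form H] at hJ
  simp only [h8, h6, h4] at hJ
  have h2 : a 2 = 0 := by
    apply mul_left_cancel₀ (mul_ne_zero n5 h7'); linear_combination -k3
  simp only [h2] at k1 c2 c0 g6 g4 hJ
  have h0 : a 0 = 0 := by
    apply mul_left_cancel₀ h7'; linear_combination k1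
  simp only [h0] at c2 c0 g4 hJ
  obtain ⟨y, hy⟩ : ∃ y, a 5 = 3 * y * a 7 := ⟨a 5 / (3 * a 7), by field_simp⟩
  have h3 : a 3 = -15 * y ^ 2 * a 7 := by
    apply mul_left_cancel₀ (mul_ne_zero n12 h7')
    rw [hy] at k4; linear_combination -k4
  have h1 : a 1 = 675 * y ^ 3 * a 7 := by
    apply mul_left_cancel₀ (mul_ne_zero n12 h7')
    rw [hy, h3] at c2 hJ; linear_combination -hJ - 2 * c2
  have hb2 : b2 = -960 * y ^ 3 * a 7 ^ 2 := by
    apply mul_left_cancel₀ n3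
    rw [hy, h3, h1] at c2; linear_combination c2
  have hb0 : b0 = -28800 * y ^ 4 * a 7 ^ 2 := by
    rw [hy, h3, h1] at c0; linear_combination c0
  have hg8 : gc a 8 = -24 * y * a 7 ^ 2 := by rw [hy] at g8; linear_combination g8
  have hg6 : gc a 6 = 24 * y ^ 2 * a 7 ^ 2 := by
    apply mul_left_cancel₀ n7; rw [hy, h3] at g6; linear_combination g6
  have hg4 : 7 * gc a 4 = 1944 * y ^ 3 * a 7 ^ 2 := by
    apply mul_left_cancel₀ n5; rw [hy, h3, h1] at g4; linear_combination g4
  have fin : (19263179980800000 : k) * (y ^ 12 * a 7 ^ 8) = 0 := by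
    rw [hb2, hb0, hg8, hg6] at r8
    linear_combination r8 - 60 * 6 * 6 * (-960 * y ^ 3 * a 7 ^ 2) * (-(-960 * y ^ 3 * a 7 ^ 2) ^ 2) * hg4
  have hy0 : y = 0 := by
    rcases mul_eq_zero.1 fin with h | h
    · exact absurd h nb
    · rcases mul_eq_zero.1 h with h | h
      · exact pow_eq_zero_iff (by norm_num) |>.1 h
      · exact absurd (pow_eq_zero_iff (by norm_num) |>.1 h) h7'
  apply k2
  rw [hb2, hy0]; ring

/-- The algebra of the case `b₀ = 0`. -/
lemma algA (H : Chr k) (a0 a1 a2 a3 a5 a6 a7 a8 b : k) (hb : b ≠ 0)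
    (hQ : a1 * a7 = 9 * (a3 * a5)) (hR : a2 * a6 = 4 * (a3 * a5))
    (hP : a0 * a8 = 3 * b + 16 * (a3 * a5))
    (E0 : a0 * a6 = 6 * a1 * a5 + 10 * a3 ^ 2) (E4 : a8 * a2 = 6 * a7 * a3 + 10 * a5 ^ 2)
    (E1 : a0 * a7 = 5 * a1 * a6 - 9 * a2 * a5) (E3 : a8 * a1 = 5 * a7 * a2 - 9 * a6 * a3) :
    a3 * a5 = 0 := by
  by_contra hS
  have h3 : a3 ≠ 0 := left_ne_zero_of_mul hS
  have h5 : a5 ≠ 0 := right_ne_zero_of_mul hS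
  have n2 := H.h2
  have n3 := H.h3
  have n4 : (4 : k) ≠ 0 := by have := H.nz 2 0 0 0; norm_num at this; exact this
  have n5 := H.h5
  have n9 : (9 : k) ≠ 0 := by have := H.nz 0 2 0 0; norm_num at this; exact this
  have i1 : a3 * (18 * a5 ^ 2 + 2 * a3 * a7) = a1 * a6 ^ 2 := by
    apply mul_left_cancel₀ n5
    linear_combination a6 * E1 - a7 * E0 - 6 * a5 * hQ - 9 * a5 * hR
  have i2 : a5 * (18 * a3 ^ 2 + 2 * a5 * a1) = a7 * a2 ^ 2 := by
    apply mul_left_cancel₀ n5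
    linear_combination a2 * E3 - a1 * E4 - 6 * a3 * hQ - 9 * a3 * hR
  have i3 : (9 * a5 ^ 2 + a3 * a7) * (9 * a3 ^ 2 + a5 * a1) = 36 * (a3 * a5) ^ 2 := by
    apply mul_left_cancel₀ (mul_ne_zero n4 hS)
    calc 4 * (a3 * a5) * ((9 * a5 ^ 2 + a3 * a7) * (9 * a3 ^ 2 + a5 * a1))
        = (a3 * (18 * a5 ^ 2 + 2 * a3 * a7)) * (a5 * (18 * a3 ^ 2 + 2 * a5 * a1)) := by ring
      _ = (a1 * a7) * (a2 * a6) ^ 2 := by rw [i1, i2]; ring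
      _ = _ := by rw [hQ, hR]; ring
  have i4 : a3 ^ 3 * a7 + a5 ^ 3 * a1 = -6 * (a3 * a5) ^ 2 := by
    apply mul_left_cancel₀ n9
    linear_combination i3 - a3 * a5 * hQ
  have i5 : (a3 ^ 3 * a7 - a5 ^ 3 * a1) ^ 2 = 0 := by
    linear_combination (a3 ^ 3 * a7 + a5 ^ 3 * a1 - 6 * (a3 * a5) ^ 2) * i4 - 4 * (a3 * a5) ^ 3 * hQ
  have i6 := pow_eq_zero_iff two_ne_zero |>.1 i5
  have i7 : a3 * a7 = -3 * a5 ^ 2 := by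
    apply mul_left_cancel₀ (mul_ne_zero n2 (pow_ne_zero 2 h3))
    linear_combination i4 + i6
  have i8 : a5 * a1 = -3 * a3 ^ 2 := by
    apply mul_left_cancel₀ (mul_ne_zero n2 (pow_ne_zero 2 h5))
    linear_combination i4 - i6
  have j0 : a0 * a6 = -8 * a3 ^ 2 := by linear_combination E0 + 6 * i8
  have j4 : a8 * a2 = -8 * a5 ^ 2 := by linear_combination E4 + 6 * i7
  have j : (a0 * a8) * (a2 * a6) = 64 * (a3 * a5) ^ 2 := by
    calc (a0 * a8) * (a2 * a6) = (a0 * a6) * (a8 * a2) := by ring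
      _ = _ := by rw [j0, j4]; ring
  rw [hP, hR] at j
  have : b = 0 := by
    apply mul_left_cancel₀ (mul_ne_zero (mul_ne_zero n3 n4) hS)
    linear_combination j
  exact hb this

lemma algC (H : Chr k) (a0 a1 a2 a5 a6 a7 a8 : k) (h0 : a0 ≠ 0) (h8 : a8 ≠ 0)
    (hQ : a1 * a7 = 0) (hR : a2 * a6 = 0)
    (E0 : a0 * a6 = 6 * a1 * a5) (E4 : a8 * a2 = 10 * a5 ^ 2)
    (E1 : a0 * a7 = 5 * a1 * a6 - 9 * a2 * a5) (E3 : a8 * a1 = 5 * a7 * a2) :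
    a1 = 0 ∧ a2 = 0 ∧ a5 = 0 ∧ a6 = 0 ∧ a7 = 0 := by
  have n10 : (10 : k) ≠ 0 := by have := H.nz 1 0 1 0; norm_num at this; exact this
  have n6 : (6 : k) ≠ 0 := by have := H.nz 1 1 0 0; norm_num at this; exact this
  -- first show `a5 = 0`
  have h5 : a5 = 0 := by
    by_contra h5
    have h2 : a2 ≠ 0 := by
      rintro rfl
      have : (10 : k) * a5 ^ 2 = 0 := by rw [← E4]; ring
      rcases mul_eq_zero.1 this with h | h
      · exact n10 h
      · exact h5 (pow_eq_zero_iff two_ne_zero |>.1 h)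
    have h6 : a6 = 0 := (mul_eq_zero.1 hR).resolve_left h2
    have h1 : a1 = 0 := by
      apply mul_left_cancel₀ (mul_ne_zero n6 h5); rw [h6] at E0; linear_combination -E0
    have n9 : (9 : k) ≠ 0 := by have := H.nz 0 2 0 0; norm_num at this; exact this
    have h7 : a7 = 0 := by
      apply mul_left_cancel₀ (mul_ne_zero H.h5 h2); rw [h1] at E3; linear_combination -E3
    have : (9 : k) * (a2 * a5) = 0 := by rw [h7, h1] at E1; linear_combination E1
    exact (mul_ne_zero n9 (mul_ne_zero h2 h5)) this
  have h2 : a2 = 0 := by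
    apply mul_left_cancel₀ h8; rw [E4, h5]; ring
  have h1 : a1 = 0 := by
    apply mul_left_cancel₀ h8; rw [E3, h2]; ring
  have h6 : a6 = 0 := by
    apply mul_left_cancel₀ h0; rw [E0, h1]; ring
  have h7 : a7 = 0 := by
    apply mul_left_cancel₀ h0; rw [E1, h1, h2]; ring
  exact ⟨h1, h2, h5, h6, h7⟩

/-- A form with only extreme terms is equivalent to the normal form. -/
lemma Concl_diag [IsAlgClosed k] (a : ℕ → k) (h0 : a 0 ≠ 0) (h8 : a 8 ≠ 0) (h1 : a 1 = 0) (h2 : a 2 = 0)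
    (h3 : a 3 = 0) (h4 : a 4 = 0) (h5 : a 5 = 0) (h6 : a 6 = 0) (h7 : a 7 = 0) :
    Concl (form 8 a) := by
  obtain ⟨u, hu⟩ := IsAlgClosed.exists_pow_nat_eq (a 0) (n := 8) (by norm_num)
  obtain ⟨v, hv⟩ := IsAlgClosed.exists_pow_nat_eq (-a 8) (n := 8) (by norm_num)
  have hu0 : u ≠ 0 := by rintro rfl; apply h0; rw [← hu]; simp
  have hv0 : v ≠ 0 := by rintro rfl; apply h8; rw [← neg_eq_zero, ← hv]; simp
  refine ⟨!![u, 0; 0, v], ?_, ?_⟩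
  · rw [Matrix.det_fin_two]; simp [hu0, hv0]
  · rw [form_eight, map_sub, map_pow, map_pow, sub_X, sub_X, h1, h2, h3, h4, h5, h6, h7]
    simp only [mul_zero, C_0, zero_mul, add_zero, zero_add, Matrix.of_apply, Matrix.cons_val', Matrix.cons_val_zero,
      Matrix.cons_val_one, Matrix.cons_val_fin_one]
    rw [mul_pow, mul_pow, ← C_pow, ← C_pow, hu, hv, C_neg]
    ring

lemma main2b [IsAlgClosed k] (H : Chr k) (a : ℕ → k) (hf : Good (form 8 a))
    (k0 : kc a 0 = 0) (k1 : kc a 1 = 0) (k2 : kc a 2 ≠ 0) (k3 : kc a 3 = 0) (k4 : kc a 4 = 0)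
    (hJ : shJ2 (form 8 a) = 6 * kc a 2) : Concl (form 8 a) := by
  obtain ⟨-, hs, -, -, r8, -, -, h5, -, -⟩ := hf
  obtain ⟨e0, e1, e2, e3, e4⟩ := h_norm H (kc a) k1 k3 k4
  rw [J5_form H] at h5
  rw [J8_form H, hJ] at r8
  simp only [mc, e0, e1, e2, e3, e4, k0, k1, k3, k4, zero_add] at h5 r8
  norm_num only at h5 r8
  have n2 := H.h2
  have n3 := H.h3
  have n5 := H.h5
  have n14 : (14 : k) ≠ 0 := by have := H.nz 1 0 0 1; norm_num at this; exact this
  have n36 : (36 : k) ≠ 0 := by have := H.nz 2 2 0 0; norm_num at this; exact this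
  have n12 : (12 : k) ≠ 0 := by have := H.nz 2 1 0 0; norm_num at this; exact this
  have n840 : (840 : k) ≠ 0 := by have := H.nz 3 1 1 1; norm_num at this; exact this
  have n70 : (70 : k) ≠ 0 := by have := H.nz 1 0 1 1; norm_num at this; exact this
  have n432 : (432 : k) ≠ 0 := by have := H.nz 4 3 0 0; norm_num at this; exact this
  have g4 := gc4 H a
  have c2 := kc2 H a
  rw [kc0] at k0
  rw [kc1 H] at k1
  rw [kc3 H] at k3
  rw [kc4] at k4
  rw [J2_form H] at hJ
  generalize kc a 2 = b at *
  have h4 : a 4 = 0 := by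
    apply mul_left_cancel₀ (mul_ne_zero n36 (pow_ne_zero 2 k2)); linear_combination h5
  have g : 35 * gc a 4 = 3 * b := by
    apply mul_left_cancel₀ (mul_ne_zero n432 (pow_ne_zero 3 k2)); linear_combination -r8
  rw [g] at g4
  simp only [h4] at k0 k1 k3 k4 c2 g4 hJ
  have hR : a 2 * a 6 = 4 * (a 3 * a 5) := by
    apply mul_left_cancel₀ n840
    linear_combination 14 * (hJ + 2 * c2) + 12 * (c2 - g4)
  have hQ : a 1 * a 7 = 9 * (a 3 * a 5) := by
    apply mul_left_cancel₀ n14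
    linear_combination c2 - g4 + 14 * hR
  have hP : a 0 * a 8 = 3 * b + 16 * (a 3 * a 5) := by
    linear_combination -c2 + 2 * hQ + 8 * hR
  have E0 : a 0 * a 6 = 6 * a 1 * a 5 + 10 * a 3 ^ 2 := by
    apply mul_left_cancel₀ n2; linear_combination k0
  have E4 : a 8 * a 2 = 6 * a 7 * a 3 + 10 * a 5 ^ 2 := by
    apply mul_left_cancel₀ n2; linear_combination k4
  have E1 : a 0 * a 7 = 5 * a 1 * a 6 - 9 * a 2 * a 5 := by linear_combination k1
  have E3 : a 8 * a 1 = 5 * a 7 * a 2 - 9 * a 6 * a 3 := by linear_combination k3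
  have hS := algA H _ _ _ _ _ _ _ _ b k2 hQ hR hP E0 E4 E1 E3
  rw [hS] at hQ hR hP
  have h08 : a 0 * a 8 ≠ 0 := by
    rw [hP]; simpa using mul_ne_zero n3 k2
  have h0 := left_ne_zero_of_mul h08
  have h8 := right_ne_zero_of_mul h08
  rcases mul_eq_zero.1 hS with h | h
  · obtain ⟨h1, h2, h5, h6, h7⟩ := algC H (a 0) (a 1) (a 2) (a 5) (a 6) (a 7) (a 8) h0 h8
      (by rw [hQ]; ring) (by rw [hR]; ring) (by rw [E0, h]; ring) (by rw [E4, h]; ring) E1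
      (by rw [E3, h]; ring)
    exact Concl_diag a h0 h8 h1 h2 h h4 h5 h6 h7
  · obtain ⟨h7, h6, h3, h2, h1⟩ := algC H (a 8) (a 7) (a 6) (a 3) (a 2) (a 1) (a 0) h8 h0
      (by rw [mul_comm, hQ]; ring) (by rw [mul_comm, hR]; ring) (by rw [E4, h]; ring)
      (by rw [E0, h]; ring) E3 (by rw [E1, h]; ring)
    exact Concl_diag a h0 h8 h1 h2 h3 h4 h h6 h7

lemma main1 [IsAlgClosed k] (H : Chr k) (a : ℕ → k) (hf : Good (form 8 a))
    (k3 : kc a 3 = 0) (k4 : kc a 4 = 0) : Concl (form 8 a) := by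
  have n36 : (36 : k) ≠ 0 := by have := H.nz 2 2 0 0; norm_num at this; exact this
  have r4 := hf.2.2.1
  have r6 := hf.2.2.2.1
  rw [J4_form H, mc_I4] at r4
  rw [J6_form H, mc_D4 H] at r6
  simp only [I4, D4, k3, k4] at r4 r6
  have hJ : shJ2 (form 8 a) = 6 * kc a 2 := by
    by_cases k2 : kc a 2 = 0
    · rw [k2] at r4 ⊢
      have : shJ2 (form 8 a) ^ 2 = 0 := by linear_combination -r4
      rw [pow_eq_zero_iff two_ne_zero] at this
      rw [this]; ring
    · apply mul_left_cancel₀ (mul_ne_zero n36 (pow_ne_zero 2 k2))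
      linear_combination r6 + shJ2 (form 8 a) * r4
  by_cases k2 : kc a 2 = 0
  · exfalso
    rw [k2, mul_zero] at hJ
    by_cases k1 : kc a 1 = 0
    · exact main3 H a hf k1 k2 k3 k4 hJ
    · exact main1' H a hf k1 k2 k3 k4
  · have n3 := H.h3
    apply Concl_T (-(kc a 1) / (3 * kc a 2))
    have hf' := Good_T (-(kc a 1) / (3 * kc a 2)) a hf
    have hJ' : shJ2 (form 8 (T8 (-(kc a 1) / (3 * kc a 2)) a)) = 6 * kc a 2 := by
      rw [← sub_T8, J2_sub, det_MT, hJ]; ring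
    have l1 : kc (T8 (-(kc a 1) / (3 * kc a 2)) a) 1 = 0 := by
      rw [kc_T H _ _ _ (by norm_num)]; simp only [T4, k3, k4]; field_simp; ring
    have l2 : kc (T8 (-(kc a 1) / (3 * kc a 2)) a) 2 = kc a 2 := by
      rw [kc_T H _ _ _ (by norm_num)]; simp only [T4, k3, k4]; ring
    have l3 : kc (T8 (-(kc a 1) / (3 * kc a 2)) a) 3 = 0 := by
      rw [kc_T H _ _ _ (by norm_num)]; simp only [T4, k3, k4]; ring
    have l4 : kc (T8 (-(kc a 1) / (3 * kc a 2)) a) 4 = 0 := by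
      rw [kc_T H _ _ _ (by norm_num)]; simp only [T4, k4]
    rw [← l2] at hJ' k2
    by_cases l0 : kc (T8 (-(kc a 1) / (3 * kc a 2)) a) 0 = 0
    · rw [l2] at k2 hJ'
      exact main2b H _ hf' l0 l1 (by rw [l2]; exact k2) l3 l4 (by rw [l2]; exact hJ')
    · rw [l2] at k2 hJ'
      exact (main2a H _ hf' l0 l1 (by rw [l2]; exact k2) l3 l4 (by rw [l2]; exact hJ')).elim

lemma forward [IsAlgClosed k] (H : Chr k) (f : MvPolynomial (Fin 2) k) (hf : Good f) :
    Concl f := by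
  obtain ⟨a, rfl⟩ := exists_form 8 H.f8 f hf.1
  have r4 := hf.2.2.1
  have r6 := hf.2.2.2.1
  rw [J4_form H, mc_I4] at r4
  rw [J6_form H, mc_D4 H] at r6
  obtain ⟨M, hM, b', hb, h3, h4⟩ := R4_of_Q4 H (shJ2 (form 8 a)) (kc a)
    ⟨by linear_combination r4, by linear_combination r6⟩
  have hg := Good_sub M hM _ hf
  apply Concl_of_sub M hM
  obtain ⟨a', ha'⟩ := exists_form 8 H.f8 (sub M (form 8 a)) hg.1
  rw [ha'] at hg ⊢
  apply main1 H a' hg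
  · rw [kc_sub H M hM a a' b' ha' hb 3 (by norm_num), h3]
  · rw [kc_sub H M hM a a' b' ha' hb 4 (by norm_num), h4]

/-- Coefficients of the normal form. -/
def an : ℕ → k
  | 0 => 1
  | 8 => -1
  | _ => 0

lemma an_form : (X 0 ^ 8 - X 1 ^ 8 : MvPolynomial (Fin 2) k) = form 8 an := by
  rw [form_eight]; simp [an]; ring

lemma Rel_an (H : Chr k) : Rel (form 8 (an : ℕ → k)) := by
  have k0 : kc (an : ℕ → k) 0 = 0 := by rw [kc0]; simp [an]
  have k1 : kc (an : ℕ → k) 1 = 0 := by rw [kc1 H]; simp [an]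
  have k3 : kc (an : ℕ → k) 3 = 0 := by rw [kc3 H]; simp [an]
  have k4 : kc (an : ℕ → k) 4 = 0 := by rw [kc4]; simp [an]
  have k2 : 3 * kc (an : ℕ → k) 2 = -1 := by rw [kc2 H]; simp [an]
  obtain ⟨e0, e1, e2, e3, e4⟩ := h_norm H (kc (an : ℕ → k)) k1 k3 k4
  have g4 : 35 * gc (an : ℕ → k) 4 = -1 := by rw [gc4 H]; simp [an]
  have n81 : (81 : k) ≠ 0 := by have := H.nz 0 4 0 0; norm_num at this; exact this
  have n3 := H.h3
  have n35 : (35 : k) ≠ 0 := by have := H.nz 0 0 1 1; norm_num at this; exact this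
  have k2' : kc (an : ℕ → k) 2 = -1 / 3 := by field_simp; linear_combination k2
  have g4' : gc (an : ℕ → k) 4 = -1 / 35 := by field_simp; linear_combination g4
  have hJ : shJ2 (form 8 (an : ℕ → k)) = -2 := by rw [J2_form H]; simp [an]
  rw [k0] at e0
  rw [k2'] at e2
  refine ⟨?_, ?_, ?_, ?_, ?_, ?_, ?_, ?_⟩
  · rw [J4_form H, hJ]; simp only [mc, k0, k1, k2', k3, k4]; field_simp; ring
  · rw [J6_form H, hJ]; simp only [mc, k0, k1, k2', k3, k4, e0, e1, e2, e3, e4]; field_simp; ring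
  · rw [J8_form H, hJ]; simp only [mc, k0, k1, k2', k3, k4, e0, e1, e2, e3, e4, zero_add]
    norm_num only
    rw [g4']; field_simp; ring
  · rw [J10_form H, hJ]; simp only [mc, k0, k1, k2', k3, k4, e0, e1, e2, e3, e4, zero_add]
    norm_num only
    rw [g4']; field_simp; ring
  · rw [J3_form H]; simp [an, gc0, gc8]
  · rw [J5_form H]; simp [mc, k0, k1, k3, k4, an]
  · rw [J7_form H]; simp [mc, k0, k1, k3, k4, an, e0, e1, e3, e4]
  · rw [J9_form H]; simp [mc, k0, an, e0, e1, e3, e4]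

lemma chr_of (hchar : ringChar k = 0 ∨ 11 ≤ ringChar k) : Chr k := by
  have key : ∀ n : ℕ, n ≠ 0 → n < 11 → (n : k) ≠ 0 := by
    intro n hn hlt h
    have hd := (ringChar.spec k n).1 h
    rcases hchar with h0 | h0
    · rw [h0] at hd; exact hn (zero_dvd_iff.1 hd)
    · have := Nat.le_of_dvd (Nat.pos_of_ne_zero hn) hd
      omega
  exact ⟨by exact_mod_cast key 2 (by norm_num) (by norm_num),
    by exact_mod_cast key 3 (by norm_num) (by norm_num),
    by exact_mod_cast key 5 (by norm_num) (by norm_num),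
    by exact_mod_cast key 7 (by norm_num) (by norm_num)⟩

end V8

/-- Identification of the stratum `V₈`: a squarefree binary octic `f` over an algebraically
closed field of characteristic `0` or `≥ 11` satisfies `6·J₄ = J₂²`, `36·J₆ = −J₂³`,
`420·J₈ = −J₂⁴`, `2520·J₁₀ = J₂⁵` and `J₃ = J₅ = J₇ = J₉ = 0` iff `f` is
`GL₂(K)`-equivalent to `X⁸ − Z⁸`; equivalently the genus-3 curve `y² = f(x,1)` has
automorphism group `V₈ = ⟨S,T : S⁴ = T⁸ = (ST)² = (S⁻¹T)² = 1⟩` (of order 32) iff these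
relations hold, and such a curve is `K`-isomorphic to `y² = x⁸ − 1`. -/
theorem statement16 {K : Type*} [Field K] [IsAlgClosed K]
    (hchar : ringChar K = 0 ∨ 11 ≤ ringChar K)
    (f : MvPolynomial (Fin 2) K) (hf : f.IsHomogeneous 8) (hsf : Squarefree f) :
    (6 * shJ4 f = shJ2 f ^ 2 ∧ 36 * shJ6 f = -(shJ2 f ^ 3) ∧
      420 * shJ8 f = -(shJ2 f ^ 4) ∧ 2520 * shJ10 f = shJ2 f ^ 5 ∧
      shJ3 f = 0 ∧ shJ5 f = 0 ∧ shJ7 f = 0 ∧ shJ9 f = 0) ↔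
    ∃ M : Matrix (Fin 2) (Fin 2) K, IsUnit M.det ∧
      f = bind₁ (fun j : Fin 2 => C (M j 0) * X 0 + C (M j 1) * X 1)
        (X 0 ^ 8 - X 1 ^ 8) := by
  have H := V8.chr_of hchar
  constructor
  · intro h
    exact V8.forward H f ⟨hf, hsf, h⟩
  · rintro ⟨M, -, hM⟩
    rw [hM]
    have h := V8.Rel_sub M _ (V8.Rel_an (k := K) H)
    rw [← V8.an_form] at h
    exact h
end
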